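/- arXiv:1506.06922 — 4 statements merged into one kernel-verified Lean document; each statement's English description precedes it below -/
import Mathlib

section
/- A continuous function f : (0,∞) → (0,∞) is operator monotone if and only if f(A !_t B) ≤ f(A) #_t f(B) for every n ∈ ℕ, all n×n positive definite complex matrices A, B, and every t ∈ [0,1]. -/
open Matrix
open scoped ComplexOrder

/-- The Loewner order on matrices: `A ≤ B` iff `B - A` is positive semidefinite. -/
def MLE {n : ℕ} (A B : Matrix (Fin n) (Fin n) ℂ) : Prop := (B - A).PosSemidef

/-- The `t`-weighted harmonic mean `A !_t B = ((1-t)A⁻¹ + tB⁻¹)⁻¹`. -/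
noncomputable def wharm {n : ℕ} (t : ℝ) (A B : Matrix (Fin n) (Fin n) ℂ) :
    Matrix (Fin n) (Fin n) ℂ := ((1 - t) • A⁻¹ + t • B⁻¹)⁻¹

/-- The `t`-weighted arithmetic mean `A ∇_t B = (1-t)A + tB`. -/
noncomputable def warith {n : ℕ} (t : ℝ) (A B : Matrix (Fin n) (Fin n) ℂ) :
    Matrix (Fin n) (Fin n) ℂ := (1 - t) • A + t • B

/-- Real powers of a matrix, via the continuous functional calculus. -/
noncomputable def mpow {n : ℕ} (A : Matrix (Fin n) (Fin n) ℂ) (r : ℝ) :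
    Matrix (Fin n) (Fin n) ℂ := cfc (fun x : ℝ => x ^ r) A

/-- The `t`-weighted geometric mean `A #_t B = A^{1/2} (A^{-1/2} B A^{-1/2})^t A^{1/2}`. -/
noncomputable def wgeom {n : ℕ} (t : ℝ) (A B : Matrix (Fin n) (Fin n) ℂ) :
    Matrix (Fin n) (Fin n) ℂ :=
  mpow A (1/2) * mpow (mpow A (-(1/2)) * B * mpow A (-(1/2))) t * mpow A (1/2)

/-- `f` is operator monotone (increasing): order preserving on positive definite
matrices of every size, via the continuous functional calculus. -/
def OperatorMonotone (f : ℝ → ℝ) : Prop :=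
  ∀ (n : ℕ) (A B : Matrix (Fin n) (Fin n) ℂ), A.PosDef → B.PosDef →
    MLE A B → MLE (cfc f A) (cfc f B)

/-- `f` is operator monotone decreasing: order reversing on positive definite
matrices of every size, via the continuous functional calculus. -/
def OperatorAntitone (f : ℝ → ℝ) : Prop :=
  ∀ (n : ℕ) (A B : Matrix (Fin n) (Fin n) ℂ), A.PosDef → B.PosDef →
    MLE A B → MLE (cfc f B) (cfc f A)

open scoped MatrixOrder

namespace S7

set_option linter.unusedSectionVars false

variable {ι : Type*} [Fintype ι] [DecidableEq ι]

theorem cont (f : ℝ → ℝ) (A : Matrix ι ι ℂ) : ContinuousOn f (spectrum ℝ A) :=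
  Set.Finite.continuousOn (Matrix.finite_real_spectrum) f

theorem pd_spec {A : Matrix ι ι ℂ} (hA : A.PosDef) {x : ℝ} (hx : x ∈ spectrum ℝ A) : 0 < x := by
  obtain ⟨i, rfl⟩ := hA.1.spectrum_real_eq_range_eigenvalues ▸ hx
  exact hA.eigenvalues_pos i

theorem cfc_pd {A : Matrix ι ι ℂ} (hA : A.PosDef) {f : ℝ → ℝ} (hf : ∀ x, 0 < x → 0 < f x) :
    (cfc f A).PosDef := by
  rw [← Matrix.isStrictlyPositive_iff_posDef]
  exact (cfc_isStrictlyPositive_iff f A (cont _ _) hA.1).2 fun x hx => hf x (pd_spec hA hx)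

theorem cfc_inv' {A : Matrix ι ι ℂ} (hA : A.PosDef) {f : ℝ → ℝ} (hf : ∀ x, 0 < x → 0 < f x) :
    (cfc f A)⁻¹ = cfc (fun x => (f x)⁻¹) A := by
  apply Matrix.inv_eq_right_inv
  rw [← cfc_mul f _ A (cont _ _) (cont _ _)]
  have hA' : IsSelfAdjoint A := hA.1
  rw [← cfc_one ℝ A]
  exact cfc_congr fun x hx => mul_inv_cancel₀ (hf x (pd_spec hA hx)).ne'

theorem inv_eq {A : Matrix ι ι ℂ} (hA : A.PosDef) : A⁻¹ = cfc (fun x : ℝ => x⁻¹) A := by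
  have hA' : IsSelfAdjoint A := hA.1
  conv_lhs => rw [← cfc_id' ℝ A]
  exact cfc_inv' hA fun x hx => hx

theorem cfc_cfc {A : Matrix ι ι ℂ} (hA : A.PosDef) (g f : ℝ → ℝ) :
    cfc g (cfc f A) = cfc (fun x => g (f x)) A := by
  have hA' : IsSelfAdjoint A := hA.1
  exact (cfc_comp' g f A ((Set.toFinite _).image f |>.continuousOn g) (cont _ _)).symm

open scoped Matrix.Norms.L2Operator in
theorem inv_anti {A B : Matrix ι ι ℂ} (hA : A.PosDef) (h : A ≤ B) : B⁻¹ ≤ A⁻¹ := by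
  rw [nonsing_inv_eq_ringInverse, nonsing_inv_eq_ringInverse]
  exact CStarAlgebra.ringInverse_le_ringInverse h (Matrix.isStrictlyPositive_iff_posDef.2 hA)

open scoped Matrix.Norms.L2Operator in
theorem le_lim {l : Filter ℝ} [l.NeBot] {F G : ℝ → Matrix ι ι ℂ} {A B : Matrix ι ι ℂ}
    (hF : Filter.Tendsto F l (nhds A)) (hG : Filter.Tendsto G l (nhds B))
    (h : ∀ᶠ x in l, F x ≤ G x) : A ≤ B := by
  rw [← sub_nonneg]
  exact CStarAlgebra.isClosed_nonneg.mem_of_tendsto (hG.sub hF) (h.mono fun x hx => sub_nonneg.2 hx)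

theorem cfc_lim {l : Filter ℝ} {F : ℝ → ℝ → ℝ} {f : ℝ → ℝ} {A : Matrix ι ι ℂ} (hA : A.PosDef)
    (h : ∀ x, 0 < x → Filter.Tendsto (fun t => F t x) l (nhds (f x))) :
    Filter.Tendsto (fun t => cfc (F t) A) l (nhds (cfc f A)) := by
  simp only [hA.1.cfc_eq, IsHermitian.cfc, Unitary.conjStarAlgAut_apply]
  refine Filter.Tendsto.mul (Filter.Tendsto.mul tendsto_const_nhds ?_) tendsto_const_nhds
  refine ((continuous_id.matrix_diagonal).tendsto _).comp (tendsto_pi_nhds.2 fun i => ?_)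
  exact (Complex.continuous_ofReal.tendsto _).comp (h _ (hA.eigenvalues_pos i))

theorem conj_le {A B : Matrix ι ι ℂ} (h : A ≤ B) (S : Matrix ι ι ℂ) (hS : S.IsHermitian) :
    S * A * S ≤ S * B * S := by
  rw [Matrix.le_iff] at *
  have := h.mul_mul_conjTranspose_same S
  rw [hS.eq] at this
  convert this using 1
  noncomm_ring

theorem pd_le {A B : Matrix ι ι ℂ} (hA : A.PosDef) (h : A ≤ B) : B.PosDef := by
  have := hA.add_posSemidef h
  rwa [add_sub_cancel] at this

theorem pd_smul {A : Matrix ι ι ℂ} (hA : A.PosDef) {c : ℝ} (hc : 0 < c) : (c • A).PosDef :=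
  hA.smul hc

theorem psd_smul {A : Matrix ι ι ℂ} (hA : A.PosSemidef) {c : ℝ} (hc : 0 ≤ c) :
    (c • A).PosSemidef :=
  hA.smul hc

theorem pd_comb {A B : Matrix ι ι ℂ} (hA : A.PosDef) (hB : B.PosDef) {t : ℝ} (ht : t ∈ Set.Icc (0:ℝ) 1) :
    ((1 - t) • A + t • B).PosDef := by
  rcases eq_or_lt_of_le ht.2 with h | h
  · subst h; simpa using hB
  · exact (pd_smul hA (by linarith)).add_posSemidef (psd_smul hB.posSemidef ht.1)

theorem le_scalar {A : Matrix ι ι ℂ} (hA : A.IsHermitian) :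
    ∃ K : ℝ, 0 < K ∧ A ≤ K • (1 : Matrix ι ι ℂ) := by
  obtain ⟨K, hK⟩ := (Matrix.finite_real_spectrum (A := A)).bddAbove
  have hA' : IsSelfAdjoint A := hA
  refine ⟨max K 1, by positivity, ?_⟩
  rw [← Algebra.algebraMap_eq_smul_one]
  exact le_algebraMap_of_spectrum_le (fun x hx => (hK hx).trans (le_max_left _ _))

end S7

namespace S7

variable {n : ℕ}

theorem mpow_herm (P : Matrix (Fin n) (Fin n) ℂ) (r : ℝ) : (mpow P r).IsHermitian :=
  cfc_predicate (p := IsSelfAdjoint) _ _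

theorem mpow_mul {P : Matrix (Fin n) (Fin n) ℂ} (hP : P.PosDef) (r s : ℝ) :
    mpow P r * mpow P s = mpow P (r + s) := by
  unfold mpow
  rw [← cfc_mul _ _ P (cont _ _) (cont _ _)]
  exact cfc_congr fun x hx => (Real.rpow_add (pd_spec hP hx) r s).symm

theorem mpow_zero {P : Matrix (Fin n) (Fin n) ℂ} (hP : P.PosDef) : mpow P 0 = 1 := by
  have hA' : IsSelfAdjoint P := hP.1
  unfold mpow; simp only [Real.rpow_zero]; exact cfc_const_one ℝ P

theorem mpow_one {P : Matrix (Fin n) (Fin n) ℂ} (hP : P.PosDef) : mpow P 1 = P := by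
  have hA' : IsSelfAdjoint P := hP.1
  unfold mpow; simp only [Real.rpow_one]; exact cfc_id' ℝ P

theorem mpow_pd {P : Matrix (Fin n) (Fin n) ℂ} (hP : P.PosDef) (r : ℝ) : (mpow P r).PosDef :=
  cfc_pd hP fun _ hx => Real.rpow_pos_of_pos hx r

theorem SR {P : Matrix (Fin n) (Fin n) ℂ} (hP : P.PosDef) :
    mpow P (1/2) * mpow P (-(1/2)) = 1 := by
  rw [mpow_mul hP, add_neg_cancel, mpow_zero hP]

theorem RS {P : Matrix (Fin n) (Fin n) ℂ} (hP : P.PosDef) :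
    mpow P (-(1/2)) * mpow P (1/2) = 1 := by
  rw [mpow_mul hP, neg_add_cancel, mpow_zero hP]

theorem SS {P : Matrix (Fin n) (Fin n) ℂ} (hP : P.PosDef) :
    mpow P (1/2) * mpow P (1/2) = P := by
  rw [mpow_mul hP, add_halves, mpow_one hP]

theorem RR {P : Matrix (Fin n) (Fin n) ℂ} (hP : P.PosDef) :
    mpow P (-(1/2)) * mpow P (-(1/2)) = P⁻¹ := by
  symm
  apply Matrix.inv_eq_right_inv
  rw [← mul_assoc]; nth_rw 1 [← SS hP]
  rw [mul_assoc (mpow P (1/2)), SR hP, mul_one, SR hP]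

theorem Z_pd {P Q : Matrix (Fin n) (Fin n) ℂ} (hP : P.PosDef) (hQ : Q.PosDef) :
    (mpow P (-(1/2)) * Q * mpow P (-(1/2))).PosDef := by
  have h := (Matrix.IsUnit.posDef_star_right_conjugate_iff (x := Q) (mpow_pd hP (-(1/2))).isUnit).2 hQ
  have h2 : star (mpow P (-(1/2))) = mpow P (-(1/2)) := (mpow_herm P _).eq
  rwa [h2] at h

theorem SZS {P Q : Matrix (Fin n) (Fin n) ℂ} (hP : P.PosDef) :
    mpow P (1/2) * (mpow P (-(1/2)) * Q * mpow P (-(1/2))) * mpow P (1/2) = Q := by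
  have h1 := SR hP
  have h2 := RS hP
  calc _ = (mpow P (1/2) * mpow P (-(1/2))) * Q * (mpow P (-(1/2)) * mpow P (1/2)) := by
        noncomm_ring
    _ = Q := by rw [h1, h2]; simp

theorem cfc_lin {Z : Matrix (Fin n) (Fin n) ℂ} (hZ : Z.PosDef) (a b : ℝ) (f : ℝ → ℝ) :
    cfc (fun x => a + b * f x) Z = a • 1 + b • cfc f Z := by
  have hA' : IsSelfAdjoint Z := hZ.1
  rw [cfc_const_add a _ Z (cont _ _), cfc_const_mul b f Z (cont _ _),
    Algebra.algebraMap_eq_smul_one]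

theorem geom_le_arith {P Q : Matrix (Fin n) (Fin n) ℂ} (hP : P.PosDef) (hQ : Q.PosDef) {t : ℝ}
    (ht : t ∈ Set.Icc (0:ℝ) 1) : wgeom t P Q ≤ (1 - t) • P + t • Q := by
  have hZ := Z_pd hP hQ
  set Z := mpow P (-(1/2)) * Q * mpow P (-(1/2)) with hZd
  have hZ' : IsSelfAdjoint Z := hZ.1
  have h1 : mpow Z t ≤ (1 - t) • 1 + t • Z := by
    have h2 := cfc_lin hZ (1 - t) t (fun x => x)
    rw [cfc_id' ℝ Z] at h2
    rw [← h2]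
    refine cfc_mono (fun x hx => ?_) (cont _ _) (cont _ _)
    have hx := pd_spec hZ hx
    have := Real.geom_mean_le_arith_mean2_weighted (w₁ := 1 - t) (w₂ := t) (p₁ := 1) (p₂ := x)
      (by linarith [ht.2]) ht.1 zero_le_one hx.le (by ring)
    simpa using this
  have h3 := conj_le h1 _ (mpow_herm P (1/2))
  have h4 : mpow P (1/2) * ((1 - t) • 1 + t • Z) * mpow P (1/2) = (1 - t) • P + t • Q := by
    rw [mul_add, add_mul, mul_smul_comm, mul_smul_comm, smul_mul_assoc, smul_mul_assoc, mul_one,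
      SS hP, SZS hP]
  rw [h4] at h3
  exact h3

theorem harm_le_geom {P Q : Matrix (Fin n) (Fin n) ℂ} (hP : P.PosDef) (hQ : Q.PosDef) {t : ℝ}
    (ht : t ∈ Set.Icc (0:ℝ) 1) : ((1 - t) • P⁻¹ + t • Q⁻¹)⁻¹ ≤ wgeom t P Q := by
  have hZ := Z_pd hP hQ
  have hQ' := SZS (Q := Q) hP
  unfold wgeom
  set Z := mpow P (-(1/2)) * Q * mpow P (-(1/2)) with hZd
  have hZ' : IsSelfAdjoint Z := hZ.1
  have hpos : ∀ x : ℝ, 0 < x → 0 < (1 - t) + t * x⁻¹ := by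
    intro x hx
    rcases eq_or_lt_of_le ht.2 with h | h
    · subst h; simpa using hx
    · have := mul_nonneg ht.1 (inv_pos.2 hx).le
      linarith
  have h1 : ((1 - t) • 1 + t • Z⁻¹)⁻¹ ≤ mpow Z t := by
    rw [inv_eq hZ, ← cfc_lin hZ, cfc_inv' hZ hpos]
    refine cfc_mono (fun x hx => ?_) (cont _ _) (cont _ _)
    have hx := pd_spec hZ hx
    have := Real.geom_mean_le_arith_mean2_weighted (w₁ := 1 - t) (w₂ := t) (p₁ := 1) (p₂ := x⁻¹)
      (by linarith [ht.2]) ht.1 zero_le_one (inv_pos.2 hx).le (by ring)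
    rw [Real.one_rpow, one_mul, mul_one, Real.inv_rpow hx.le] at this
    exact inv_le_of_inv_le₀ (Real.rpow_pos_of_pos hx t) this
  have h3 := conj_le h1 _ (mpow_herm P (1/2))
  refine le_trans (le_of_eq ?_) h3
  have hRR := RR hP
  have hSS := SS hP
  have hSR := SR hP
  have hRS := RS hP
  set S := mpow P (1/2)
  set R := mpow P (-(1/2))
  have hSi : S⁻¹ = R := Matrix.inv_eq_right_inv hSR
  have hRi : R⁻¹ = S := Matrix.inv_eq_right_inv hRS
  have hQi : Q⁻¹ = R * Z⁻¹ * R := by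
    rw [← hQ', Matrix.mul_inv_rev, Matrix.mul_inv_rev, hSi, mul_assoc]
  have h4 : (1 - t) • P⁻¹ + t • Q⁻¹ = R * ((1 - t) • 1 + t • Z⁻¹) * R := by
    rw [mul_add, add_mul, mul_smul_comm, mul_smul_comm, smul_mul_assoc, smul_mul_assoc, mul_one,
      hRR, ← hQi]
  rw [h4, Matrix.mul_inv_rev, Matrix.mul_inv_rev, hRi, mul_assoc]

theorem geom_half {P Q G : Matrix (Fin n) (Fin n) ℂ} (hP : P.PosDef) (hG : G.PosDef)
    (h : G * P⁻¹ * G = Q) : wgeom (1/2) P Q = G := by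
  have hW := Z_pd hP hG
  have hGG := SZS (Q := G) hP
  have e : mpow P (-(1/2)) * Q * mpow P (-(1/2)) =
    (mpow P (-(1/2)) * G * mpow P (-(1/2))) * (mpow P (-(1/2)) * G * mpow P (-(1/2))) := by
    rw [← h, ← RR hP]; noncomm_ring
  unfold wgeom
  rw [e]
  set W := mpow P (-(1/2)) * G * mpow P (-(1/2))
  have hW' : IsSelfAdjoint W := hW.1
  have : mpow (W * W) (1/2) = W := by
    have : W * W = cfc (fun x : ℝ => x * x) W := by
      rw [cfc_mul (fun x => x) (fun x => x) W (cont _ _) (cont _ _), cfc_id' ℝ W]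
    rw [this]
    unfold mpow
    rw [cfc_cfc hW]
    conv_rhs => rw [← cfc_id' ℝ W]
    refine cfc_congr fun x hx => ?_
    have hx := pd_spec hW hx
    simp only [← Real.sqrt_eq_rpow]
    exact Real.sqrt_mul_self hx.le
  rw [this, hGG]

end S7

namespace S7

section poly
open Polynomial

variable {ι κ : Type*} [Fintype ι] [DecidableEq ι] [Fintype κ] [DecidableEq κ]

theorem exists_poly (f : ℝ → ℝ) {S : Set ℝ} (hS : S.Finite) :
    ∃ p : ℝ[X], ∀ x ∈ S, p.eval x = f x := by
  refine ⟨Lagrange.interpolate hS.toFinset id f, fun x hx => ?_⟩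
  exact Lagrange.eval_interpolate_at_node f (s := hS.toFinset) (v := id)
    Function.injective_id.injOn (hS.mem_toFinset.2 hx)

theorem cfc_poly {A : Matrix ι ι ℂ} (hA : A.IsHermitian) {f : ℝ → ℝ} {p : ℝ[X]}
    (h : ∀ x ∈ spectrum ℝ A, p.eval x = f x) : cfc f A = aeval A p := by
  have hA' : IsSelfAdjoint A := hA
  rw [← cfc_polynomial p A]
  exact cfc_congr fun x hx => (h x hx).symm

theorem cfc_algHom (φ : Matrix ι ι ℂ →ₐ[ℝ] Matrix κ κ ℂ) {A : Matrix ι ι ℂ} (hA : A.IsHermitian)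
    (hA' : (φ A).IsHermitian) (f : ℝ → ℝ) : cfc f (φ A) = φ (cfc f A) := by
  obtain ⟨p, hp⟩ := exists_poly f (S := spectrum ℝ A ∪ spectrum ℝ (φ A))
    ((Set.toFinite _).union (Set.toFinite _))
  rw [cfc_poly hA (fun x hx => hp x (Or.inl hx)), cfc_poly hA' (fun x hx => hp x (Or.inr hx)),
    aeval_algHom_apply]

theorem aeval_blocks (X Y : Matrix ι ι ℂ) (p : ℝ[X]) :
    aeval (fromBlocks X 0 0 Y) p = fromBlocks (aeval X p) 0 0 (aeval Y p) := by
  induction p using Polynomial.induction_on' with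
  | add p q hp hq => simp only [map_add, hp, hq, fromBlocks_add, add_zero]
  | monomial k a =>
    simp only [aeval_monomial, fromBlocks_diagonal_pow, ← Algebra.smul_def, fromBlocks_smul,
      smul_zero]

theorem cfc_blocks {X Y : Matrix ι ι ℂ} (hX : X.IsHermitian) (hY : Y.IsHermitian) (f : ℝ → ℝ) :
    cfc f (fromBlocks X 0 0 Y) = fromBlocks (cfc f X) 0 0 (cfc f Y) := by
  obtain ⟨p, hp⟩ := exists_poly f
    (S := spectrum ℝ X ∪ (spectrum ℝ Y ∪ spectrum ℝ (fromBlocks X 0 0 Y)))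
    ((Set.toFinite _).union ((Set.toFinite _).union (Set.toFinite _)))
  rw [cfc_poly hX (fun x hx => hp x (Or.inl hx)),
    cfc_poly hY (fun x hx => hp x (Or.inr (Or.inl hx))),
    cfc_poly (hX.fromBlocks (by simp) hY) (fun x hx => hp x (Or.inr (Or.inr hx))),
    aeval_blocks]

/-- Conjugation by a unitary as an algebra homomorphism. -/
def conjHom (V : Matrix ι ι ℂ) (h1 : Vᴴ * V = 1) (h2 : V * Vᴴ = 1) :
    Matrix ι ι ℂ →ₐ[ℝ] Matrix ι ι ℂ where
  toFun Z := Vᴴ * Z * V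
  map_one' := by simp [h1]
  map_mul' Z W := by
    calc Vᴴ * (Z * W) * V = Vᴴ * Z * 1 * W * V := by noncomm_ring
      _ = _ := by rw [← h2]; noncomm_ring
  map_zero' := by simp
  map_add' Z W := by noncomm_ring
  commutes' r := by
    rw [Algebra.algebraMap_eq_smul_one, mul_smul_comm, smul_mul_assoc, mul_one, h1]

theorem cfc_conj (V : Matrix ι ι ℂ) (h1 : Vᴴ * V = 1) (h2 : V * Vᴴ = 1) {Z : Matrix ι ι ℂ}
    (hZ : Z.IsHermitian) (f : ℝ → ℝ) : cfc f (Vᴴ * Z * V) = Vᴴ * cfc f Z * V :=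
  cfc_algHom (conjHom V h1 h2) hZ (isHermitian_conjTranspose_mul_mul V hZ) f

theorem om_gen {f : ℝ → ℝ} (hf : OperatorMonotone f) {A B : Matrix ι ι ℂ} (hA : A.PosDef)
    (hB : B.PosDef) (h : A ≤ B) : cfc f A ≤ cfc f B := by
  let e := Fintype.equivFin ι
  have key : ∀ A : Matrix ι ι ℂ, A.IsHermitian →
      cfc f (A.submatrix e.symm e.symm) = (cfc f A).submatrix e.symm e.symm := fun A hA =>
    cfc_algHom (Matrix.reindexAlgEquiv ℝ ℂ e).toAlgHom hA (hA.submatrix e.symm) f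
  have := hf _ (A.submatrix e.symm e.symm) (B.submatrix e.symm e.symm)
    (hA.submatrix e.symm.injective) (hB.submatrix e.symm.injective)
    (PosSemidef.submatrix h e.symm)
  unfold MLE at this
  rw [key A hA.1, key B hB.1] at this
  have h2 := this.submatrix e
  have e2 : ((cfc f B).submatrix e.symm e.symm - (cfc f A).submatrix e.symm e.symm).submatrix e e =
      cfc f B - cfc f A := by
    ext i j; simp
  rw [e2] at h2
  exact h2

theorem pd_blocks {X Y : Matrix ι ι ℂ} (hX : X.PosDef) (hY : Y.PosDef) :
    (fromBlocks X 0 0 Y).PosDef := by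
  have h : (fromBlocks X 0 0 Y).PosSemidef := by
    have : Invertible X := hX.isUnit.invertible
    have := (PosDef.fromBlocks₁₁ (0 : Matrix ι ι ℂ) Y hX).2 (by simpa using hY.posSemidef)
    simpa using this
  rw [h.posDef_iff_det_ne_zero, det_fromBlocks_zero₂₁]
  exact mul_ne_zero (hX.posSemidef.posDef_iff_det_ne_zero.1 hX)
    (hY.posSemidef.posDef_iff_det_ne_zero.1 hY)

theorem concave_eps {h : ℝ → ℝ} (hh : OperatorMonotone h) {X Y : Matrix ι ι ℂ} (hX : X.PosDef)
    (hY : Y.PosDef) {t : ℝ} (ht : t ∈ Set.Icc (0:ℝ) 1) {ε : ℝ} (hε : 0 < ε) :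
    (1 - t) • cfc h X + t • cfc h Y ≤ cfc h ((1 - t) • X + t • Y + ε • 1) := by
  set c := Real.sqrt (1 - t) with hc
  set s := Real.sqrt t with hs
  have hcc : c * c = 1 - t := Real.mul_self_sqrt (by linarith [ht.2])
  have hss : s * s = t := Real.mul_self_sqrt ht.1
  set V : Matrix (ι ⊕ ι) (ι ⊕ ι) ℂ := fromBlocks (c • 1) (-(s • 1)) (s • 1) (c • 1) with hV
  have hVH : Vᴴ = fromBlocks (c • 1) (s • 1) (-(s • 1)) (c • 1) := by
    rw [hV, fromBlocks_conjTranspose]; simp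
  have hconj : ∀ P Q : Matrix ι ι ℂ, Vᴴ * fromBlocks P 0 0 Q * V =
      fromBlocks ((1 - t) • P + t • Q) ((c * s) • (Q - P)) ((c * s) • (Q - P))
        (t • P + (1 - t) • Q) := by
    intro P Q
    rw [hVH, hV, fromBlocks_multiply, fromBlocks_multiply, ← hcc, ← hss]
    simp only [mul_zero, add_zero, zero_add, smul_mul_assoc, mul_smul_comm, one_mul, mul_one,
      neg_mul, mul_neg, smul_neg]
    congr 1 <;> module
  have h1 : Vᴴ * V = 1 := by
    have := hconj 1 1
    rw [fromBlocks_one, mul_one] at this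
    rw [this, sub_self, smul_zero, ← add_smul, ← add_smul, sub_add_cancel, add_sub_cancel, one_smul,
      fromBlocks_one]
  have h2 : V * Vᴴ = 1 := mul_eq_one_comm.1 h1
  set Z := fromBlocks X 0 0 Y with hZ
  have hZpd : Z.PosDef := pd_blocks hX hY
  have hMpd : (Vᴴ * Z * V).PosDef :=
    (Matrix.IsUnit.posDef_star_left_conjugate_iff (x := Z) (IsUnit.of_mul_eq_one _ h2)).2 hZpd
  set B : Matrix ι ι ℂ := (c * s) • (Y - X) with hB
  have hBh : Bᴴ = B := by
    rw [hB, conjTranspose_smul, conjTranspose_sub, hX.1.eq, hY.1.eq]; simp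
  set W := t • X + (1 - t) • Y with hW
  set T := (1 - t) • X + t • Y with hT
  have hTpd : T.PosDef := pd_comb hX hY ht
  have hWh : W.IsHermitian := by
    have := pd_comb hY hX ht
    rw [add_comm] at this
    exact this.1
  have hεpd : (ε • (1 : Matrix ι ι ℂ)).PosDef := pd_smul PosDef.one hε
  obtain ⟨K, hK, hKle⟩ := le_scalar (A := W + (-B)ᴴ * (ε • (1 : Matrix ι ι ℂ))⁻¹ * (-B))
    (hWh.add (isHermitian_conjTranspose_mul_mul _ hεpd.1.inv))
  set N := fromBlocks (T + ε • 1) 0 0 (K • (1 : Matrix ι ι ℂ)) with hN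
  have hTe : (T + ε • 1).PosDef := hTpd.add hεpd
  have hKpd : (K • (1 : Matrix ι ι ℂ)).PosDef := pd_smul PosDef.one hK
  have hNpd : N.PosDef := pd_blocks hTe hKpd
  have hMN : Vᴴ * Z * V ≤ N := by
    rw [Matrix.le_iff, hZ, hconj, hN]
    have e : fromBlocks (T + ε • 1) 0 0 (K • (1 : Matrix ι ι ℂ)) - fromBlocks T B B W =
        fromBlocks (ε • 1) (-B) (-B)ᴴ (K • 1 - W) := by
      rw [conjTranspose_neg, hBh]
      ext (i | i) (j | j) <;> simp
    have : Invertible (ε • (1 : Matrix ι ι ℂ)) := hεpd.isUnit.invertible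
    rw [e, PosDef.fromBlocks₁₁ _ _ hεpd, sub_sub]
    exact hKle
  have key := om_gen hh hMpd hNpd hMN
  rw [cfc_conj V h1 h2 hZpd.1, hZ, cfc_blocks hX.1 hY.1, hN, cfc_blocks hTe.1 hKpd.1, hconj,
    Matrix.le_iff] at key
  exact key.submatrix Sum.inl

theorem tendsto_add_eps {h : ℝ → ℝ} (hc : ContinuousOn h (Set.Ioi 0)) {T : Matrix ι ι ℂ}
    (hT : T.PosDef) : Filter.Tendsto (fun ε : ℝ => cfc h (T + ε • 1)) (nhdsWithin 0 (Set.Ioi 0))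
      (nhds (cfc h T)) := by
  have hT' : IsSelfAdjoint T := hT.1
  have e : ∀ ε : ℝ, cfc h (T + ε • 1) = cfc (fun x => h (x + ε)) T := by
    intro ε
    rw [← cfc_cfc hT h (fun x => x + ε), cfc_add_const ε _ T (cont _ _), cfc_id' ℝ T,
      Algebra.algebraMap_eq_smul_one]
  simp only [e]
  refine cfc_lim hT fun x hx => ?_
  have h0 : ContinuousAt h x := hc.continuousAt (Ioi_mem_nhds hx)
  have h1 : Filter.Tendsto (fun ε : ℝ => x + ε) (nhdsWithin 0 (Set.Ioi 0)) (nhds x) := by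
    have : Continuous (fun ε : ℝ => x + ε) := by fun_prop
    have := this.tendsto 0
    rw [add_zero] at this
    exact this.mono_left nhdsWithin_le_nhds
  exact h0.tendsto.comp h1

theorem concave {h : ℝ → ℝ} (hc : ContinuousOn h (Set.Ioi 0)) (hh : OperatorMonotone h)
    {X Y : Matrix ι ι ℂ} (hX : X.PosDef)
    (hY : Y.PosDef) {t : ℝ} (ht : t ∈ Set.Icc (0:ℝ) 1) :
    (1 - t) • cfc h X + t • cfc h Y ≤ cfc h ((1 - t) • X + t • Y) := by
  refine le_lim tendsto_const_nhds (tendsto_add_eps hc (pd_comb hX hY ht)) ?_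
  filter_upwards [self_mem_nhdsWithin] with ε hε
  exact concave_eps hh hX hY ht hε

end poly

theorem forward {f : ℝ → ℝ} (hf : ContinuousOn f (Set.Ioi 0))
    (hf' : ∀ x, 0 < x → 0 < f x) (hm : OperatorMonotone f) {n : ℕ}
    {A B : Matrix (Fin n) (Fin n) ℂ} (hA : A.PosDef) (hB : B.PosDef) {t : ℝ}
    (ht : t ∈ Set.Icc (0:ℝ) 1) :
    cfc f (wharm t A B) ≤ wgeom t (cfc f A) (cfc f B) := by
  set h : ℝ → ℝ := fun x => (f x⁻¹)⁻¹ with hh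
  have hcfc : ∀ {m : ℕ} {X : Matrix (Fin m) (Fin m) ℂ}, X.PosDef → cfc h X = (cfc f X⁻¹)⁻¹ := by
    intro m X hX
    rw [inv_eq hX, cfc_cfc hX, cfc_inv' hX fun x hx => hf' _ (inv_pos.2 hx)]
  have hhc : ContinuousOn h (Set.Ioi 0) := by
    refine ContinuousOn.inv₀ (hf.comp (continuousOn_inv₀.mono fun x hx => ne_of_gt hx)
      fun x (hx : 0 < x) => Set.mem_Ioi.2 (inv_pos.2 hx)) fun x hx => (hf' _ (inv_pos.2 hx)).ne'
  have hhm : OperatorMonotone h := by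
    intro m X Y hX hY hXY
    rw [hcfc hX, hcfc hY]
    exact inv_anti (cfc_pd hY.inv hf') (hm m _ _ hY.inv hX.inv (inv_anti hX hXY))
  have key := concave hhc hhm hA.inv hB.inv ht
  have hT := pd_comb hA.inv hB.inv ht
  have ei : ∀ {X : Matrix (Fin n) (Fin n) ℂ}, X.PosDef → X⁻¹⁻¹ = X := fun {X} hX =>
    Matrix.nonsing_inv_nonsing_inv X ((Matrix.isUnit_iff_isUnit_det X).1 hX.isUnit)
  rw [hcfc hA.inv, hcfc hB.inv, hcfc hT, ei hA, ei hB] at key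
  have hP := cfc_pd hA hf'
  have hQ := cfc_pd hB hf'
  have k2 := inv_anti (pd_comb hP.inv hQ.inv ht) key
  rw [ei (cfc_pd hT.inv hf')] at k2
  exact k2.trans (harm_le_geom hP hQ ht)

end S7

namespace S7

/-- Real symmetric two by two matrices. -/
noncomputable def M2 (p q w : ℝ) : Matrix (Fin 2) (Fin 2) ℂ := !![(p:ℂ), (q:ℂ); (q:ℂ), (w:ℂ)]

/-- The two by two matrix with eigenvalues `a`, `b`, and angle given by `r`, `s`. -/
noncomputable def E2 (r s a b : ℝ) : Matrix (Fin 2) (Fin 2) ℂ :=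
  M2 (a * (1 - r) + b * r) ((b - a) * s) (a * r + b * (1 - r))

theorem M2_pd {p q w : ℝ} (hp : 0 < p) (h : q * q < p * w) : (M2 p q w).PosDef := by
  set L : Matrix (Fin 2) (Fin 2) ℂ := !![1, 0; ((q / p : ℝ) : ℂ), 1] with hL
  set d : Fin 2 → ℂ := ![(p : ℂ), ((w - q * q / p : ℝ) : ℂ)] with hd
  have hLu : IsUnit L := by
    rw [Matrix.isUnit_iff_isUnit_det, hL, det_fin_two_of]; simp
  have hw : 0 < w - q * q / p := by
    rw [sub_pos, div_lt_iff₀ hp]; linarith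
  have hD : (diagonal d).PosDef := by
    refine PosDef.diagonal fun i => ?_
    fin_cases i
    · simpa [hd] using hp
    · simp only [hd]; exact Complex.zero_lt_real.2 hw
  have h1 := (Matrix.IsUnit.posDef_star_right_conjugate_iff (x := diagonal d) hLu).2 hD
  have hp' : (p : ℂ) ≠ 0 := by exact_mod_cast hp.ne'
  have e : L * diagonal d * star L = M2 p q w := by
    have ed : diagonal d = !![(p:ℂ), 0; 0, ((w - q * q / p : ℝ) : ℂ)] := by
      ext i j
      fin_cases i <;> fin_cases j <;> simp [hd]
    have es : star L = !![1, ((q / p : ℝ) : ℂ); 0, 1] := by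
      rw [star_eq_conjTranspose, hL]
      ext i j
      fin_cases i <;> fin_cases j <;> simp
    have e1 : (q : ℂ) / p * p = q := by field_simp
    rw [ed, es, hL, M2]
    ext i j
    fin_cases i <;> fin_cases j <;>
      simp [Matrix.mul_apply, Fin.sum_univ_two] <;> field_simp
    ring
  rwa [e] at h1

theorem M2_mul (p q w p' q' w' : ℝ) :
    M2 p q w * M2 p' q' w' = !![((p * p' + q * q' : ℝ) : ℂ), ((p * q' + q * w' : ℝ) : ℂ);
      ((q * p' + w * q' : ℝ) : ℂ), ((q * q' + w * w' : ℝ) : ℂ)] := by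
  rw [M2, M2]
  ext i j
  fin_cases i <;> fin_cases j <;> simp [Matrix.mul_apply, Fin.sum_univ_two]

theorem M2_conj (u v x y z : ℝ) :
    M2 u 0 v * M2 x y z * M2 u 0 v = M2 (u * x * u) (u * y * v) (v * z * v) := by
  rw [M2_mul]
  simp only [M2]
  ext i j
  fin_cases i <;> fin_cases j <;>
    simp only [Matrix.mul_apply, Fin.sum_univ_two] <;> simp
  simp only [mul_comm, mul_left_comm, true_or]

theorem M2_one : (1 : Matrix (Fin 2) (Fin 2) ℂ) = M2 1 0 1 := by
  rw [M2]; ext i j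
  fin_cases i <;> fin_cases j <;> simp

theorem M2_add (p q w p' q' w' : ℝ) :
    M2 p q w + M2 p' q' w' = M2 (p + p') (q + q') (w + w') := by
  simp only [M2]; ext i j
  fin_cases i <;> fin_cases j <;> simp

theorem M2_smul (c p q w : ℝ) : c • M2 p q w = M2 (c * p) (c * q) (c * w) := by
  simp only [M2]; ext i j
  fin_cases i <;> fin_cases j <;> simp

theorem cfc_two {n : ℕ} {A : Matrix (Fin n) (Fin n) ℂ} (hA : A.PosDef) {α β : ℝ}
    (h : A * A + (α * β) • 1 = (α + β) • A) {g : ℝ → ℝ} {u v : ℝ} (ha : u + v * α = g α)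
    (hb : u + v * β = g β) : cfc g A = u • 1 + v • A := by
  have hA' : IsSelfAdjoint A := hA.1
  have h1 : cfc (fun x : ℝ => α * β + 1 * (x * x)) A = cfc (fun x : ℝ => 0 + (α + β) * x) A := by
    rw [cfc_lin hA, cfc_lin hA, cfc_mul (fun x => x) (fun x => x) A (cont _ _) (cont _ _),
      cfc_id' ℝ A, one_smul, zero_smul, zero_add, add_comm, h]
  have h2 := eqOn_of_cfc_eq_cfc h1 (cont _ _) (cont _ _)
  have h3 := cfc_lin hA u v (fun x => x)
  rw [cfc_id' ℝ A] at h3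
  rw [← h3]
  refine cfc_congr fun x hx => ?_
  have h4 : α * β + 1 * (x * x) = 0 + (α + β) * x := h2 hx
  have h5 : (x - α) * (x - β) = 0 := by linarith
  rcases mul_eq_zero.1 h5 with h | h
  · rw [sub_eq_zero.1 h]; exact ha.symm
  · rw [sub_eq_zero.1 h]; exact hb.symm

theorem E2_pd {r s a b : ℝ} (hr : 0 ≤ r) (hr1 : r ≤ 1) (hs : s * s = r * (1 - r)) (ha : 0 < a)
    (hb : 0 < b) : (E2 r s a b).PosDef := by
  apply M2_pd
  · rcases eq_or_lt_of_le hr with h | h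
    · subst h; simpa using ha
    · have := mul_pos hb h
      have := mul_nonneg ha.le (sub_nonneg.2 hr1)
      linarith
  · have e : (a * (1 - r) + b * r) * (a * r + b * (1 - r)) = (b - a) * s * ((b - a) * s) + a * b := by
      have : (b - a) * s * ((b - a) * s) = (b - a) * (b - a) * (s * s) := by ring
      rw [this, hs]; ring
    rw [e]; have := mul_pos ha hb; linarith

theorem E2_cfc {r s a b : ℝ} (hr : 0 ≤ r) (hr1 : r ≤ 1) (hs : s * s = r * (1 - r)) (ha : 0 < a)
    (hb : 0 < b) (hab : a ≠ b) (g : ℝ → ℝ) : cfc g (E2 r s a b) = E2 r s (g a) (g b) := by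
  have hba : b - a ≠ 0 := sub_ne_zero.2 hab.symm
  have hpd := E2_pd hr hr1 hs ha hb
  have hq : E2 r s a b * E2 r s a b + (a * b) • 1 = (a + b) • E2 r s a b := by
    rw [E2, M2_mul, M2_one, M2_smul, M2_smul, M2, M2]
    have e : (b - a) * s * ((b - a) * s) = (b - a) * (b - a) * (r * (1 - r)) := by
      rw [← hs]; ring
    rw [e]
    ext i j
    fin_cases i <;> fin_cases j <;> simp <;> ring
  rw [cfc_two hpd hq (g := g) (u := g a - (g b - g a) / (b - a) * a) (v := (g b - g a) / (b - a))
    (by ring) (by field_simp; ring)]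
  rw [E2, E2, M2_one, M2_smul, M2_smul, M2_add]
  congr 1 <;> field_simp <;> ring

theorem two_step {f : ℝ → ℝ} (hf' : ∀ x, 0 < x → 0 < f x)
    (H : ∀ (A B : Matrix (Fin 2) (Fin 2) ℂ), A.PosDef → B.PosDef → ∀ t ∈ Set.Icc (0:ℝ) 1,
      cfc f (wharm t A B) ≤ wgeom t (cfc f A) (cfc f B))
    {a b r : ℝ} (ha : 0 < a) (hab : a < b) (hr : 1 / 2 < r) (hr1 : r < 1) :
    (f (a * (1 - r) + b * r)⁻¹) ^ 2 * (1 - r) ≤ f a⁻¹ * f b⁻¹ := by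
  set g : ℝ → ℝ := fun x => f x⁻¹ with hg
  have hgpos : ∀ x, 0 < x → 0 < g x := fun x hx => hf' _ (inv_pos.2 hx)
  have hb : 0 < b := ha.trans hab
  set s := Real.sqrt (r * (1 - r)) with hsd
  have hs : s * s = r * (1 - r) := Real.mul_self_sqrt (mul_nonneg (by linarith) (by linarith))
  have hs' : -s * -s = r * (1 - r) := by rw [neg_mul_neg, hs]
  have hr0 : 0 ≤ r := by linarith
  have hX := E2_pd hr0 hr1.le hs ha hb
  have hY := E2_pd hr0 hr1.le hs' ha hb
  have hcfc : ∀ {X : Matrix (Fin 2) (Fin 2) ℂ}, X.PosDef → cfc f X⁻¹ = cfc g X := by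
    intro X hX
    rw [inv_eq hX, cfc_cfc hX]
  have ei : ∀ {X : Matrix (Fin 2) (Fin 2) ℂ}, X.PosDef → X⁻¹⁻¹ = X := fun {X} hX =>
    Matrix.nonsing_inv_nonsing_inv X ((Matrix.isUnit_iff_isUnit_det X).1 hX.isUnit)
  have key := H _ _ hX.inv hY.inv (1/2) ⟨by norm_num, by norm_num⟩
  set p := a * (1 - r) + b * r with hp
  set w := a * r + b * (1 - r) with hw
  have hppos : 0 < p := by
    have := mul_pos ha (sub_pos.2 hr1); have := mul_nonneg hb.le hr0; linarith
  have hwpos : 0 < w := by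
    have := mul_nonneg ha.le hr0; have := mul_pos hb (sub_pos.2 hr1); linarith
  have hpw : w ≠ p := by
    have : p - w = (b - a) * (2 * r - 1) := by rw [hp, hw]; ring
    have h2 : 0 < (b - a) * (2 * r - 1) := mul_pos (by linarith) (by linarith)
    intro h; rw [h, sub_self] at this; linarith
  have hmid : (1 - (1/2 : ℝ)) • E2 r s a b + (1/2 : ℝ) • E2 r (-s) a b = E2 1 0 w p := by
    rw [E2, E2, E2, M2_smul, M2_smul, M2_add]
    congr 1 <;> ring
  have hT : (E2 1 0 w p).PosDef := E2_pd zero_le_one le_rfl (by simp) hwpos hppos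
  unfold wharm at key
  rw [ei hX, ei hY, hmid, hcfc hX, hcfc hY, hcfc hT,
    E2_cfc zero_le_one le_rfl (by simp) hwpos hppos hpw, E2_cfc hr0 hr1.le hs ha hb hab.ne,
    E2_cfc hr0 hr1.le hs' ha hb hab.ne] at key
  have h0 := hgpos a ha
  have h1 := hgpos b hb
  have hgp := hgpos p hppos
  change g p ^ 2 * (1 - r) ≤ g a * g b
  generalize g a = g0 at *
  generalize g b = g1 at *
  have hP := E2_pd hr0 hr1.le hs h0 h1
  set lp := g0 * (1 - r) + g1 * r with hlp
  set lm := g0 * r + g1 * (1 - r) with hlm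
  have hlppos : 0 < lp := by
    have := mul_pos h0 (sub_pos.2 hr1); have := mul_nonneg h1.le hr0; linarith
  have hlmpos : 0 < lm := by
    have := mul_nonneg h0.le hr0; have := mul_pos h1 (sub_pos.2 hr1); linarith
  set D := g0 * g1 with hD
  have hDpos : 0 < D := mul_pos h0 h1
  set δ := (g1 - g0) * s with hδ
  have hdet : lp * lm - δ * δ = D := by
    have : δ * δ = (g1 - g0) * (g1 - g0) * (r * (1 - r)) := by rw [← hs]; ring
    rw [this]; ring
  set Gp := Real.sqrt (D * lp / lm) with hGp
  have hGppos : 0 < Gp := Real.sqrt_pos.2 (by positivity)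
  have hGp2 : Gp * Gp = D * lp / lm := Real.mul_self_sqrt (by positivity)
  have hPinv : (E2 r s g0 g1)⁻¹ = D⁻¹ • M2 lm (-δ) lp := by
    apply Matrix.inv_eq_right_inv
    rw [mul_smul_comm]
    change D⁻¹ • (M2 lp δ lm * M2 lm (-δ) lp) = 1
    have e : M2 lp δ lm * M2 lm (-δ) lp = D • 1 := by
      rw [M2_mul, M2_one, M2_smul, M2, ← hdet]
      ext i j
      fin_cases i <;> fin_cases j <;> simp <;> ring
    rw [e, smul_smul, inv_mul_cancel₀ hDpos.ne', one_smul]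
  have hG : (M2 Gp 0 (D / Gp)).PosDef := M2_pd hGppos (by
    rw [mul_zero]; positivity)
  have hgeo : M2 Gp 0 (D / Gp) * (E2 r s g0 g1)⁻¹ * M2 Gp 0 (D / Gp) = E2 r (-s) g0 g1 := by
    have e1 : Gp * (D⁻¹ * lm) * Gp = lp := by
      have : Gp * (D⁻¹ * lm) * Gp = (Gp * Gp) * D⁻¹ * lm := by ring
      rw [this, hGp2]; field_simp
    have e3 : D / Gp * (D⁻¹ * lp) * (D / Gp) = lm := by
      have : D / Gp * (D⁻¹ * lp) * (D / Gp) = D * lp / (Gp * Gp) := by field_simp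
      rw [this, hGp2]; field_simp
    have e2 : Gp * (D⁻¹ * (-δ)) * (D / Gp) = -δ := by field_simp
    rw [hPinv, M2_smul, M2_conj, e1, e2, e3, E2]
    congr 1; rw [hδ]; ring
  rw [geom_half hP hG hgeo] at key
  have hd := PosSemidef.diag_nonneg (i := 0) key
  have hle : g p ≤ Gp := by
    have e : (M2 Gp 0 (D / Gp) - E2 1 0 (g w) (g p)) 0 0 = ((Gp - g p : ℝ) : ℂ) := by
      simp [M2, E2]
    rw [e] at hd
    have := Complex.zero_le_real.1 hd
    linarith
  have h5 : g p ^ 2 ≤ D * lp / lm := by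
    rw [← hGp2, sq]; exact mul_self_le_mul_self hgp.le hle
  rw [le_div_iff₀ hlmpos] at h5
  have h6 : lp * (1 - r) ≤ lm := by
    have : lm - lp * (1 - r) = g0 * (r - (1 - r) * (1 - r)) + g1 * ((1 - r) * (1 - r)) := by
      rw [hlp, hlm]; ring
    have h7 : 0 ≤ r - (1 - r) * (1 - r) := by nlinarith
    have := mul_nonneg h0.le h7
    have := mul_nonneg h1.le (mul_self_nonneg (1 - r))
    linarith
  have h8 : g p ^ 2 * (1 - r) * lm ≤ D * lm := by
    calc g p ^ 2 * (1 - r) * lm = (g p ^ 2 * lm) * (1 - r) := by ring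
      _ ≤ (D * lp) * (1 - r) := mul_le_mul_of_nonneg_right h5 (by linarith)
      _ = D * (lp * (1 - r)) := by ring
      _ ≤ D * lm := mul_le_mul_of_nonneg_left h6 hDpos.le
  exact le_of_mul_le_mul_right h8 hlmpos

/-- Boundedness from the scalar inequality. -/
theorem bounded {g : ℝ → ℝ} (hgc : ContinuousOn g (Set.Ioi 0)) (hg : ∀ x, 0 < x → 0 < g x)
    (H : ∀ a b r : ℝ, 0 < a → a < b → 1 / 2 < r → r < 1 →
      (g (a * (1 - r) + b * r)) ^ 2 * (1 - r) ≤ g a * g b) {a b : ℝ} (ha : 0 < a) (hab : a ≤ b) :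
    g b ≤ 16 * g a := by
  by_contra hcon
  push Not at hcon
  have hga := hg a ha
  have hlt : a < b := by
    rcases eq_or_lt_of_le hab with h | h
    · subst h; linarith
    · exact h
  set m := b - a with hm
  have hm0 : 0 < m := by linarith
  have key : ∀ k : ℕ, (2:ℝ) ^ (k + 4) * g a ≤ g (a + m * (2 - (1/2) ^ k)) := by
    intro k
    induction k with
    | zero =>
      have : a + m * (2 - (1/2) ^ 0) = b := by rw [hm]; ring
      rw [this]; norm_num; exact hcon.le
    | succ k ih =>
      set q : ℝ := (1/2) ^ (k + 1) with hq
      have hq0 : 0 < q := by positivity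
      have hq1 : q ≤ 1/2 := by
        rw [hq, pow_succ]
        have : ((1:ℝ)/2) ^ k ≤ 1 := pow_le_one₀ (by norm_num) (by norm_num)
        linarith
      have hq2 : ((1:ℝ)/2) ^ k = 2 * q := by rw [hq, pow_succ]; ring
      have hqi : q * 2 ^ (k + 1) = 1 := by
        rw [hq, ← mul_pow]; norm_num
      rw [hq2] at ih
      have h2q : 0 < 2 - q := by linarith
      have hr : (2 - 2 * q) / (2 - q) < 1 := by rw [div_lt_one h2q]; linarith
      have hr2 : 1 / 2 < (2 - 2 * q) / (2 - q) := by rw [lt_div_iff₀ h2q]; linarith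
      have h := H a (a + m * (2 - q)) _ ha (by have := mul_pos hm0 h2q; linarith) hr2 hr
      have e : a * (1 - (2 - 2 * q) / (2 - q)) + (a + m * (2 - q)) * ((2 - 2 * q) / (2 - q)) =
          a + m * (2 - 2 * q) := by
        field_simp; ring
      rw [e] at h
      have e2 : q / 2 ≤ 1 - (2 - 2 * q) / (2 - q) := by
        have : 1 - (2 - 2 * q) / (2 - q) = q / (2 - q) := by field_simp; ring
        rw [this]
        exact div_le_div_of_nonneg_left hq0.le h2q (by linarith)
      set x := g (a + m * (2 - 2 * q))
      set y := g (a + m * (2 - q))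
      have e3 : (2 ^ (k + 4) * g a) ^ 2 ≤ x ^ 2 := pow_le_pow_left₀ (by positivity) ih 2
      have e4 : (2 ^ (k + 4) * g a) ^ 2 * (q / 2) ≤ g a * y :=
        (mul_le_mul e3 e2 (by positivity) (by positivity)).trans h
      have e5 : (2 ^ (k + 4) * g a) ^ 2 * (q / 2) = g a * ((2:ℝ) ^ (k + 6) * g a) := by
        have : (2 ^ (k + 4) * g a) ^ 2 * (q / 2) =
          (q * 2 ^ (k + 1)) * (g a * ((2:ℝ) ^ (k + 6) * g a)) := by ring
        rw [this, hqi, one_mul]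
      rw [e5] at e4
      have e6 := le_of_mul_le_mul_left e4 hga
      refine le_trans ?_ e6
      apply mul_le_mul_of_nonneg_right _ hga.le
      exact pow_le_pow_right₀ (by norm_num) (by omega)
  have hcomp : IsCompact (Set.Icc b (a + m * 2)) := isCompact_Icc
  obtain ⟨C, hC⟩ := (hcomp.bddAbove_image (hgc.mono fun x hx =>
    Set.mem_Ioi.2 (ha.trans (hlt.trans_le hx.1))))
  obtain ⟨k, hk⟩ := pow_unbounded_of_one_lt (C / g a) (by norm_num : (1:ℝ) < 2)
  have h1 := key k
  have hp1 : ((1:ℝ)/2) ^ k ≤ 1 := pow_le_one₀ (by norm_num) (by norm_num)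
  have hp0 : (0:ℝ) < (1/2) ^ k := by positivity
  have h2 : g (a + m * (2 - (1/2) ^ k)) ≤ C := by
    apply hC
    refine ⟨_, ⟨?_, ?_⟩, rfl⟩
    · have : b = a + m * 1 := by rw [hm]; ring
      rw [this]; gcongr; linarith
    · gcongr; linarith
  rw [div_lt_iff₀ hga] at hk
  have h3 : (2:ℝ) ^ k * g a ≤ 2 ^ (k + 4) * g a :=
    mul_le_mul_of_nonneg_right (pow_le_pow_right₀ (by norm_num) (by omega)) hga.le
  linarith

theorem backward {f : ℝ → ℝ} (hf : ContinuousOn f (Set.Ioi 0))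
    (hf' : ∀ x, 0 < x → 0 < f x)
    (H : ∀ (n : ℕ) (A B : Matrix (Fin n) (Fin n) ℂ), A.PosDef → B.PosDef → ∀ t ∈ Set.Icc (0:ℝ) 1,
      cfc f (wharm t A B) ≤ wgeom t (cfc f A) (cfc f B)) : OperatorMonotone f := by
  intro n A B hA hB hAB
  change A ≤ B at hAB
  change cfc f A ≤ cfc f B
  have hbd : ∀ x : ℝ, 1 ≤ x → f x⁻¹ ≤ 16 * f 1 := by
    intro x hx
    have hgc : ContinuousOn (fun x : ℝ => f x⁻¹) (Set.Ioi 0) :=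
      hf.comp (continuousOn_inv₀.mono fun x hx => ne_of_gt hx)
        fun x (hx : 0 < x) => Set.mem_Ioi.2 (inv_pos.2 hx)
    have := bounded (g := fun x => f x⁻¹) hgc (fun x hx => hf' _ (inv_pos.2 hx))
      (fun a b r ha hab hr hr1 => two_step hf' (H 2) ha hab hr hr1) one_pos hx
    simpa using this
  have hA' : IsSelfAdjoint A := hA.1
  have ei : ∀ {X : Matrix (Fin n) (Fin n) ℂ}, X.PosDef → X⁻¹⁻¹ = X := fun {X} hX =>
    Matrix.nonsing_inv_nonsing_inv X ((Matrix.isUnit_iff_isUnit_det X).1 hX.isUnit)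
  have hinv : B⁻¹ ≤ A⁻¹ := inv_anti hA hAB
  have step : ∀ t : ℝ, 0 < t → t < 1 →
      cfc (fun x => f ((t + (1 - t) * x⁻¹)⁻¹)) A ≤ (1 - t) • cfc f B + t • ((16 * f 1) • 1) := by
    intro t ht ht1
    have htm : t ∈ Set.Icc (0:ℝ) 1 := ⟨ht.le, ht1.le⟩
    set F : Matrix (Fin n) (Fin n) ℂ := ((1 - t) / t) • (A⁻¹ - B⁻¹) + 1 with hF
    have hFge : 1 ≤ F := by
      rw [Matrix.le_iff, hF, add_sub_cancel_right]
      exact psd_smul hinv (div_nonneg (by linarith) ht.le)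
    have hFpd : F.PosDef := pd_le PosDef.one hFge
    have hF' : IsSelfAdjoint F := hFpd.1
    have h1 := H n B F⁻¹ hB hFpd.inv t htm
    have h2 := h1.trans (geom_le_arith (cfc_pd hB hf') (cfc_pd hFpd.inv hf') htm)
    have hpos : ∀ x : ℝ, 0 < x → 0 < t + (1 - t) * x⁻¹ := by
      intro x hx
      have := mul_pos (sub_pos.2 ht1) (inv_pos.2 hx)
      linarith
    have e1 : cfc f (wharm t B F⁻¹) = cfc (fun x => f ((t + (1 - t) * x⁻¹)⁻¹)) A := by
      unfold wharm
      have : (1 - t) • B⁻¹ + t • F⁻¹⁻¹ = t • 1 + (1 - t) • A⁻¹ := by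
        rw [ei hFpd, hF, smul_add, smul_smul, mul_div_cancel₀ _ ht.ne']
        module
      rw [this, inv_eq hA, ← cfc_lin hA, cfc_inv' hA hpos, cfc_cfc hA]
    have e2 : cfc f F⁻¹ ≤ (16 * f 1) • 1 := by
      rw [inv_eq hFpd, cfc_cfc hFpd, ← Algebra.algebraMap_eq_smul_one]
      refine cfc_le_algebraMap _ _ _ (fun x hx => hbd x ?_) (cont _ _)
      have : algebraMap ℝ _ (1:ℝ) ≤ F := by rw [map_one]; exact hFge
      exact (algebraMap_le_iff_le_spectrum (a := F)).1 this x hx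
    rw [e1] at h2
    refine h2.trans (add_le_add_right ?_ _)
    rw [Matrix.le_iff, ← smul_sub]
    exact psd_smul e2 ht.le
  refine le_lim (l := nhdsWithin 0 (Set.Ioi 0)) (cfc_lim (F := fun t x => f ((t + (1 - t) * x⁻¹)⁻¹)) hA ?_)
    (G := fun t => (1 - t) • cfc f B + t • ((16 * f 1) • 1)) ?_ ?_
  · intro x hx
    have h0 : ContinuousAt f x := hf.continuousAt (Ioi_mem_nhds hx)
    have h1 : ContinuousAt (fun t : ℝ => (t + (1 - t) * x⁻¹)⁻¹) 0 := by
      refine ContinuousAt.inv₀ (by fun_prop) ?_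
      simp [hx.ne']
    have h2 := h1.tendsto
    simp only [sub_zero, one_mul, zero_add, inv_inv] at h2
    exact (h0.tendsto.comp h2).mono_left nhdsWithin_le_nhds
  · have h1 : Continuous (fun t : ℝ => (1 - t) • cfc f B + t • ((16 * f 1) • (1 : Matrix (Fin n) (Fin n) ℂ))) := by
      fun_prop
    have h2 := h1.tendsto 0
    simp only [sub_zero, one_smul, zero_smul, add_zero] at h2
    exact h2.mono_left nhdsWithin_le_nhds
  · filter_upwards [Ioo_mem_nhdsGT (one_pos : (0:ℝ) < 1)] with t ht
    exact step t ht.1 ht.2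

end S7

theorem stmt_7 (f : ℝ → ℝ) (hf : ContinuousOn f (Set.Ioi 0))
    (hf' : ∀ x ∈ Set.Ioi (0:ℝ), f x ∈ Set.Ioi (0:ℝ)) :
    OperatorMonotone f ↔
      ∀ (n : ℕ) (A B : Matrix (Fin n) (Fin n) ℂ), A.PosDef → B.PosDef →
        ∀ t ∈ Set.Icc (0:ℝ) 1,
          MLE (cfc f (wharm t A B)) (wgeom t (cfc f A) (cfc f B)) := by

  constructor
  · intro h n A B hA hB t ht
    exact S7.forward hf hf' h hA hB ht
  · intro h
    exact S7.backward hf hf' h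
end

section
/- A continuous function f : (0,∞) → (0,∞) is operator monotone decreasing if and only if f(A ∇ B) ≤ f(A) # f(B) for every n ∈ ℕ and all n×n positive definite complex matrices A, B. -/
open Matrix
open scoped ComplexOrder

section aux
open scoped MatrixOrder
variable {m k : Type*} [Fintype m] [DecidableEq m] [Fintype k] [DecidableEq k]

lemma contS (f : ℝ → ℝ) (A : Matrix m m ℂ) : ContinuousOn f (spectrum ℝ A) :=
  A.finite_real_spectrum.continuousOn f

lemma exists_poly (f : ℝ → ℝ) (A : Matrix m m ℂ) (B : Matrix k k ℂ) (hA : A.IsHermitian)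
    (hB : B.IsHermitian) : ∃ p : Polynomial ℝ, cfc f A = Polynomial.aeval A p ∧
      cfc f B = Polynomial.aeval B p := by
  classical
  let s : Finset ℝ := A.finite_real_spectrum.toFinset ∪ B.finite_real_spectrum.toFinset
  have key : ∀ x ∈ s, f x = (Lagrange.interpolate s id f).eval x := fun x hx =>
    (Lagrange.eval_interpolate_at_node (v := id) f (Set.injOn_id _) hx).symm
  refine ⟨Lagrange.interpolate s id f, ?_, ?_⟩
  · rw [← cfc_polynomial _ A hA]
    exact cfc_congr fun x hx => key x (by simp [s, hx])
  · rw [← cfc_polynomial _ B hB]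
    exact cfc_congr fun x hx => key x (by simp [s, hx])

lemma intertwine (f : ℝ → ℝ) {A : Matrix m m ℂ} {B : Matrix k k ℂ} (hA : A.IsHermitian)
    (hB : B.IsHermitian) (X : Matrix m k ℂ) (h : A * X = X * B) :
    cfc f A * X = X * cfc f B := by
  obtain ⟨p, h1, h2⟩ := exists_poly f A B hA hB
  rw [h1, h2]
  clear h1 h2
  induction p using Polynomial.induction_on' with
  | add p q hp hq => simp only [map_add, Matrix.add_mul, Matrix.mul_add, *]
  | monomial n a =>
    have hn : A ^ n * X = X * B ^ n := by
      induction n with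
      | zero => simp
      | succ n ih => rw [pow_succ, Matrix.mul_assoc, h, ← Matrix.mul_assoc, ih, pow_succ, Matrix.mul_assoc]
    simp only [Polynomial.aeval_monomial, ← Algebra.smul_def,
      Matrix.smul_mul, Matrix.mul_smul, hn]

lemma cfc_eig (f : ℝ → ℝ) {A : Matrix m m ℂ} (hA : A.IsHermitian) (v : m → ℂ) (l : ℝ)
    (h : A *ᵥ v = (l : ℂ) • v) : cfc f A *ᵥ v = (f l : ℂ) • v := by
  have := intertwine f (B := algebraMap ℝ (Matrix Unit Unit ℂ) l) hA
    (IsSelfAdjoint.algebraMap _ (IsSelfAdjoint.all l)) (Matrix.replicateCol Unit v) (by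
      ext i j
      have := congrFun h i
      simp [Matrix.mul_apply, Matrix.mulVec, dotProduct, Matrix.algebraMap_matrix_apply] at this ⊢
      rw [this, mul_comm])
  rw [cfc_algebraMap] at this
  ext i
  have := congrFun (congrFun this i) ()
  simp [Matrix.mul_apply, Matrix.mulVec, dotProduct, Matrix.algebraMap_matrix_apply] at this ⊢
  rw [this, mul_comm]

lemma posDef_cfc (f : ℝ → ℝ) {A : Matrix m m ℂ} (hA : A.IsHermitian)
    (h : ∀ x ∈ spectrum ℝ A, 0 < f x) : (cfc f A).PosDef := by
  rw [← Matrix.isStrictlyPositive_iff_posDef]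
  exact (cfc_isStrictlyPositive_iff f A (contS f A) hA).2 h

lemma spec_pos {A : Matrix m m ℂ} (hA : A.PosDef) : ∀ x ∈ spectrum ℝ A, 0 < x := by
  intro x hx
  rw [hA.1.spectrum_real_eq_range_eigenvalues] at hx
  obtain ⟨i, rfl⟩ := hx
  exact hA.eigenvalues_pos i

lemma cfc_herm (f : ℝ → ℝ) (A : Matrix m m ℂ) : (cfc f A).IsHermitian := cfc_predicate f A

lemma cfc_block (f : ℝ → ℝ) {A : Matrix m m ℂ} {B : Matrix k k ℂ} (hA : A.IsHermitian)
    (hB : B.IsHermitian) : cfc f (fromBlocks A 0 0 B) = fromBlocks (cfc f A) 0 0 (cfc f B) := by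
  have hD : (fromBlocks A 0 0 B).IsHermitian := by
    rw [Matrix.isHermitian_fromBlocks_iff]; simp [hA, hB]
  have h1 := intertwine f hD hA (fromRows 1 0) (by
    simp [fromBlocks_mul_fromRows, fromRows_mul])
  have h2 := intertwine f hD hB (fromRows 0 1) (by
    simp [fromBlocks_mul_fromRows, fromRows_mul])
  rw [← fromBlocks_toBlocks (cfc f (fromBlocks A 0 0 B))] at h1 h2 ⊢
  simp [fromBlocks_mul_fromRows, fromRows_mul, fromRows_ext_iff] at h1 h2
  rw [h1.1, h1.2, h2.1, h2.2]

/-- order-reversing for arbitrary index types -/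
lemma antitone_gen {f : ℝ → ℝ} (hf : OperatorAntitone f) {A B : Matrix m m ℂ} (hA : A.PosDef)
    (hB : B.PosDef) (h : (B - A).PosSemidef) : (cfc f A - cfc f B).PosSemidef := by
  let e := (Fintype.equivFin m).symm
  have key : ∀ A : Matrix m m ℂ, A.PosDef → cfc f (A.submatrix e e) = (cfc f A).submatrix e e := by
    intro A hA
    have := intertwine f (hA.submatrix e.injective).1 hA.1 ((1 : Matrix m m ℂ).submatrix e id) (by
      ext i j; simp [Matrix.mul_apply, Matrix.one_apply]
      rw [Finset.sum_eq_single (e.symm j)] <;> simp +contextual [Equiv.eq_symm_apply])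
    ext i j
    have := congrFun (congrFun this i) (e j)
    simpa [Matrix.mul_apply, Matrix.one_apply] using this
  have := hf _ _ _ (hA.submatrix e.injective) (hB.submatrix e.injective) (by
    unfold MLE; exact h.submatrix e)
  unfold MLE at this
  rw [key A hA, key B hB] at this
  exact (posSemidef_submatrix_equiv e).1 this
end aux

section aux2
open scoped MatrixOrder

lemma cfc_mul' {m : Type*} [Fintype m] [DecidableEq m] (f g : ℝ → ℝ) (A : Matrix m m ℂ) :
    cfc f A * cfc g A = cfc (fun x => f x * g x) A :=
  (cfc_mul f g A (contS _ _) (contS _ _)).symm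

lemma cfc_id'' {m : Type*} [Fintype m] [DecidableEq m] {A : Matrix m m ℂ} (hA : A.IsHermitian) 
    (f : ℝ → ℝ) (h : ∀ x ∈ spectrum ℝ A, f x = x) : cfc f A = A := by
  rw [cfc_congr (g := id) (fun x hx => h x hx)]
  exact cfc_id ℝ A hA

lemma cfc_one'' {m : Type*} [Fintype m] [DecidableEq m] {A : Matrix m m ℂ} (hA : A.IsHermitian) 
    (f : ℝ → ℝ) (c : ℝ) (h : ∀ x ∈ spectrum ℝ A, f x = c) : cfc f A = c • 1 := by
  rw [cfc_congr (g := fun _ => c) (fun x hx => h x hx), ← Algebra.algebraMap_eq_smul_one]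
  exact cfc_const c A hA

lemma geom_struct {n : ℕ} {P Q : Matrix (Fin n) (Fin n) ℂ} (hP : P.PosDef) (hQ : Q.PosDef) :
    ∃ S T C : Matrix (Fin n) (Fin n) ℂ, Sᴴ = S ∧ Tᴴ = T ∧ S * S = P ∧ S * T = 1 ∧ T * S = 1 ∧
      C = T * Q * T ∧ C.PosDef ∧ wgeom 2⁻¹ P Q = S * cfc (fun x : ℝ => x ^ (2⁻¹ : ℝ)) C * S := by
  have hST : mpow P (1/2) * mpow P (-(1/2)) = 1 := by
    unfold mpow
    rw [cfc_mul', cfc_one'' hP.1 _ 1, one_smul]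
    intro x hx
    rw [← Real.rpow_add (spec_pos hP x hx)]; simp
  have hTS : mpow P (-(1/2)) * mpow P (1/2) = 1 := by
    unfold mpow
    rw [cfc_mul', cfc_one'' hP.1 _ 1, one_smul]
    intro x hx
    rw [← Real.rpow_add (spec_pos hP x hx)]; simp
  have hT : (mpow P (-(1/2)))ᴴ = mpow P (-(1/2)) := cfc_herm _ _
  refine ⟨mpow P (1/2), mpow P (-(1/2)), _, cfc_herm _ _, hT, ?_, hST, hTS, rfl, ?_, rfl⟩
  · unfold mpow
    rw [cfc_mul', cfc_id'' hP.1]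
    intro x hx
    rw [← Real.rpow_add (spec_pos hP x hx)]; norm_num
  · have := (Matrix.IsUnit.posDef_star_left_conjugate_iff (U := mpow P (-(1/2))) (x := Q)
      (IsUnit.of_mul_eq_one _ hTS)).2 hQ
    rwa [star_eq_conjTranspose, hT] at this

lemma geom_cs {n : ℕ} {P Q : Matrix (Fin n) (Fin n) ℂ} (hP : P.PosDef) (hQ : Q.PosDef) (t : ℝ) :
    ((t ^ 2) • P + (2 * t) • wgeom 2⁻¹ P Q + Q).PosSemidef := by
  obtain ⟨S, T, C, hS, hT, hSS, hST, hTS, hC, hCp, hw⟩ := geom_struct hP hQ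
  rw [hw]
  set R := cfc (fun x : ℝ => x ^ (2⁻¹ : ℝ)) C with hR
  have hRR : R * R = C := by
    rw [hR, cfc_mul', cfc_id'' hCp.1]
    intro x hx
    rw [← Real.rpow_add (spec_pos hCp x hx)]; norm_num
  have hRh : Rᴴ = R := cfc_herm _ _
  have hQ' : Q = S * (R * R) * S := by
    rw [hRR, hC]
    calc Q = 1 * Q * 1 := by simp
      _ = (S * T) * Q * (T * S) := by rw [hST, hTS]
      _ = _ := by noncomm_ring
  have := posSemidef_conjTranspose_mul_self ((t • 1 + R) * S)
  convert this using 1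
  rw [conjTranspose_mul, conjTranspose_add, conjTranspose_smul, hS, hRh, conjTranspose_one, hQ', ← hSS,
    star_trivial]
  simp only [add_mul, mul_add, smul_mul_assoc, mul_smul_comm, one_mul, mul_one, smul_add, smul_smul,
    mul_assoc]
  module

lemma geom_ge {n : ℕ} {P Q F : Matrix (Fin n) (Fin n) ℂ} (hP : P.PosDef) (hQ : Q.PosDef)
    (h : ∀ X Y : Matrix (Fin n) (Fin n) ℂ,
      (Xᴴ * P * X + Yᴴ * Q * Y - (2⁻¹ : ℝ) • ((X + Y)ᴴ * F * (X + Y))).PosSemidef) :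
    (wgeom 2⁻¹ P Q - F).PosSemidef := by
  obtain ⟨S, T, C, hS, hT, hSS, hST, hTS, hC, hCp, hw⟩ := geom_struct hP hQ
  rw [hw]
  set R := cfc (fun x : ℝ => x ^ (2⁻¹ : ℝ)) C with hR
  set K := cfc (fun x : ℝ => 2 * x / (1 + x)) C with hK
  set L := cfc (fun x : ℝ => 2 / (1 + x)) C with hL
  have hKh : Kᴴ = K := cfc_herm _ _
  have hLh : Lᴴ = L := cfc_herm _ _
  have hKL : K + L = (2 : ℝ) • 1 := by
    rw [hK, hL, ← cfc_add _ _ _ (contS _ _) (contS _ _), cfc_one'' hCp.1]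
    intro x hx
    have := spec_pos hCp x hx
    field_simp; ring
  have hCC : C = cfc (fun x : ℝ => x) C := (cfc_id'' hCp.1 _ (fun _ _ => rfl)).symm
  have hle : K * K + L * C * L ≤ (2 : ℝ) • R := by
    have e1 : K * K + L * C * L = cfc (fun x : ℝ => 2 * x / (1 + x) * (2 * x / (1 + x)) + 
        2 / (1 + x) * x * (2 / (1 + x))) C := by
      rw [cfc_add _ _ _ (contS _ _) (contS _ _), ← cfc_mul', ← cfc_mul', ← cfc_mul', ← hCC]
    rw [e1, hR, ← cfc_const_mul 2 _ _ (contS _ _)]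
    refine cfc_mono (fun x hx => ?_) (contS _ _) (contS _ _)
    have hx0 := spec_pos hCp x hx
    have hy : x ^ (2⁻¹ : ℝ) * x ^ (2⁻¹ : ℝ) = x := by
      rw [← Real.rpow_add hx0]; norm_num
    have hy0 : 0 < x ^ (2⁻¹ : ℝ) := Real.rpow_pos_of_pos hx0 _
    set y := x ^ (2⁻¹ : ℝ)
    rw [← hy]
    have : 2 * y - (2 * (y * y) / (1 + y * y) * (2 * (y * y) / (1 + y * y)) + 
      2 / (1 + y * y) * (y * y) * (2 / (1 + y * y))) = 2 * y * (1 - y) ^ 2 / (1 + y * y) := by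
      field_simp; ring
    have : 0 ≤ 2 * y * (1 - y) ^ 2 / (1 + y * y) := by positivity
    linarith
  have h1 := h (T * K * S) (T * L * S)
  have e2 : T * K * S + T * L * S = (2 : ℝ) • 1 := by
    rw [← add_mul, ← mul_add, hKL]; simp [hTS]
  have e3 : (T * K * S)ᴴ * P * (T * K * S) = S * (K * K) * S := by
    simp only [conjTranspose_mul, hS, hT, hKh, ← hSS]
    calc _ = S * K * (T * S) * (S * T) * K * S := by noncomm_ring
      _ = _ := by rw [hST, hTS]; noncomm_ring
  have e4 : (T * L * S)ᴴ * Q * (T * L * S) = S * (L * C * L) * S := by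
    simp only [conjTranspose_mul, hS, hT, hLh, hC]
    noncomm_ring
  rw [e2, e3, e4] at h1
  have h2 := (Matrix.le_iff.1 hle).conjTranspose_mul_mul_same S
  rw [hS] at h2
  have h3 := (h1.add h2).smul (show (0:ℝ) ≤ 2⁻¹ by norm_num)
  convert h3 using 1
  simp only [conjTranspose_smul, conjTranspose_one, star_trivial, smul_mul_assoc, mul_smul_comm, one_mul,
    mul_one, mul_add, add_mul, mul_sub, sub_mul, smul_smul]
  module
end aux2

section aux3
open scoped MatrixOrder

lemma fromBlocks_sub_aux {m : Type*} (A B C D A' B' C' D' : Matrix m m ℂ) :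
    fromBlocks A B C D - fromBlocks A' B' C' D' =
      fromBlocks (A - A') (B - B') (C - C') (D - D') := by
  ext i j; rcases i with i | i <;> rcases j with j | j <;> simp

lemma exists_upper {m : Type*} [Fintype m] [DecidableEq m] {H : Matrix m m ℂ} (hH : H.IsHermitian) :
    ∃ l : ℝ, 0 < l ∧ (l • (1 : Matrix m m ℂ) - H).PosSemidef := by
  obtain ⟨b, hb⟩ := H.finite_real_spectrum.bddAbove
  refine ⟨max b 1, by positivity, ?_⟩
  rw [← Matrix.le_iff, ← Algebra.algebraMap_eq_smul_one]
  exact le_algebraMap_of_spectrum_le (fun x hx => (hb hx).trans (le_max_left _ _)) hH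

lemma fwd_eps {n : ℕ} {f : ℝ → ℝ} (hf' : ∀ x ∈ Set.Ioi (0:ℝ), f x ∈ Set.Ioi (0:ℝ))
    (hf : OperatorAntitone f) {A B : Matrix (Fin n) (Fin n) ℂ} (hA : A.PosDef) (hB : B.PosDef)
    {ε : ℝ} (hε : 0 < ε) (X Y : Matrix (Fin n) (Fin n) ℂ) :
    (Xᴴ * cfc f A * X + Yᴴ * cfc f B * Y - (2⁻¹ : ℝ) • ((X + Y)ᴴ *
      cfc f ((2⁻¹ : ℝ) • (A + B) + ε • 1) * (X + Y))).PosSemidef := by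
  set M : Matrix (Fin n) (Fin n) ℂ := (2⁻¹ : ℝ) • (A + B) with hM
  have hone : (ε • (1 : Matrix (Fin n) (Fin n) ℂ)).PosDef := PosDef.one.smul hε
  have hMp : M.PosDef := (hA.add hB).smul (by norm_num)
  have hMe : (M + ε • 1).PosDef := hMp.add hone
  set E : Matrix (Fin n) (Fin n) ℂ := -((2⁻¹ : ℝ) • (A - B)) with hE
  have hEh : Eᴴ = E := by
    rw [hE, conjTranspose_neg, conjTranspose_smul, conjTranspose_sub, hA.1, hB.1, star_trivial]
  obtain ⟨l, hl, hl2⟩ := exists_upper (H := M + Eᴴ * (ε • (1 : Matrix (Fin n) (Fin n) ℂ))⁻¹ * E)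
    (hMp.1.add (isHermitian_conjTranspose_mul_mul _ hone.inv.1))
  have hlp : (l • (1 : Matrix (Fin n) (Fin n) ℂ)).PosDef := PosDef.one.smul hl
  let _ := hone.isUnit.invertible
  have hblock : (fromBlocks (ε • (1 : Matrix (Fin n) (Fin n) ℂ)) E Eᴴ (l • 1 - M)).PosSemidef := by
    rw [hone.fromBlocks₁₁]
    rwa [sub_sub]
  have hdiag : ∀ {P Q : Matrix (Fin n) (Fin n) ℂ}, P.PosDef → Q.PosDef → 
      (fromBlocks P 0 0 Q).PosDef := by
    intro P Q hP hQ
    let _ := hP.isUnit.invertible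
    have : (fromBlocks P 0 (0 : Matrix (Fin n) (Fin n) ℂ)ᴴ Q).PosSemidef := by
      rw [hP.fromBlocks₁₁]; simpa using hQ.posSemidef
    rw [conjTranspose_zero] at this
    rw [this.posDef_iff_det_ne_zero, det_fromBlocks_zero₂₁]
    exact mul_ne_zero hP.det_pos.ne' hQ.det_pos.ne'
  set W : Matrix (Fin n ⊕ Fin n) (Fin n ⊕ Fin n) ℂ := fromBlocks 1 1 1 (-1) with hW
  have hWh : Wᴴ = W := by simp [hW, fromBlocks_conjTranspose]
  have hWW : W * W = (2 : ℝ) • 1 := by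
    rw [hW, fromBlocks_multiply, ← fromBlocks_one, fromBlocks_smul]
    simp [two_smul]
  have hWu : IsUnit W := by
    refine IsUnit.of_mul_eq_one ((2⁻¹ : ℝ) • W) ?_
    rw [mul_smul_comm, hWW]; simp
  have hconj : ∀ {N : Matrix (Fin n ⊕ Fin n) (Fin n ⊕ Fin n) ℂ}, N.PosDef → 
      ((2⁻¹ : ℝ) • (W * N * W)).PosDef := by
    intro N hN
    have := (Matrix.IsUnit.posDef_star_left_conjugate_iff hWu (x := N)).2 hN
    rw [star_eq_conjTranspose, hWh] at this
    exact this.smul (show (0:ℝ) < 2⁻¹ by norm_num)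
  set N := fromBlocks (M + ε • 1) 0 0 (l • (1 : Matrix (Fin n) (Fin n) ℂ)) with hN
  have hNp : N.PosDef := hdiag hMe hlp
  set D := fromBlocks A 0 0 B with hD
  have hDp : D.PosDef := hdiag hA hB
  have hle : ((2⁻¹ : ℝ) • (W * N * W) - D).PosSemidef := by
    have h1 := (hblock.conjTranspose_mul_mul_same W).smul (show (0:ℝ) ≤ 2⁻¹ by norm_num)
    convert h1 using 1
    rw [hWh, hEh, hW, hN, hD]
    simp only [fromBlocks_multiply, fromBlocks_smul, fromBlocks_sub_aux, fromBlocks_inj, hE, hM, one_mul,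
      mul_one, mul_neg, neg_mul, mul_zero, zero_mul]
    refine ⟨?_, ?_, ?_, ?_⟩ <;> module
  have h2 := antitone_gen hf hDp (hconj hNp) hle
  have h3 : cfc f ((2⁻¹ : ℝ) • (W * N * W)) = (2⁻¹ : ℝ) • (W * cfc f N * W) := by
    have := intertwine f (hconj hNp).1 hNp.1 W (by
      rw [smul_mul_assoc, mul_assoc, hWW]; simp)
    rw [← this, mul_assoc _ W W, hWW]; simp
  rw [h3, hN, hD, cfc_block f hMe.1 hlp.1, cfc_block f hA.1 hB.1] at h2
  have h4 : (cfc f (l • (1 : Matrix (Fin n) (Fin n) ℂ))).PosSemidef := by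
    refine (posDef_cfc f hlp.1 fun x hx => hf' x (spec_pos hlp x hx)).posSemidef
  have h5 := h2.conjTranspose_mul_mul_same (fromRows X Y)
  have h6 := (h4.conjTranspose_mul_mul_same (X - Y)).smul (show (0:ℝ) ≤ 2⁻¹ by norm_num)
  convert h5.add h6 using 1
  rw [hW]
  simp only [fromBlocks_multiply, fromBlocks_smul, fromBlocks_sub_aux, fromBlocks_mul_fromRows,
    conjTranspose_fromRows_eq_fromCols_conjTranspose, fromCols_mul_fromRows, Matrix.mul_assoc,
    conjTranspose_add, conjTranspose_sub, one_mul,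
      mul_one, mul_neg, neg_mul, mul_zero, zero_mul, add_mul, mul_add, sub_mul, mul_sub, smul_mul_assoc,
      mul_smul_comm, smul_add, smul_sub, smul_neg]
  module

lemma fwd {n : ℕ} {f : ℝ → ℝ} (hc : ContinuousOn f (Set.Ioi 0)) 
    (hf' : ∀ x ∈ Set.Ioi (0:ℝ), f x ∈ Set.Ioi (0:ℝ))
    (hf : OperatorAntitone f) {A B : Matrix (Fin n) (Fin n) ℂ} (hA : A.PosDef) (hB : B.PosDef) :
    MLE (cfc f ((2⁻¹ : ℝ) • (A + B))) (wgeom 2⁻¹ (cfc f A) (cfc f B)) := by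
  have hMp : ((2⁻¹ : ℝ) • (A + B)).PosDef := (hA.add hB).smul (by norm_num)
  set M : Matrix (Fin n) (Fin n) ℂ := (2⁻¹ : ℝ) • (A + B) with hM
  have hP : ∀ {A : Matrix (Fin n) (Fin n) ℂ}, A.PosDef → (cfc f A).PosDef := fun {A} hA =>
    posDef_cfc f hA.1 fun x hx => hf' x (spec_pos hA x hx)
  have key : ∀ ε : ℝ, 0 < ε → cfc (fun x => f (x + ε)) M ≤ wgeom 2⁻¹ (cfc f A) (cfc f B) := by
    intro ε hε
    have h1 := geom_ge (hP hA) (hP hB) (fun X Y => fwd_eps hf' hf hA hB hε X Y)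
    have hMs : IsSelfAdjoint M := hMp.1
    rw [Matrix.le_iff]
    suffices h3 : cfc (fun x => f (x + ε)) M = cfc f (M + ε • 1) by rw [h3]; exact h1
    have h2 : M + ε • 1 = cfc (fun x : ℝ => x + ε) M := by
      rw [cfc_add_const ε (fun x : ℝ => x) M (contS _ _) hMs, cfc_id'' hMp.1 _ (fun _ _ => rfl),
        Algebra.algebraMap_eq_smul_one]
    rw [h2, ← cfc_comp' f (fun x : ℝ => x + ε) M
      ((M.finite_real_spectrum.image _).continuousOn _) (contS _ _) hMs]
  rw [MLE]
  have hlim : ∀ v : Fin n → ℂ, Filter.Tendsto (fun ε : ℝ => star v ⬝ᵥ 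
      (wgeom 2⁻¹ (cfc f A) (cfc f B) - cfc (fun x => f (x + ε)) M) *ᵥ v) (nhdsWithin 0 (Set.Ioi 0))
      (nhds (star v ⬝ᵥ (wgeom 2⁻¹ (cfc f A) (cfc f B) - cfc f M) *ᵥ v)) := by
    intro v
    have hcf : Filter.Tendsto (fun ε : ℝ => cfc (fun x => f (x + ε)) M) (nhdsWithin 0 (Set.Ioi 0))
        (nhds (cfc f M)) := by
      simp only [hMp.1.cfc_eq, IsHermitian.cfc, Unitary.conjStarAlgAut_apply]
      refine Filter.Tendsto.mul (Filter.Tendsto.mul tendsto_const_nhds ?_) tendsto_const_nhds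
      have hd : Continuous (fun d : Fin n → ℂ => (diagonal d : Matrix (Fin n) (Fin n) ℂ)) :=
        continuous_id.matrix_diagonal
      refine (hd.tendsto _).comp ?_
      rw [tendsto_pi_nhds]
      intro i
      have hi := hMp.eigenvalues_pos i
      have hci : ContinuousAt f (hMp.1.eigenvalues i + 0) := by
        rw [add_zero]
        exact hc.continuousAt (Ioi_mem_nhds hi)
      have := (Complex.continuous_ofReal.tendsto _).comp (hci.tendsto.comp
        ((continuous_const.add continuous_id).tendsto (0:ℝ)))
      rw [add_zero] at this
      exact this.mono_left nhdsWithin_le_nhds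
    have hcc : Continuous (fun Z : Matrix (Fin n) (Fin n) ℂ => star v ⬝ᵥ 
      (wgeom 2⁻¹ (cfc f A) (cfc f B) - Z) *ᵥ v) := by fun_prop
    exact (hcc.tendsto _).comp hcf
  have hwh : (wgeom 2⁻¹ (cfc f A) (cfc f B)).IsHermitian := by
    have := (Matrix.le_iff.1 (key 1 one_pos)).1.add (cfc_herm (fun x => f (x + 1)) M)
    simpa using this
  refine .of_dotProduct_mulVec_nonneg (hwh.sub (cfc_herm _ _)) fun v => ?_
  refine ge_of_tendsto (hlim v) ?_
  filter_upwards [self_mem_nhdsWithin] with ε hε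
  exact (Matrix.le_iff.1 (key ε hε)).dotProduct_mulVec_nonneg v
end aux3

section aux4
open scoped MatrixOrder

lemma seq_growth (h : ℕ → ℝ) (hpos : ∀ n, 0 < h n) (hl : ∀ n, h (n+1) ^ 2 ≤ h n * h (n+2)) (n : ℕ) :
    h 0 * (h 1 / h 0) ^ n ≤ h n := by
  have h0 := hpos 0
  have key : ∀ n, h 1 / h 0 * h n ≤ h (n+1) := by
    intro n
    induction n with
    | zero => rw [div_mul_cancel₀ _ h0.ne']
    | succ n ih =>
      have h1 := hl n
      have := hpos n; have := hpos (n+1)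
      by_contra! hc
      have : h 1 / h 0 * h n * h (n+1) ≤ h (n+1) * h (n+1) := by gcongr
      have : h n * h (n+2) < h n * (h 1 / h 0 * h (n+1)) := by gcongr
      nlinarith
  induction n with
  | zero => simp
  | succ n ih =>
    have := hpos 1
    calc _ = h 1 / h 0 * (h 0 * (h 1 / h 0) ^ n) := by ring
      _ ≤ h 1 / h 0 * h n := by gcongr
      _ ≤ _ := key n

lemma seq_bdd (h : ℕ → ℝ) (hpos : ∀ n, 0 < h n) (hl : ∀ n, h (n+1) ^ 2 ≤ h n * h (n+2)) 
    (C : ℝ) (hC : ∀ n, h n ≤ C) : h 1 ≤ h 0 := by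
  by_contra! hc
  have h0 := hpos 0
  have hr : 1 < h 1 / h 0 := by rwa [one_lt_div h0]
  obtain ⟨n, hn⟩ := pow_unbounded_of_one_lt (C / h 0) hr
  have h1 := seq_growth h hpos hl n
  rw [div_lt_iff₀ h0] at hn
  linarith [hC n]

lemma q_ineq {n : ℕ} {f : ℝ → ℝ} (hf' : ∀ x ∈ Set.Ioi (0:ℝ), f x ∈ Set.Ioi (0:ℝ))
    (H : ∀ (n : ℕ) (A B : Matrix (Fin n) (Fin n) ℂ), A.PosDef → B.PosDef →
        MLE (cfc f ((2⁻¹ : ℝ) • (A + B))) (wgeom 2⁻¹ (cfc f A) (cfc f B)))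
    {A B : Matrix (Fin n) (Fin n) ℂ} (hA : A.PosDef) (hB : B.PosDef) (v : Fin n → ℂ) :
    (star v ⬝ᵥ cfc f ((2⁻¹ : ℝ) • (A + B)) *ᵥ v).re ^ 2 ≤
      (star v ⬝ᵥ cfc f A *ᵥ v).re * (star v ⬝ᵥ cfc f B *ᵥ v).re := by
  have hP : ∀ {A : Matrix (Fin n) (Fin n) ℂ}, A.PosDef → (cfc f A).PosDef := fun {A} hA =>
    posDef_cfc f hA.1 fun x hx => hf' x (spec_pos hA x hx)
  have hMp : ((2⁻¹ : ℝ) • (A + B)).PosDef := (hA.add hB).smul (by norm_num)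
  have h1 := (H n A B hA hB).re_dotProduct_nonneg v
  have h2 := (hP hMp).posSemidef.re_dotProduct_nonneg v
  have h3 : ∀ t : ℝ, 0 ≤ (star v ⬝ᵥ cfc f A *ᵥ v).re * (t * t) + 
      (2 * (star v ⬝ᵥ wgeom 2⁻¹ (cfc f A) (cfc f B) *ᵥ v).re) * t + (star v ⬝ᵥ cfc f B *ᵥ v).re := by
    intro t
    have := (geom_cs (hP hA) (hP hB) t).re_dotProduct_nonneg v
    simp only [add_mulVec, smul_mulVec, dotProduct_add, dotProduct_smul] at this
    simp [← Complex.ofReal_pow] at this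
    linarith
  have h4 := discrim_le_zero h3
  simp only [sub_mulVec, dotProduct_sub] at h1
  simp [-smul_add] at h1 h2
  rw [discrim] at h4
  nlinarith

lemma scalar_ineq {f : ℝ → ℝ} (hf' : ∀ x ∈ Set.Ioi (0:ℝ), f x ∈ Set.Ioi (0:ℝ))
    (H : ∀ (n : ℕ) (A B : Matrix (Fin n) (Fin n) ℂ), A.PosDef → B.PosDef →
        MLE (cfc f ((2⁻¹ : ℝ) • (A + B))) (wgeom 2⁻¹ (cfc f A) (cfc f B)))
    {x y s c : ℝ} (hx : 0 < x) (hxy : x ≤ y) (hsc : c ^ 2 + s ^ 2 = 1) :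
    (c ^ 2 * f (c ^ 2 * x + s ^ 2 * y) + s ^ 2 * f (s ^ 2 * x + c ^ 2 * y)) ^ 2 ≤
      f x * ((c ^ 2 - s ^ 2) ^ 2 * f x + 4 * c ^ 2 * s ^ 2 * f y) := by
  have hc' : c ^ 2 = 1 - s ^ 2 := by linarith
  have hcC : (c : ℂ) ^ 2 = 1 - (s : ℂ) ^ 2 := by exact_mod_cast hc'
  let G : ℝ → Matrix (Fin 2) (Fin 2) ℂ := fun s => 
    !![((c ^ 2 * x + s ^ 2 * y : ℝ) : ℂ), ((c * s * (x - y) : ℝ) : ℂ); 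
      ((c * s * (x - y) : ℝ) : ℂ), ((s ^ 2 * x + c ^ 2 * y : ℝ) : ℂ)]
  have hG : ∀ s : ℝ, c ^ 2 + s ^ 2 = 1 → (G s).PosDef := by
    intro s hs
    have hcC : (c : ℂ) ^ 2 = 1 - (s : ℂ) ^ 2 := by
      have : c ^ 2 = 1 - s ^ 2 := by linarith
      exact_mod_cast this
    have h1 : ((x : ℝ) • (1 : Matrix (Fin 2) (Fin 2) ℂ)).PosDef := PosDef.one.smul hx
    have h2 := (posSemidef_vecMulVec_self_star ![(-s : ℂ), (c : ℂ)]).smul (sub_nonneg.2 hxy)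
    convert h1.add_posSemidef h2 using 1
    ext i j
    rw [Matrix.add_apply, Matrix.smul_apply, Matrix.smul_apply, vecMulVec_apply]
    fin_cases i <;> fin_cases j <;> simp [G]
    · linear_combination (x : ℂ) * hcC
    · ring
    · ring
    · linear_combination (x : ℂ) * hcC
  have eig1 : ∀ s : ℝ, c ^ 2 + s ^ 2 = 1 → G s *ᵥ ![(c : ℂ), (s : ℂ)] = (x : ℂ) • ![(c : ℂ), (s : ℂ)] := by
    intro s hs
    have hcC : (c : ℂ) ^ 2 = 1 - (s : ℂ) ^ 2 := by
      have : c ^ 2 = 1 - s ^ 2 := by linarith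
      exact_mod_cast this
    ext i
    fin_cases i <;> simp [G, mulVec, dotProduct, Fin.sum_univ_two]
    · linear_combination (x * c : ℂ) * hcC
    · linear_combination (x * s : ℂ) * hcC
  have eig2 : ∀ s : ℝ, c ^ 2 + s ^ 2 = 1 → G s *ᵥ ![(-s : ℂ), (c : ℂ)] = (y : ℂ) • ![(-s : ℂ), (c : ℂ)] := by
    intro s hs
    have hcC : (c : ℂ) ^ 2 = 1 - (s : ℂ) ^ 2 := by
      have : c ^ 2 = 1 - s ^ 2 := by linarith
      exact_mod_cast this
    ext i
    fin_cases i <;> simp [G, mulVec, dotProduct, Fin.sum_univ_two]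
    · linear_combination (- y * s : ℂ) * hcC
    · linear_combination (y * c : ℂ) * hcC
  have hs' : c ^ 2 + (-s) ^ 2 = 1 := by simpa using hsc
  have hp := hG s hsc
  have hm := hG (-s) hs'
  have h := q_ineq hf' H hp hm ![(c : ℂ), (s : ℂ)]
  have hMh : ((2⁻¹ : ℝ) • (G s + G (-s))).PosDef := (hp.add hm).smul (by norm_num)
  have m1 := cfc_eig f hMh.1 ![1, 0] (c ^ 2 * x + s ^ 2 * y) (by
    ext i
    fin_cases i <;> simp [G, mulVec, dotProduct, Fin.sum_univ_two]
    ring)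
  have m2 := cfc_eig f hMh.1 ![0, 1] (s ^ 2 * x + c ^ 2 * y) (by
    ext i
    fin_cases i <;> simp [G, mulVec, dotProduct, Fin.sum_univ_two]
    ring)
  have v1 : ![(c : ℂ), (s : ℂ)] = (c : ℂ) • ![1, 0] + (s : ℂ) • ![0, 1] := by
    ext i; fin_cases i <;> simp
  have v2 : ![(c : ℂ), (s : ℂ)] = ((c ^ 2 - s ^ 2 : ℝ) : ℂ) • ![(c : ℂ), ((-s : ℝ) : ℂ)] + 
      ((2 * c * s : ℝ) : ℂ) • ![-((-s : ℝ) : ℂ), (c : ℂ)] := by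
    ext i; fin_cases i <;> simp
    · linear_combination (-c : ℂ) * hcC
    · linear_combination (-s : ℂ) * hcC
  have r1 : (star ![(c : ℂ), (s : ℂ)] ⬝ᵥ cfc f (G s) *ᵥ ![(c : ℂ), (s : ℂ)]).re = f x := by
    rw [cfc_eig f hp.1 _ _ (eig1 s hsc)]
    simp [dotProduct, Fin.sum_univ_two]
    linear_combination (f x) * hsc
  have r2 : (star ![(c : ℂ), (s : ℂ)] ⬝ᵥ cfc f (G (-s)) *ᵥ ![(c : ℂ), (s : ℂ)]).re = 
      (c ^ 2 - s ^ 2) ^ 2 * f x + 4 * c ^ 2 * s ^ 2 * f y := by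
    conv_lhs => enter [1, 2, 2]; rw [v2]
    rw [mulVec_add, mulVec_smul, mulVec_smul, cfc_eig f hm.1 _ _ (eig1 (-s) hs'), 
      cfc_eig f hm.1 _ _ (eig2 (-s) hs')]
    simp [dotProduct, Fin.sum_univ_two, ← Complex.ofReal_pow]
    ring
  have r3 : (star ![(c : ℂ), (s : ℂ)] ⬝ᵥ cfc f ((2⁻¹ : ℝ) • (G s + G (-s))) *ᵥ ![(c : ℂ), (s : ℂ)]).re = 
      (c ^ 2 * f (c ^ 2 * x + s ^ 2 * y) + s ^ 2 * f (s ^ 2 * x + c ^ 2 * y)) := by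
    conv_lhs => enter [1, 2, 2]; rw [v1]
    rw [mulVec_add, mulVec_smul, mulVec_smul, m1, m2]
    simp [dotProduct, Fin.sum_univ_two]
    ring
  rw [r1, r2, r3] at h
  exact h
end aux4

section aux5
open scoped MatrixOrder

lemma scalar_step {f : ℝ → ℝ} (hf' : ∀ x ∈ Set.Ioi (0:ℝ), f x ∈ Set.Ioi (0:ℝ))
    (H : ∀ (n : ℕ) (A B : Matrix (Fin n) (Fin n) ℂ), A.PosDef → B.PosDef →
        MLE (cfc f ((2⁻¹ : ℝ) • (A + B))) (wgeom 2⁻¹ (cfc f A) (cfc f B)))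
    {a q δ L : ℝ} (ha : 0 < a) (haq : a ≤ q) (hδ : 0 < δ) (hL : q + δ - a ≤ L) :
    δ ^ 2 * f q ^ 2 ≤ f a * (L ^ 2 * f a + 4 * L * δ * f (q + δ)) := by
  have fa : 0 < f a := hf' a ha
  have fq : 0 < f q := hf' q (by simp; linarith)
  have fy : 0 < f (q + δ) := hf' (q + δ) (by simp; linarith)
  obtain ⟨l, hl⟩ : ∃ l, l = q + δ - a := ⟨_, rfl⟩
  have hl0 : 0 < l := by linarith
  obtain ⟨σ, hσ⟩ : ∃ σ, σ = δ / l := ⟨_, rfl⟩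
  have hσl : σ * l = δ := by rw [hσ]; field_simp
  have hσ0 : 0 < σ := by rw [hσ]; positivity
  have hσ1 : σ ≤ 1 := by rw [hσ, div_le_one hl0]; linarith
  have hs : (Real.sqrt σ) ^ 2 = σ := Real.sq_sqrt hσ0.le
  have hc : (Real.sqrt (1 - σ)) ^ 2 = 1 - σ := Real.sq_sqrt (by linarith)
  have h := scalar_ineq hf' H (x := a) (y := q + δ) (s := Real.sqrt σ) (c := Real.sqrt (1 - σ)) ha
    (by linarith) (by rw [hs, hc]; ring)
  rw [hs, hc] at h
  have e : σ * a + (1 - σ) * (q + δ) = q := by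
    have : σ * (q + δ - a) = δ := by rw [← hl]; exact hσl
    linear_combination - this
  rw [e] at h
  have fp : 0 < f ((1 - σ) * a + σ * (q + δ)) := hf' _ (by 
    simp only [Set.mem_Ioi]
    nlinarith)
  have h1 : (σ * f q) ^ 2 ≤ f a * (f a + 4 * σ * f (q + δ)) := by
    have i1 : (σ * f q) ^ 2 ≤ ((1 - σ) * f ((1 - σ) * a + σ * (q + δ)) + σ * f q) ^ 2 := by
      have : 0 ≤ (1 - σ) * f ((1 - σ) * a + σ * (q + δ)) := mul_nonneg (by linarith) fp.le
      gcongr; linarith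
    refine (i1.trans h).trans ?_
    have i2 : (1 - σ - σ) ^ 2 ≤ 1 := by nlinarith
    have i3 : 4 * (1 - σ) * σ ≤ 4 * σ := by nlinarith
    gcongr
    nlinarith
  have h2 : δ ^ 2 * f q ^ 2 ≤ f a * (l ^ 2 * f a + 4 * l * δ * f (q + δ)) := by
    have := mul_le_mul_of_nonneg_left h1 (sq_nonneg l)
    have e1 : δ ^ 2 * f q ^ 2 = l ^ 2 * (σ * f q) ^ 2 := by
      generalize f q = Q
      rw [← hσl]; ring
    have e2 : f a * (l ^ 2 * f a + 4 * l * δ * f (q + δ)) =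
        l ^ 2 * (f a * (f a + 4 * σ * f (q + δ))) := by
      generalize f (q + δ) = Y
      rw [← hσl]; ring
    rw [e1, e2]
    exact this
  refine h2.trans ?_
  rw [← hl] at hL
  gcongr

lemma scalar_anti {f : ℝ → ℝ} (hc : ContinuousOn f (Set.Ioi 0)) 
    (hf' : ∀ x ∈ Set.Ioi (0:ℝ), f x ∈ Set.Ioi (0:ℝ))
    (H : ∀ (n : ℕ) (A B : Matrix (Fin n) (Fin n) ℂ), A.PosDef → B.PosDef →
        MLE (cfc f ((2⁻¹ : ℝ) • (A + B))) (wgeom 2⁻¹ (cfc f A) (cfc f B)))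
    {a b : ℝ} (ha : 0 < a) (hab : a < b) : f b ≤ f a := by
  by_contra! hlt
  have fa : 0 < f a := hf' a ha
  obtain ⟨d, hd⟩ : ∃ d, d = b - a := ⟨_, rfl⟩
  have hd0 : 0 < d := by linarith
  have hgrow := seq_growth (fun n : ℕ => f (a + n * d)) (fun n => hf' _ (by simp; positivity)) (by
    intro n
    have h2 : (Real.sqrt (1/2)) ^ 2 = 1/2 := Real.sq_sqrt (by norm_num)
    have := scalar_ineq hf' H (x := a + n * d) (y := a + (n+2 : ℕ) * d) (s := Real.sqrt (1/2)) 
      (c := Real.sqrt (1/2)) (by positivity) (by push_cast; nlinarith) (by rw [h2]; norm_num)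
    rw [h2] at this
    have e : 1 / 2 * (a + n * d) + 1 / 2 * (a + (n+2 : ℕ) * d) = a + (n+1 : ℕ) * d := by
      push_cast; ring
    rw [e] at this
    refine le_trans (le_of_eq ?_) (this.trans (le_of_eq ?_)) <;> ring)
  simp only [Nat.cast_zero, zero_mul, add_zero, Nat.cast_one, one_mul] at hgrow
  have hb : a + d = b := by linarith
  rw [hb] at hgrow
  have hr : 1 < f b / f a := by rwa [one_lt_div fa]
  obtain ⟨r, hrr⟩ : ∃ r, r = f b / f a := ⟨_, rfl⟩
  rw [← hrr] at hgrow hr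
  obtain ⟨n, hn⟩ : ∃ n : ℕ, 64 * (n * d + 1) ≤ r ^ n := by
    have hr1 : |1 / r| < 1 := by
      rw [abs_of_pos (by positivity), div_lt_one (by linarith)]; exact hr
    have t1 := tendsto_pow_const_mul_const_pow_of_abs_lt_one 1 hr1
    have t0 := tendsto_pow_const_mul_const_pow_of_abs_lt_one 0 hr1
    have t2 := (t1.const_mul (64 * d)).add (t0.const_mul 64)
    simp only [mul_zero, add_zero] at t2
    obtain ⟨n, hn⟩ := (t2.eventually (gt_mem_nhds (show (0:ℝ) < 1 by norm_num))).exists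
    refine ⟨n, ?_⟩
    have hrn : 0 < r ^ n := by positivity
    have : 64 * (n * d + 1) / r ^ n < 1 := by
      refine lt_of_eq_of_lt ?_ hn
      rw [one_div, inv_pow]; field_simp
    rw [div_lt_one hrn] at this
    exact this.le
  obtain ⟨y0, hy0⟩ : ∃ y, y = a + n * d := ⟨_, rfl⟩
  have hnd : 0 ≤ n * d := by positivity
  obtain ⟨L, hL⟩ : ∃ L, L = y0 + 1 - a := ⟨_, rfl⟩
  have hL1 : 1 ≤ L := by linarith
  have key : ∀ k : ℕ, 64 * L * (2 ^ k) ^ 2 * f a ≤ f (y0 + 1 - 1 / 2 ^ k) := by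
    intro k
    induction k with
    | zero =>
      have h1 := hgrow n
      rw [← hy0] at h1
      have h2 : 64 * L ≤ r ^ n := by rw [hL, hy0]; convert hn using 1; ring
      simp
      nlinarith
    | succ k ih =>
      have hu : (1:ℝ) ≤ 2 ^ k := one_le_pow₀ (by norm_num)
      rw [pow_succ (2:ℝ) k]
      obtain ⟨u, huu⟩ : ∃ u : ℝ, u = 2 ^ k := ⟨_, rfl⟩
      rw [← huu] at ih hu ⊢
      have hu0 : 0 < u := by linarith
      have hu1 : 1 / u ≤ 1 := by rw [div_le_one hu0]; exact hu
      have hiu : 0 < 1 / (u * 2) := by positivity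
      have hsum : y0 + 1 - 1 / u + 1 / (u * 2) = y0 + 1 - 1 / (u * 2) := by field_simp; ring
      have hst := scalar_step hf' H (a := a) (q := y0 + 1 - 1 / u) (δ := 1 / (u * 2)) (L := L) ha
        (by linarith) hiu (by rw [hsum]; linarith)
      rw [hsum] at hst
      by_contra! hcon
      have h1 : (1 / (u * 2)) ^ 2 * (64 * L * u ^ 2 * f a) ^ 2 ≤ 
          (1 / (u * 2)) ^ 2 * f (y0 + 1 - 1 / u) ^ 2 := by gcongr
      have h2 : f a * (L ^ 2 * f a + 4 * L * (1 / (u * 2)) * f (y0 + 1 - 1 / (u * 2))) ≤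
         f a * (L ^ 2 * f a + 4 * L * (1 / (u * 2)) * (64 * L * (u * 2) ^ 2 * f a)) := by gcongr
      have h3 := h1.trans (hst.trans h2)
      have e1 : (1 / (u * 2)) ^ 2 * (64 * L * u ^ 2 * f a) ^ 2 = (L * f a) ^ 2 * (1024 * u ^ 2) := by
        field_simp; ring
      have e2 : f a * (L ^ 2 * f a + 4 * L * (1 / (u * 2)) * (64 * L * (u * 2) ^ 2 * f a)) =
         (L * f a) ^ 2 * (1 + 512 * u) := by field_simp; ring
      rw [e1, e2] at h3
      have h4 := le_of_mul_le_mul_left h3 (by positivity)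
      nlinarith
  have hcomp : IsCompact (Set.Icc y0 (y0 + 1)) := isCompact_Icc
  obtain ⟨C, hC⟩ := (hcomp.image_of_continuousOn (hc.mono (fun z hz => by
    simp only [Set.mem_Ioi]; linarith [hz.1]))).bddAbove
  obtain ⟨k, hk⟩ := pow_unbounded_of_one_lt (C / f a) (show (1:ℝ) < 2 by norm_num)
  have hu : (1:ℝ) ≤ 2 ^ k := one_le_pow₀ (by norm_num)
  have h1 : f (y0 + 1 - 1 / 2 ^ k) ≤ C := by
    apply hC
    refine ⟨_, ⟨?_, ?_⟩, rfl⟩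
    · have : (1:ℝ) / 2 ^ k ≤ 1 := by rw [div_le_one (by positivity)]; exact hu
      linarith
    · have : 0 < (1:ℝ) / 2 ^ k := by positivity
      linarith
  have h2 := (key k).trans h1
  rw [div_lt_iff₀ fa] at hk
  have h3 : 2 ^ k * f a ≤ 64 * L * (2 ^ k) ^ 2 * f a := by
    gcongr
    nlinarith
  linarith

lemma exists_lower {m : Type*} [Fintype m] [DecidableEq m] {A : Matrix m m ℂ} (hA : A.PosDef) :
    ∃ l : ℝ, 0 < l ∧ l • (1 : Matrix m m ℂ) ≤ A := by
  have hs : IsSelfAdjoint A := hA.1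
  have : ∃ l : ℝ, 0 < l ∧ ∀ x ∈ spectrum ℝ A, l ≤ x := by
    rcases (spectrum ℝ A).eq_empty_or_nonempty with h | h
    · exact ⟨1, one_pos, by simp [h]⟩
    · obtain ⟨l, hl, hl2⟩ := Set.exists_min_image _ id A.finite_real_spectrum h
      exact ⟨l, spec_pos hA l hl, hl2⟩
  obtain ⟨l, hl, hl2⟩ := this
  refine ⟨l, hl, ?_⟩
  rw [← Algebra.algebraMap_eq_smul_one]
  exact algebraMap_le_of_le_spectrum hl2 hs

lemma bwd {f : ℝ → ℝ} (hc : ContinuousOn f (Set.Ioi 0)) 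
    (hf' : ∀ x ∈ Set.Ioi (0:ℝ), f x ∈ Set.Ioi (0:ℝ))
    (H : ∀ (n : ℕ) (A B : Matrix (Fin n) (Fin n) ℂ), A.PosDef → B.PosDef →
        MLE (cfc f ((2⁻¹ : ℝ) • (A + B))) (wgeom 2⁻¹ (cfc f A) (cfc f B))) :
    OperatorAntitone f := by
  intro n A B hA hB hAB
  unfold MLE at hAB ⊢
  have hherm := (cfc_herm f A).sub (cfc_herm f B)
  refine .of_dotProduct_mulVec_nonneg hherm fun v => ?_
  rw [Complex.nonneg_iff]
  refine ⟨?_, (hherm.im_star_dotProduct_mulVec_self v).symm⟩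
  rcases eq_or_ne v 0 with rfl | hv
  · simp
  obtain ⟨l, hl, hlA⟩ := exists_lower hA
  have hp : ∀ k : ℕ, (A + (k : ℝ) • (B - A)).PosDef := fun k => 
    hA.add_posSemidef (hAB.smul (Nat.cast_nonneg k))
  have hb := seq_bdd (fun k : ℕ => (star v ⬝ᵥ cfc f (A + (k : ℝ) • (B - A)) *ᵥ v).re) (by
      intro k
      exact (posDef_cfc f (hp k).1 fun x hx => hf' x (spec_pos (hp k) x hx)).re_dotProduct_pos hv) (by
      intro k
      have := q_ineq hf' H (hp k) (hp (k+2)) v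
      have e : (2⁻¹ : ℝ) • ((A + (k : ℝ) • (B - A)) + (A + ((k + 2 : ℕ) : ℝ) • (B - A))) = 
          A + ((k + 1 : ℕ) : ℝ) • (B - A) := by
        push_cast; module
      rw [e] at this
      exact this) ((star v ⬝ᵥ (f l • (1 : Matrix (Fin n) (Fin n) ℂ)) *ᵥ v).re) (by
      intro k
      have hs : IsSelfAdjoint (A + (k : ℝ) • (B - A)) := (hp k).1
      have h1 : l • (1 : Matrix (Fin n) (Fin n) ℂ) ≤ A + (k : ℝ) • (B - A) := 
        hlA.trans (by rw [Matrix.le_iff]; simpa using hAB.smul (Nat.cast_nonneg (α := ℝ) k))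
      rw [← Algebra.algebraMap_eq_smul_one, algebraMap_le_iff_le_spectrum hs] at h1
      have h2 : cfc f (A + (k : ℝ) • (B - A)) ≤ algebraMap ℝ _ (f l) := by
        refine cfc_le_algebraMap f (f l) _ (fun x hx => ?_) (contS _ _) hs
        rcases (h1 x hx).eq_or_lt with h | h
        · rw [h]
        · exact scalar_anti hc hf' H hl h
      rw [Algebra.algebraMap_eq_smul_one] at h2
      have h3 := (Matrix.le_iff.1 h2).re_dotProduct_nonneg v
      rw [sub_mulVec, dotProduct_sub, map_sub] at h3
      exact sub_nonneg.1 h3)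
  simp only [Nat.cast_one, Nat.cast_zero, one_smul, zero_smul, add_zero, add_sub_cancel] at hb
  rw [sub_mulVec, dotProduct_sub, Complex.sub_re]
  linarith
end aux5


theorem stmt_8 (f : ℝ → ℝ) (hf : ContinuousOn f (Set.Ioi 0))
    (hf' : ∀ x ∈ Set.Ioi (0:ℝ), f x ∈ Set.Ioi (0:ℝ)) :
    OperatorAntitone f ↔
      ∀ (n : ℕ) (A B : Matrix (Fin n) (Fin n) ℂ), A.PosDef → B.PosDef →
        MLE (cfc f ((2⁻¹ : ℝ) • (A + B))) (wgeom 2⁻¹ (cfc f A) (cfc f B)) := by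
  constructor
  · intro h n A B hA hB
    exact fwd hf hf' h hA hB
  · intro H
    exact bwd hf hf' H
end

section
/- A continuous function f : (0,∞) → (0,∞) is operator monotone decreasing if and only if f(A ! B) ≥ f(A) # f(B) for every n ∈ ℕ and all n×n positive definite complex matrices A, B. -/
open Matrix
open scoped ComplexOrder

set_option linter.unusedSectionVars false
section helpers
open scoped MatrixOrder Matrix.Norms.L2Operator
open Polynomial

variable {ι : Type*} [Fintype ι] [DecidableEq ι] {A B : Matrix ι ι ℂ}

lemma aux_cont (f : ℝ → ℝ) (A : Matrix ι ι ℂ) : ContinuousOn f (spectrum ℝ A) :=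
  A.finite_real_spectrum.continuousOn f

lemma aux_cont' (f g : ℝ → ℝ) (A : Matrix ι ι ℂ) : ContinuousOn f (g '' spectrum ℝ A) :=
  (A.finite_real_spectrum.image g).continuousOn f

lemma aux_spec (hA : A.PosDef) {x : ℝ} (hx : x ∈ spectrum ℝ A) : 0 < x :=
  hA.isStrictlyPositive.spectrum_pos hx

lemma aux_cfc_congr (hA : A.PosDef) {f g : ℝ → ℝ} (h : ∀ x, 0 < x → f x = g x) :
    cfc f A = cfc g A :=
  cfc_congr fun x hx => h x (aux_spec hA hx)

lemma aux_cfc_mono (hA : A.PosDef) {f g : ℝ → ℝ} (h : ∀ x, 0 < x → f x ≤ g x) :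
    cfc f A ≤ cfc g A :=
  cfc_mono (fun x hx => h x (aux_spec hA hx)) (aux_cont _ _) (aux_cont _ _)

lemma aux_posDef_cfc (hA : A.PosDef) {f : ℝ → ℝ} (h : ∀ x, 0 < x → 0 < f x) :
    (cfc f A).PosDef := by
  rw [← Matrix.isStrictlyPositive_iff_posDef]
  exact (cfc_isStrictlyPositive_iff f A (aux_cont _ _) hA.isHermitian.isSelfAdjoint).2
    fun x hx => h x (aux_spec hA hx)

lemma aux_cfc_mul (f g : ℝ → ℝ) (A : Matrix ι ι ℂ) :
    cfc f A * cfc g A = cfc (fun x => f x * g x) A :=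
  (cfc_mul f g A (aux_cont _ _) (aux_cont _ _)).symm

lemma aux_cfc_inv (hA : A.PosDef) {f : ℝ → ℝ} (h : ∀ x, 0 < x → 0 < f x) :
    (cfc f A)⁻¹ = cfc (fun x => (f x)⁻¹) A := by
  apply Matrix.inv_eq_right_inv
  rw [aux_cfc_mul, aux_cfc_congr hA (g := fun _ => 1)]
  · exact cfc_const_one ℝ A hA.isHermitian.isSelfAdjoint
  · intro x hx; exact mul_inv_cancel₀ (h x hx).ne'

lemma aux_inv_eq (hA : A.PosDef) : A⁻¹ = cfc (fun x : ℝ => x⁻¹) A := by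
  have := aux_cfc_inv hA (f := fun x => x) (fun x hx => hx)
  rwa [cfc_id' ℝ A hA.isHermitian.isSelfAdjoint] at this

lemma aux_cfc_inv_arg (hA : A.PosDef) (f : ℝ → ℝ) :
    cfc f A⁻¹ = cfc (fun x => f x⁻¹) A := by
  rw [aux_inv_eq hA]
  exact (cfc_comp' f (fun x : ℝ => x⁻¹) A (aux_cont' _ _ _) (aux_cont _ _)
    hA.isHermitian.isSelfAdjoint).symm

lemma aux_inv_inv (hA : A.PosDef) : A⁻¹⁻¹ = A :=
  Matrix.nonsing_inv_nonsing_inv A ((Matrix.isUnit_iff_isUnit_det _).1 hA.isUnit)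

lemma aux_inv_anti (hA : A.PosDef) (h : A ≤ B) : B⁻¹ ≤ A⁻¹ := by
  have := CStarAlgebra.ringInverse_le_ringInverse h hA.isStrictlyPositive
  rwa [← Matrix.nonsing_inv_eq_ringInverse, ← Matrix.nonsing_inv_eq_ringInverse] at this

lemma aux_posDef_of_le (hA : A.PosDef) (h : A ≤ B) : B.PosDef := by
  have := hA.add_posSemidef (Matrix.le_iff.1 h)
  simpa using this

lemma aux_smul_posDef (hA : A.PosDef) {r : ℝ} (hr : 0 < r) : (r • A).PosDef := by
  simpa using hA.smul hr

lemma aux_conj_le {S X Y : Matrix ι ι ℂ} (hS : S.IsHermitian) (h : X ≤ Y) :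
    S * X * S ≤ S * Y * S := by
  have := star_left_conjugate_le_conjugate h S
  rwa [star_eq_conjTranspose, hS.eq] at this

lemma aux_interp (s : Set ℝ) (hs : s.Finite) (f : ℝ → ℝ) :
    ∃ p : ℝ[X], ∀ x ∈ s, p.eval x = f x := by
  classical
  refine ⟨Lagrange.interpolate hs.toFinset id f, fun x hx => ?_⟩
  exact Lagrange.eval_interpolate_at_node f (v := id) (by simp [Set.InjOn]) (by simpa using hx)

lemma aux_cfc_aeval (hA : A.IsHermitian) {f : ℝ → ℝ} {p : ℝ[X]}
    (h : ∀ x ∈ spectrum ℝ A, p.eval x = f x) : cfc f A = aeval A p := by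
  rw [← cfc_polynomial p A hA.isSelfAdjoint]
  exact cfc_congr fun x hx => (h x hx).symm

end helpers

section geom
open scoped MatrixOrder Matrix.Norms.L2Operator
variable {n : ℕ} {A B P Q : Matrix (Fin n) (Fin n) ℂ}

lemma aux_mpow_posDef (hA : A.PosDef) (r : ℝ) : (mpow A r).PosDef :=
  aux_posDef_cfc hA fun _ hx => Real.rpow_pos_of_pos hx r

lemma aux_mpow_mul (hA : A.PosDef) (r s : ℝ) : mpow A r * mpow A s = mpow A (r + s) := by
  unfold mpow
  rw [aux_cfc_mul]
  exact aux_cfc_congr hA fun x hx => (Real.rpow_add hx r s).symm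

lemma aux_mpow_zero (hA : A.PosDef) : mpow A 0 = 1 := by
  unfold mpow
  simpa using cfc_const_one ℝ A hA.isHermitian.isSelfAdjoint

lemma aux_mpow_one (hA : A.PosDef) : mpow A 1 = A := by
  unfold mpow
  simpa using cfc_id' ℝ A hA.isHermitian.isSelfAdjoint

lemma aux_mpow_inv (hA : A.PosDef) (r : ℝ) : (mpow A r)⁻¹ = mpow A (-r) := by
  apply Matrix.inv_eq_right_inv
  rw [aux_mpow_mul hA, add_neg_cancel, aux_mpow_zero hA]

lemma aux_conj_posDef {S X : Matrix (Fin n) (Fin n) ℂ} (hS : S.PosDef) (hX : X.PosDef) :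
    (S * X * S).PosDef := by
  have := (Matrix.IsUnit.posDef_star_left_conjugate_iff (x := X) hS.isUnit).2 hX
  rwa [star_eq_conjTranspose, hS.isHermitian.eq] at this

lemma aux_sqrt_le (hA : A.PosDef) : mpow A 2⁻¹ ≤ (2⁻¹:ℝ) • (1 + A) := by
  have h : (2⁻¹:ℝ) • (1 + A) = cfc (fun x : ℝ => 2⁻¹ * (1 + x)) A := by
    have hs := hA.isHermitian.isSelfAdjoint
    rw [cfc_const_mul _ _ _ (aux_cont _ _), cfc_const_add _ _ _ (aux_cont _ _) hs, cfc_id' ℝ A hs,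
      map_one]
  rw [h]
  refine aux_cfc_mono hA fun x hx => ?_
  have := Real.sq_sqrt hx.le
  rw [← one_div, ← Real.sqrt_eq_rpow]
  nlinarith [sq_nonneg (Real.sqrt x - 1)]

lemma aux_C_posDef (hP : P.PosDef) (hQ : Q.PosDef) :
    (mpow P (-(1/2)) * Q * mpow P (-(1/2))).PosDef :=
  aux_conj_posDef (aux_mpow_posDef hP _) hQ

lemma aux_geom_posDef (hP : P.PosDef) (hQ : Q.PosDef) : (wgeom 2⁻¹ P Q).PosDef :=
  aux_conj_posDef (aux_mpow_posDef hP _) (aux_mpow_posDef (aux_C_posDef hP hQ) _)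

lemma aux_geom_le (hP : P.PosDef) (hQ : Q.PosDef) :
    wgeom 2⁻¹ P Q ≤ (2⁻¹:ℝ) • (P + Q) := by
  have h1 := aux_conj_le (aux_mpow_posDef hP (1/2)).isHermitian (aux_sqrt_le (aux_C_posDef hP hQ))
  refine h1.trans (le_of_eq ?_)
  have e1 : mpow P (1/2) * mpow P (1/2) = P := by
    rw [aux_mpow_mul hP]; norm_num; exact aux_mpow_one hP
  have e2 : mpow P (1/2) * mpow P (-(1/2)) = 1 := by
    rw [aux_mpow_mul hP, add_neg_cancel, aux_mpow_zero hP]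
  have e3 : mpow P (-(1/2)) * mpow P (1/2) = 1 := by
    rw [aux_mpow_mul hP, neg_add_cancel, aux_mpow_zero hP]
  rw [mul_smul_comm, smul_mul_assoc, mul_add, add_mul, mul_one, e1]
  congr 2
  calc _ = (mpow P (1/2) * mpow P (-(1/2))) * Q * (mpow P (-(1/2)) * mpow P (1/2)) := by
        simp only [mul_assoc]
    _ = Q := by rw [e2, e3, one_mul, mul_one]

lemma aux_geom_inv (hP : P.PosDef) (hQ : Q.PosDef) :
    (wgeom 2⁻¹ P Q)⁻¹ = wgeom 2⁻¹ P⁻¹ Q⁻¹ := by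
  have hC := aux_C_posDef hP hQ
  have k : ∀ r : ℝ, mpow P⁻¹ r = mpow P (-r) := by
    intro r
    unfold mpow
    rw [aux_cfc_inv_arg hP]
    exact aux_cfc_congr hP fun x hx => by rw [Real.inv_rpow hx.le, Real.rpow_neg hx.le]
  have k' : ∀ r : ℝ, mpow (mpow P (-(1/2)) * Q * mpow P (-(1/2)))⁻¹ r =
      mpow (mpow P (-(1/2)) * Q * mpow P (-(1/2))) (-r) := by
    intro r
    unfold mpow
    unfold mpow at hC
    rw [aux_cfc_inv_arg hC]
    exact aux_cfc_congr hC fun x hx => by rw [Real.inv_rpow hx.le, Real.rpow_neg hx.le]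
  unfold wgeom
  rw [Matrix.mul_inv_rev, Matrix.mul_inv_rev, aux_mpow_inv hP, aux_mpow_inv hC, ← k', k, k,
    Matrix.mul_inv_rev, Matrix.mul_inv_rev, aux_mpow_inv hP]
  simp only [mul_assoc]

lemma aux_geom_inv_le (hP : P.PosDef) (hQ : Q.PosDef) :
    (wgeom 2⁻¹ P Q)⁻¹ ≤ (2⁻¹:ℝ) • (P⁻¹ + Q⁻¹) := by
  rw [aux_geom_inv hP hQ]
  exact aux_geom_le hP.inv hQ.inv

end geom

section concave
open scoped MatrixOrder Matrix.Norms.L2Operator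
open Polynomial

lemma aux_arch {ι : Type*} [Fintype ι] [DecidableEq ι] {S T R : Matrix ι ι ℂ}
    (h : ∀ δ : ℝ, 0 < δ → S ≤ T + δ • R) : S ≤ T := by
  have h1 : Filter.Tendsto (fun δ : ℝ => T + δ • R) (nhdsWithin 0 (Set.Ioi 0)) (nhds T) := by
    have : Continuous (fun δ : ℝ => T + δ • R) := by fun_prop
    have h2 := (this.tendsto 0).mono_left (nhdsWithin_le_nhds (s := Set.Ioi 0))
    simpa using h2
  exact ge_of_tendsto h1 (eventually_mem_nhdsWithin.mono fun δ hδ => h δ hδ)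

lemma aux_cfc_hom {ι κ : Type*} [Fintype ι] [DecidableEq ι] [Fintype κ] [DecidableEq κ]
    (φ : (Matrix ι ι ℂ × Matrix ι ι ℂ) →ₐ[ℝ] Matrix κ κ ℂ) {A B : Matrix ι ι ℂ}
    (hA : A.IsHermitian) (hB : B.IsHermitian) (h : (φ (A, B)).IsHermitian) (f : ℝ → ℝ) :
    cfc f (φ (A, B)) = φ (cfc f A, cfc f B) := by
  obtain ⟨p, hp⟩ := aux_interp (spectrum ℝ A ∪ spectrum ℝ B ∪ spectrum ℝ (φ (A, B)))
    ((A.finite_real_spectrum.union B.finite_real_spectrum).union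
      (φ (A, B)).finite_real_spectrum) f
  rw [aux_cfc_aeval hA (p := p) (fun x hx => hp x (Or.inl (Or.inl hx))),
    aux_cfc_aeval hB (p := p) (fun x hx => hp x (Or.inl (Or.inr hx))),
    aux_cfc_aeval h (p := p) (fun x hx => hp x (Or.inr hx)), aeval_algHom_apply]
  congr 1
  have h1 := aeval_algHom_apply (AlgHom.fst ℝ (Matrix ι ι ℂ) (Matrix ι ι ℂ)) (A, B) p
  have h2 := aeval_algHom_apply (AlgHom.snd ℝ (Matrix ι ι ℂ) (Matrix ι ι ℂ)) (A, B) p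
  exact Prod.ext h1.symm h2.symm

lemma aux_cfc_reindex {ι κ : Type*} [Fintype ι] [DecidableEq ι] [Fintype κ] [DecidableEq κ]
    (e : κ ≃ ι) {A : Matrix ι ι ℂ} (hA : A.IsHermitian) (f : ℝ → ℝ) :
    cfc f (A.submatrix e e) = (cfc f A).submatrix e e := by
  have := aux_cfc_hom ((Matrix.reindexAlgEquiv ℝ ℂ e.symm).toAlgHom.comp
    (AlgHom.fst ℝ (Matrix ι ι ℂ) (Matrix ι ι ℂ))) hA hA (by simpa using hA.submatrix e) f
  simpa using this

/-- block diagonal -/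
noncomputable def auxPhi1 (n : ℕ) : (Matrix (Fin n) (Fin n) ℂ × Matrix (Fin n) (Fin n) ℂ) →ₐ[ℝ]
    Matrix (Fin n ⊕ Fin n) (Fin n ⊕ Fin n) ℂ :=
  AlgHom.ofLinearMap
    { toFun := fun p => Matrix.fromBlocks p.1 0 0 p.2
      map_add' := fun p q => by simp [Matrix.fromBlocks_add]
      map_smul' := fun r p => by simp [Matrix.fromBlocks_smul] }
    (by simp) (fun p q => by simp [Matrix.fromBlocks_multiply])

/-- rotated block diagonal -/
noncomputable def auxPhi2 (n : ℕ) : (Matrix (Fin n) (Fin n) ℂ × Matrix (Fin n) (Fin n) ℂ) →ₐ[ℝ]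
    Matrix (Fin n ⊕ Fin n) (Fin n ⊕ Fin n) ℂ :=
  AlgHom.ofLinearMap
    { toFun := fun p => (2⁻¹:ℝ) • Matrix.fromBlocks (p.1 + p.2) (p.1 - p.2) (p.1 - p.2) (p.1 + p.2)
      map_add' := fun p q => by
        rw [← smul_add, Matrix.fromBlocks_add]
        simp only [Prod.fst_add, Prod.snd_add]
        congr 2 <;> abel
      map_smul' := fun r p => by
        simp only [Prod.smul_fst, Prod.smul_snd, RingHom.id_apply]
        rw [smul_comm r, Matrix.fromBlocks_smul r]
        simp only [smul_add, smul_sub] }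
    (by
      simp only [LinearMap.coe_mk, AddHom.coe_mk, Prod.fst_one, Prod.snd_one, sub_self,
        Matrix.fromBlocks_smul, smul_zero, ← two_smul ℝ (1 : Matrix (Fin n) (Fin n) ℂ), smul_smul]
      norm_num)
    (fun p q => by
      simp only [LinearMap.coe_mk, AddHom.coe_mk, Prod.fst_mul, Prod.snd_mul, smul_mul_assoc,
        mul_smul_comm, Matrix.fromBlocks_multiply]
      congr 1
      rw [Matrix.fromBlocks_smul]
      congr 1 <;> · simp only [mul_add, add_mul, mul_sub, sub_mul]; module)

lemma auxPhi1_apply {n : ℕ} (A B : Matrix (Fin n) (Fin n) ℂ) :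
    auxPhi1 n (A, B) = Matrix.fromBlocks A 0 0 B := rfl

lemma auxPhi2_apply {n : ℕ} (A B : Matrix (Fin n) (Fin n) ℂ) :
    auxPhi2 n (A, B) = (2⁻¹:ℝ) • Matrix.fromBlocks (A + B) (A - B) (A - B) (A + B) := rfl

lemma aux_fromBlocks_sub {n : ℕ} (A B C D A' B' C' D' : Matrix (Fin n) (Fin n) ℂ) :
    Matrix.fromBlocks A B C D - Matrix.fromBlocks A' B' C' D' =
      Matrix.fromBlocks (A - A') (B - B') (C - C') (D - D') := by
  simp only [sub_eq_add_neg, Matrix.fromBlocks_neg, Matrix.fromBlocks_add]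

lemma aux_herm_le {ι : Type*} [Fintype ι] [DecidableEq ι] {A : Matrix ι ι ℂ}
    (hA : A.IsHermitian) : ∃ r : ℝ, 0 < r ∧ A ≤ algebraMap ℝ _ r := by
  refine ⟨‖A‖ + 1, by positivity, ?_⟩
  refine (IsSelfAdjoint.le_algebraMap_norm_self (a := A) hA.isSelfAdjoint).trans ?_
  exact algebraMap_mono _ (by simp)

lemma aux_phi1_posDef {n : ℕ} {A B : Matrix (Fin n) (Fin n) ℂ} (hA : A.PosDef) (hB : B.PosDef) :
    (auxPhi1 n (A, B)).PosDef := by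
  rw [auxPhi1_apply]
  have hi : Invertible A := hA.isUnit.invertible
  have h1 : (Matrix.fromBlocks A 0 0ᴴ B).PosSemidef :=
    (Matrix.PosDef.fromBlocks₁₁ 0 B hA).2 (by simpa using hB.posSemidef)
  rw [Matrix.conjTranspose_zero] at h1
  refine h1.posDef_iff_isUnit.2 ?_
  rw [Matrix.isUnit_iff_isUnit_det, Matrix.det_fromBlocks_zero₂₁]
  exact ((Matrix.isUnit_iff_isUnit_det _).1 hA.isUnit).mul
    ((Matrix.isUnit_iff_isUnit_det _).1 hB.isUnit)

lemma aux_block_le {n : ℕ} {A B : Matrix (Fin n) (Fin n) ℂ} (hA : A.IsHermitian)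
    (hB : B.IsHermitian) {ε : ℝ} (hε : 0 < ε) {L : Matrix (Fin n) (Fin n) ℂ}
    (hL : (2⁻¹:ℝ) • (A + B) + ε⁻¹ • (((2⁻¹:ℝ) • (A - B)) * ((2⁻¹:ℝ) • (A - B))) ≤ L) :
    auxPhi1 n (A, B) ≤ auxPhi2 n ((2⁻¹:ℝ) • (A + B) + ε • 1, L) := by
  set N := (2⁻¹:ℝ) • (A - B) with hN
  have hNh : Nᴴ = N := by
    rw [hN, Matrix.conjTranspose_smul, Matrix.conjTranspose_sub, hA.eq, hB.eq]; simp
  set M := (2⁻¹:ℝ) • (A + B) with hM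
  have eA : A = M + N := by rw [hM, hN]; module
  have eB : B = M - N := by rw [hM, hN]; module
  set R := L - (M + ε⁻¹ • (N * N)) with hR
  have hRp : R.PosSemidef := Matrix.le_iff.1 hL
  have eL : L = R + (M + ε⁻¹ • (N * N)) := by rw [hR]; abel
  let K : Matrix (Fin n) (Fin n ⊕ Fin n) ℂ := Matrix.fromCols (ε • 1 - N) (ε • 1 + N)
  let J : Matrix (Fin n) (Fin n ⊕ Fin n) ℂ := Matrix.fromCols 1 (-1)
  have hK : (Kᴴ * K).PosSemidef := Matrix.posSemidef_conjTranspose_mul_self K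
  have hJ : (Jᴴ * R * J).PosSemidef := hRp.conjTranspose_mul_mul_same J
  have hK2 : ((2⁻¹ * ε⁻¹ : ℝ) • (Kᴴ * K)).PosSemidef := by
    have : (0:ℝ) ≤ 2⁻¹ * ε⁻¹ := by positivity
    exact hK.smul this
  have hJ2 : ((2⁻¹ : ℝ) • (Jᴴ * R * J)).PosSemidef := by
    have : (0:ℝ) ≤ 2⁻¹ := by positivity
    exact hJ.smul this
  rw [Matrix.le_iff]
  have eK : Kᴴ = Matrix.fromRows (ε • 1 - N) (ε • 1 + N) := by
    simp [K, Matrix.conjTranspose_fromCols_eq_fromRows_conjTranspose, hNh]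
  have eJ : Jᴴ = Matrix.fromRows 1 (-1) := by
    simp [J, Matrix.conjTranspose_fromCols_eq_fromRows_conjTranspose]
  suffices e : auxPhi2 n (M + ε • 1, L) - auxPhi1 n (A, B) =
      (2⁻¹ * ε⁻¹ : ℝ) • (Kᴴ * K) + (2⁻¹ : ℝ) • (Jᴴ * R * J) by
    rw [e]; exact hK2.add hJ2
  have fK : Kᴴ * K = Matrix.fromBlocks ((ε • 1 - N) * (ε • 1 - N)) ((ε • 1 - N) * (ε • 1 + N))
      ((ε • 1 + N) * (ε • 1 - N)) ((ε • 1 + N) * (ε • 1 + N)) := by rw [eK]; exact Matrix.fromRows_mul_fromCols _ _ _ _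
  have fJ : Jᴴ * R * J = Matrix.fromBlocks (1 * R * 1) (1 * R * -1) (-1 * R * 1)
      (-1 * R * -1) := by
    rw [eJ, Matrix.fromRows_mul]; exact Matrix.fromRows_mul_fromCols _ _ _ _
  rw [fK, fJ, auxPhi1_apply, auxPhi2_apply, Matrix.fromBlocks_smul, Matrix.fromBlocks_smul,
    Matrix.fromBlocks_smul, Matrix.fromBlocks_add, aux_fromBlocks_sub, eL, eA, eB]
  have hε' : ε ≠ 0 := hε.ne'
  congr 1 <;> simp only [mul_add, add_mul, mul_sub, sub_mul, one_mul, mul_one, smul_mul_assoc, mul_smul_comm, mul_neg, neg_mul, smul_add, smul_sub, smul_smul] <;> match_scalars <;> field_simp <;> ring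

lemma aux_mono_sum {g : ℝ → ℝ} (hg : OperatorMonotone g) {n : ℕ}
    {X Y : Matrix (Fin n ⊕ Fin n) (Fin n ⊕ Fin n) ℂ} (hX : X.PosDef) (hY : Y.PosDef)
    (h : X ≤ Y) : cfc g X ≤ cfc g Y := by
  let e : Fin (n + n) ≃ Fin n ⊕ Fin n := finSumFinEquiv.symm
  have := hg (n + n) (X.submatrix e e) (Y.submatrix e e) (hX.submatrix e.injective)
    (hY.submatrix e.injective) (by
      unfold MLE
      have := (Matrix.le_iff.1 h).submatrix e
      rwa [Matrix.submatrix_sub] at this)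
  unfold MLE at this
  rw [aux_cfc_reindex e hX.isHermitian, aux_cfc_reindex e hY.isHermitian] at this
  rw [Matrix.le_iff, ← Matrix.posSemidef_submatrix_equiv e, Matrix.submatrix_sub]
  exact this

lemma aux_concave_eps {g : ℝ → ℝ} (hg : OperatorMonotone g) {n : ℕ}
    {A B : Matrix (Fin n) (Fin n) ℂ} (hA : A.PosDef) (hB : B.PosDef) {ε : ℝ} (hε : 0 < ε) :
    (2⁻¹:ℝ) • (cfc g A + cfc g B) ≤ cfc g ((2⁻¹:ℝ) • (A + B) + ε • 1) := by
  have hM : ((2⁻¹:ℝ) • (A + B)).PosDef := aux_smul_posDef (hA.add hB) (by norm_num)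
  have hM' : ((2⁻¹:ℝ) • (A + B) + ε • 1).PosDef :=
    hM.add (aux_smul_posDef Matrix.PosDef.one hε)
  have hNh : ((2⁻¹:ℝ) • (A - B))ᴴ = (2⁻¹:ℝ) • (A - B) := by
    rw [Matrix.conjTranspose_smul, Matrix.conjTranspose_sub, hA.isHermitian.eq,
      hB.isHermitian.eq]; simp
  obtain ⟨r, hr0, hr⟩ := aux_herm_le (A := (2⁻¹:ℝ) • (A + B) + ε⁻¹ •
      (((2⁻¹:ℝ) • (A - B)) * ((2⁻¹:ℝ) • (A - B)))) (by
    unfold Matrix.IsHermitian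
    rw [Matrix.conjTranspose_add, hM.isHermitian.eq, Matrix.conjTranspose_smul,
      Matrix.conjTranspose_mul, hNh]; simp)
  have hL : (algebraMap ℝ (Matrix (Fin n) (Fin n) ℂ) r).PosDef := by
    rw [Algebra.algebraMap_eq_smul_one]; exact aux_smul_posDef Matrix.PosDef.one hr0
  have h1 := aux_block_le hA.isHermitian hB.isHermitian hε hr
  have hp1 := aux_phi1_posDef hA hB
  have hp2 := aux_posDef_of_le hp1 h1
  have h2 := aux_mono_sum hg hp1 hp2 h1
  rw [aux_cfc_hom _ hA.isHermitian hB.isHermitian hp1.isHermitian,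
    aux_cfc_hom _ hM'.isHermitian hL.isHermitian hp2.isHermitian, auxPhi1_apply, auxPhi2_apply,
    Matrix.le_iff] at h2
  have h3 := h2.conjTranspose_mul_mul_same (Matrix.fromRows 1 1 : Matrix (Fin n ⊕ Fin n) (Fin n) ℂ)
  have h4 := h3.smul (by norm_num : (0:ℝ) ≤ 2⁻¹)
  rw [Matrix.le_iff]
  refine Eq.subst (motive := Matrix.PosSemidef) ?_ h4
  rw [Matrix.conjTranspose_fromRows_eq_fromCols_conjTranspose, Matrix.fromBlocks_smul,
    aux_fromBlocks_sub, Matrix.fromCols_mul_fromBlocks, Matrix.fromCols_mul_fromRows]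
  simp only [Matrix.conjTranspose_one, one_mul, mul_one, sub_zero]
  module

lemma aux_concave {g : ℝ → ℝ} (hc : ContinuousOn g (Set.Ioi 0)) (hg : OperatorMonotone g) {n : ℕ}
    {A B : Matrix (Fin n) (Fin n) ℂ} (hA : A.PosDef) (hB : B.PosDef) :
    (2⁻¹:ℝ) • (cfc g A + cfc g B) ≤ cfc g ((2⁻¹:ℝ) • (A + B)) := by
  have hM : ((2⁻¹:ℝ) • (A + B)).PosDef := aux_smul_posDef (hA.add hB) (by norm_num)
  have key : ∀ ε : ℝ, 0 < ε → (2⁻¹:ℝ) • (cfc g A + cfc g B) ≤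
      cfc (fun x => g (x + ε)) ((2⁻¹:ℝ) • (A + B)) := by
    intro ε hε
    refine (aux_concave_eps hg hA hB hε).trans (le_of_eq ?_)
    have hs := hM.isHermitian.isSelfAdjoint
    rw [cfc_comp' g (fun x => x + ε) _ (aux_cont' _ _ _) (aux_cont _ _) hs,
      cfc_add_const _ _ _ (aux_cont _ _) hs, cfc_id' ℝ _ hs, Algebra.algebraMap_eq_smul_one]
  generalize (2⁻¹:ℝ) • (A + B) = M at *
  refine aux_arch (R := 1) fun δ hδ => ?_
  have hs := hM.isHermitian.isSelfAdjoint
  have ev : ∀ᶠ ε in nhdsWithin (0:ℝ) (Set.Ioi 0), ∀ x ∈ spectrum ℝ M, g (x + ε) ≤ g x + δ := by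
    rw [Filter.eventually_all_finite M.finite_real_spectrum]
    intro x hx
    have hx0 := aux_spec hM hx
    have h1 : ContinuousAt g (x + 0) := by
      rw [add_zero]; exact hc.continuousAt (Ioi_mem_nhds hx0)
    have h2 : ContinuousAt (fun ε => g (x + ε)) 0 :=
      ContinuousAt.comp (f := fun ε => x + ε) h1 (by fun_prop)
    have h3 := h2.tendsto.eventually_lt_const (u := g x + δ) (by simpa using hδ)
    exact (h3.filter_mono nhdsWithin_le_nhds).mono fun _ h => le_of_lt h
  obtain ⟨ε, hε, hε0⟩ := (ev.and eventually_mem_nhdsWithin).exists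
  refine (key ε hε0).trans ?_
  refine (cfc_mono hε (aux_cont _ _) (aux_cont _ _)).trans (le_of_eq ?_)
  rw [cfc_add_const _ _ _ (aux_cont _ _) hs, Algebra.algebraMap_eq_smul_one]

end concave

section converse
open scoped MatrixOrder Matrix.Norms.L2Operator
open Polynomial

/-- midpoint inequality -/
def AuxConv (h : ℝ → ℝ) : Prop :=
  ∀ (n : ℕ) (A B : Matrix (Fin n) (Fin n) ℂ), A.PosDef → B.PosDef →
    cfc h ((2⁻¹:ℝ) • (A + B)) ≤ (2⁻¹:ℝ) • (cfc h A + cfc h B)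

lemma aux_eigen {ι : Type*} [Fintype ι] [DecidableEq ι] {A : Matrix ι ι ℂ} (hA : A.IsHermitian)
    {w : ι → ℂ} {μ : ℝ} (hw : A *ᵥ w = (μ : ℂ) • w) (f : ℝ → ℝ) :
    cfc f A *ᵥ w = (f μ : ℂ) • w := by
  obtain ⟨p, hp⟩ := aux_interp (spectrum ℝ A ∪ {μ})
    (A.finite_real_spectrum.union (Set.finite_singleton μ)) f
  rw [aux_cfc_aeval hA (p := p) (fun x hx => hp x (Or.inl hx)), ← hp μ (Or.inr rfl)]
  clear hp
  induction p using Polynomial.induction_on' with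
  | add p q hp hq => simp [Matrix.add_mulVec, hp, hq, add_smul]
  | monomial k r =>
    have : ∀ k : ℕ, (A ^ k) *ᵥ w = ((μ : ℂ) ^ k) • w := by
      intro k
      induction k with
      | zero => simp
      | succ k ih => rw [pow_succ, ← Matrix.mulVec_mulVec, hw, Matrix.mulVec_smul, ih, smul_smul,
          pow_succ, mul_comm]
    rw [aeval_monomial, eval_monomial, Algebra.algebraMap_eq_smul_one, smul_mul_assoc, one_mul,
      Matrix.smul_mulVec, this]
    push_cast
    rw [← smul_smul]
    rfl

lemma aux_growth {h : ℝ → ℝ} (hpos : ∀ x, 0 < x → 0 < h x) (hc : AuxConv h) :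
    ∃ C : ℝ, ∀ μ : ℝ, 3 ≤ μ → h μ ≤ C * ((2 * μ - 3) ^ 2 + 1) := by
  let Y : Matrix (Fin 2) (Fin 2) ℂ := !![2, 1; 1, 2]
  have hY : Y.PosDef := by
    have h1 := Matrix.PosDef.one (n := Fin 2) (R := ℂ) |>.add_posSemidef
      (Matrix.posSemidef_vecMulVec_self_star (fun _ : Fin 2 => (1:ℂ)))
    have e : Y = 1 + Matrix.vecMulVec (fun _ : Fin 2 => (1:ℂ)) (star (fun _ : Fin 2 => (1:ℂ))) := by
      ext i j; fin_cases i <;> fin_cases j <;> simp [Y, Matrix.vecMulVec] <;> norm_num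
    rw [e]; exact h1
  refine ⟨2⁻¹ * (h 1 + (cfc h Y 1 1).re), fun μ hμ => ?_⟩
  set s : ℝ := (2 * μ - 3)⁻¹ with hs
  have hs0 : 0 < 2 * μ - 3 := by linarith
  have hsp : 0 < s := inv_pos.2 hs0
  have hs1 : s ≤ 1 := inv_le_one_of_one_le₀ (by linarith)
  have hsm : s * (2 * μ - 3) = 1 := inv_mul_cancel₀ hs0.ne'
  set x : ℝ := 2 * μ - 2 - s with hx
  have hx0 : 0 < x := by linarith
  let X : Matrix (Fin 2) (Fin 2) ℂ := Matrix.diagonal ![(x:ℂ), 1]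
  have hX : X.PosDef := by
    refine Matrix.PosDef.diagonal ?_
    intro i; fin_cases i <;> simp [hx0]
  have hZ : ((2⁻¹:ℝ) • (X + Y)).PosDef := aux_smul_posDef (hX.add hY) (by norm_num)
  have hin := hc 2 X Y hX hY
  have hKpd : (cfc h ((2⁻¹:ℝ) • (X + Y))).PosDef := aux_posDef_cfc hZ hpos
  have hw := aux_eigen hZ.isHermitian (w := ![1, (s:ℂ)]) (μ := μ) (by
    ext i
    fin_cases i
    · simp [X, Y, Matrix.mulVec, dotProduct, Fin.sum_univ_two, hx]
      ring
    · have : (s:ℂ) * (2 * μ - 3) = 1 := by exact_mod_cast hsm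
      simp [X, Y, Matrix.mulVec, dotProduct, Fin.sum_univ_two]
      linear_combination (-1/2 : ℂ) * this) h
  have hv := aux_eigen hX.isHermitian (w := ![0, 1]) (μ := 1) (by
    ext i
    fin_cases i <;> simp [X, Matrix.mulVec, dotProduct, Fin.sum_univ_two]) h
  have hv1 := congrFun hv 1
  simp [Matrix.mulVec, dotProduct, Fin.sum_univ_two] at hv1
  generalize cfc h ((2⁻¹:ℝ) • (X + Y)) = K at *
  have hw0 := congrFun hw 0
  have hw1 := congrFun hw 1
  simp [Matrix.mulVec, dotProduct, Fin.sum_univ_two] at hw0 hw1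
  have hdet := hKpd.posSemidef.det_nonneg
  rw [Matrix.det_fin_two] at hdet
  have hd := hKpd.posSemidef.diag_nonneg (i := 1)
  have hent := (Matrix.le_iff.1 hin).diag_nonneg (i := 1)
  simp [hv1] at hent
  obtain ⟨r, hr⟩ : ∃ r : ℝ, K 1 1 = r := ⟨(K 1 1).re, by
    apply Complex.ext
    · simp
    · simpa using (Complex.le_def.1 hd).2.symm⟩
  have hc1 : K 1 0 = ((h μ * s - r * s : ℝ) : ℂ) := by
    push_cast; rw [← hr]; linear_combination hw1
  have hb1 : K 0 1 = ((h μ * s - r * s : ℝ) : ℂ) := by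
    rw [← hKpd.isHermitian.apply 0 1, hc1]; simp
  have ha1 : K 0 0 = ((h μ - (h μ * s - r * s) * s : ℝ) : ℂ) := by
    push_cast at hb1 ⊢
    linear_combination hw0 - (s:ℂ) * hb1
  rw [ha1, hb1, hc1, hr] at hdet
  have hdet' : 0 ≤ (h μ - (h μ * s - r * s) * s) * r - (h μ * s - r * s) * (h μ * s - r * s) := by
    exact_mod_cast hdet
  have hent' : r ≤ 2⁻¹ * (h 1 + (cfc h Y 1 1).re) := by
    have := (Complex.le_def.1 hent).1
    simp [hr] at this
    linarith
  have hμp : 0 < h μ := hpos μ (by linarith)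
  have key : s ^ 2 * h μ ≤ r * (1 + s ^ 2) := by
    have : 0 ≤ h μ * (r * (1 + s ^ 2) - s ^ 2 * h μ) := by nlinarith
    have := nonneg_of_mul_nonneg_right this hμp
    linarith
  have e : h μ = (2 * μ - 3) ^ 2 * (s ^ 2 * h μ) := by
    have : (2 * μ - 3) ^ 2 * (s ^ 2 * h μ) = (s * (2 * μ - 3)) ^ 2 * h μ := by ring
    rw [this, hsm]; ring
  calc h μ = (2 * μ - 3) ^ 2 * (s ^ 2 * h μ) := e
    _ ≤ (2 * μ - 3) ^ 2 * (r * (1 + s ^ 2)) := by gcongr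
    _ = r * ((2 * μ - 3) ^ 2 + (s * (2 * μ - 3)) ^ 2) := by ring
    _ = r * ((2 * μ - 3) ^ 2 + 1) := by rw [hsm]; ring
    _ ≤ _ := by gcongr

lemma aux_scalar_anti {h : ℝ → ℝ} (hpos : ∀ x, 0 < x → 0 < h x)
    (hl : ∀ x y, 0 < x → 0 < y → h ((x + y) / 2) ^ 2 ≤ h x * h y)
    (hg : ∃ C : ℝ, ∀ μ : ℝ, 3 ≤ μ → h μ ≤ C * ((2 * μ - 3) ^ 2 + 1)) :
    ∀ a b, 0 < a → a ≤ b → h b ≤ h a := by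
  intro a b ha hab
  by_contra! hlt
  have hne : a < b := lt_of_le_of_ne hab (by rintro rfl; exact lt_irrefl _ hlt)
  obtain ⟨C, hC⟩ := hg
  set d := b - a with hd
  have hd0 : 0 < d := by rw [hd]; linarith
  have hxp : ∀ k : ℕ, 0 < a + k * d := fun k => by positivity
  set r := h b / h a with hr
  have hap := hpos a ha
  have hr1 : 1 < r := by rw [hr, one_lt_div hap]; exact hlt
  have hstep : ∀ k : ℕ, r * h (a + k * d) ≤ h (a + (k + 1 : ℕ) * d) := by
    intro k
    induction k with
    | zero =>
      have : a + ((0 + 1 : ℕ) : ℝ) * d = b := by rw [hd]; push_cast; ring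
      rw [this]
      simp [hr, div_mul_cancel₀ _ hap.ne']
    | succ k ih =>
      have h1 := hl _ _ (hxp k) (hxp (k + 1 + 1))
      have e : (a + k * d + (a + ((k + 1 + 1 : ℕ) : ℝ) * d)) / 2 = a + ((k + 1 : ℕ) : ℝ) * d := by
        push_cast; ring
      rw [e] at h1
      have p0 := hpos _ (hxp k)
      have p1 := hpos _ (hxp (k + 1))
      have p2 := hpos _ (hxp (k + 1 + 1))
      have : (r * h (a + (k + 1 : ℕ) * d)) * h (a + k * d) ≤
          h (a + (k + 1 + 1 : ℕ) * d) * h (a + k * d) := by nlinarith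
      exact le_of_mul_le_mul_right this p0
  have hexp : ∀ k : ℕ, h a * r ^ k ≤ h (a + k * d) := by
    intro k
    induction k with
    | zero => simp
    | succ k ih =>
      calc h a * r ^ (k + 1) = r * (h a * r ^ k) := by ring
        _ ≤ r * h (a + k * d) := by gcongr
        _ ≤ _ := hstep k
  -- contradiction by growth
  have hC0 : 0 < C := by
    have := hC 3 le_rfl
    have h3 := hpos 3 (by norm_num)
    by_contra! hcn
    nlinarith
  have hlim : Filter.Tendsto (fun k : ℕ => (k : ℝ) ^ 2 / r ^ k) Filter.atTop (nhds 0) :=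
    tendsto_pow_const_div_const_pow_of_one_lt 2 hr1
  set D : ℝ := C * ((2 * a + 2 * d + 3) ^ 2 + 1) with hD
  have hD0 : 0 < D := by rw [hD]; positivity
  have ev1 := hlim.eventually_lt_const (u := h a / D) (div_pos hap hD0)
  obtain ⟨N, hN⟩ := exists_nat_ge (3 / d)
  obtain ⟨k, ⟨hk1, hk2⟩, hk3⟩ := ((ev1.and (Filter.eventually_ge_atTop N)).and
    (Filter.eventually_ge_atTop 1)).exists
  have hkd : 3 ≤ a + k * d := by
    have : 3 / d ≤ k := hN.trans (by exact_mod_cast hk2)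
    rw [div_le_iff₀ hd0] at this
    linarith
  have hk3' : (1:ℝ) ≤ k := by exact_mod_cast hk3
  have h1 := (hexp k).trans (hC _ hkd)
  have hrk : 0 < r ^ k := by positivity
  rw [div_lt_div_iff₀ hrk hD0] at hk1
  have hq : (2 * (a + k * d) - 3) ^ 2 + 1 ≤ ((2 * a + 2 * d + 3) ^ 2 + 1) * (k:ℝ) ^ 2 := by
    have u1 : 0 ≤ 2 * (a + k * d) - 3 := by linarith
    have u2 : 2 * (a + k * d) - 3 ≤ (2 * a + 2 * d + 3) * k := by nlinarith
    have u3 := pow_le_pow_left₀ u1 u2 2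
    have u4 : (1:ℝ) ≤ (k:ℝ) ^ 2 := one_le_pow₀ hk3'
    nlinarith
  have h2 : C * ((2 * (a + k * d) - 3) ^ 2 + 1) ≤ (k:ℝ) ^ 2 * D := by
    rw [hD]; nlinarith
  linarith

lemma aux_conv_pow {h : ℝ → ℝ} (hc : AuxConv h) {n : ℕ} {A Y : Matrix (Fin n) (Fin n) ℂ}
    (hA : A.PosDef) (hY : Y.PosDef) (k : ℕ) :
    cfc h ((1 - (2⁻¹:ℝ) ^ k) • A + ((2⁻¹:ℝ) ^ k) • Y) ≤
      (1 - (2⁻¹:ℝ) ^ k) • cfc h A + ((2⁻¹:ℝ) ^ k) • cfc h Y := by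
  induction k with
  | zero => simp
  | succ k ih =>
    have h0 : 0 < (2⁻¹:ℝ) ^ k := by positivity
    have h1 : (2⁻¹:ℝ) ^ k ≤ 1 := pow_le_one₀ (by norm_num) (by norm_num)
    have hp : ((1 - (2⁻¹:ℝ) ^ k) • A + ((2⁻¹:ℝ) ^ k) • Y).PosDef := by
      refine Matrix.PosDef.posSemidef_add ?_ (aux_smul_posDef hY h0)
      exact hA.posSemidef.smul (by linarith : (0:ℝ) ≤ 1 - (2⁻¹:ℝ) ^ k)
    have e : (1 - (2⁻¹:ℝ) ^ (k+1)) • A + ((2⁻¹:ℝ) ^ (k+1)) • Y =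
        (2⁻¹:ℝ) • (A + ((1 - (2⁻¹:ℝ) ^ k) • A + ((2⁻¹:ℝ) ^ k) • Y)) := by
      rw [pow_succ]; module
    rw [e]
    refine (hc n _ _ hA hp).trans ?_
    have e2 : (1 - (2⁻¹:ℝ) ^ (k+1)) • cfc h A + ((2⁻¹:ℝ) ^ (k+1)) • cfc h Y =
        (2⁻¹:ℝ) • (cfc h A + ((1 - (2⁻¹:ℝ) ^ k) • cfc h A + ((2⁻¹:ℝ) ^ k) • cfc h Y)) := by
      rw [pow_succ]; module
    rw [e2]
    exact smul_le_smul_of_nonneg_left (by gcongr) (by norm_num)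

lemma aux_conv_anti {h : ℝ → ℝ} (hc : AuxConv h)
    (ha : ∀ a b, 0 < a → a ≤ b → h b ≤ h a) {n : ℕ} {A B : Matrix (Fin n) (Fin n) ℂ}
    (hA : A.PosDef) (hAB : A ≤ B) : cfc h B ≤ cfc h A := by
  obtain ⟨a, ha0, haA⟩ : ∃ a : ℝ, 0 < a ∧ algebraMap ℝ _ a ≤ A := by
    rcases isEmpty_or_nonempty (Fin n) with hn | hn
    · exact ⟨1, one_pos, le_of_eq (Subsingleton.elim _ _)⟩
    · exact (CFC.exists_pos_algebraMap_le_iff (A := Matrix (Fin n) (Fin n) ℂ)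
        hA.isHermitian.isSelfAdjoint).2 fun x hx => aux_spec hA hx
  have key : ∀ k : ℕ, cfc h B ≤ cfc h A + ((2⁻¹:ℝ) ^ k) • (algebraMap ℝ _ (h a) - cfc h A) := by
    intro k
    have hsub : 0 ≤ B - A := sub_nonneg.2 hAB
    have hYA : A ≤ A + ((2:ℝ) ^ k) • (B - A) :=
      le_add_of_nonneg_right (smul_nonneg (by positivity) hsub)
    have hY := aux_posDef_of_le hA hYA
    have h1 := aux_conv_pow hc hA hY k
    have e : (1 - (2⁻¹:ℝ) ^ k) • A + ((2⁻¹:ℝ) ^ k) • (A + ((2:ℝ) ^ k) • (B - A)) = B := by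
      rw [smul_add, smul_smul, ← mul_pow]; norm_num; module
    rw [e] at h1
    refine h1.trans ?_
    have hYs := hY.isHermitian.isSelfAdjoint
    have hle : cfc h (A + ((2:ℝ) ^ k) • (B - A)) ≤ algebraMap ℝ _ (h a) := by
      rw [← cfc_const (h a) _ hYs]
      refine cfc_mono (fun x hx => ha a x ha0 ?_) (aux_cont _ _) (aux_cont _ _)
      exact (algebraMap_le_iff_le_spectrum (R := ℝ) hYs).1 (haA.trans hYA) x hx
    have e2 : cfc h A + ((2⁻¹:ℝ) ^ k) • (algebraMap ℝ _ (h a) - cfc h A) =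
        (1 - (2⁻¹:ℝ) ^ k) • cfc h A + ((2⁻¹:ℝ) ^ k) • algebraMap ℝ _ (h a) := by module
    rw [e2]
    gcongr
  have h1 : Filter.Tendsto (fun k : ℕ => cfc h A + ((2⁻¹:ℝ) ^ k) • (algebraMap ℝ _ (h a) - cfc h A))
      Filter.atTop (nhds (cfc h A)) := by
    have : Continuous (fun δ : ℝ => cfc h A + δ • (algebraMap ℝ _ (h a) - cfc h A)) := by fun_prop
    have h2 := (this.tendsto 0).comp
      (tendsto_pow_atTop_nhds_zero_of_lt_one (by norm_num : (0:ℝ) ≤ 2⁻¹) (by norm_num))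
    simpa [Function.comp_def] using h2
  exact ge_of_tendsto' h1 key

lemma aux_cfc_h {f : ℝ → ℝ} (hf : ∀ x, 0 < x → 0 < f x) {n : ℕ} {A : Matrix (Fin n) (Fin n) ℂ}
    (hA : A.PosDef) : cfc (fun x => (f x⁻¹)⁻¹) A = (cfc f A⁻¹)⁻¹ := by
  rw [aux_cfc_inv_arg hA, aux_cfc_inv hA]
  intro x hx; exact hf _ (inv_pos.2 hx)

lemma aux_wharm {n : ℕ} {A B : Matrix (Fin n) (Fin n) ℂ} (hA : A.PosDef) (hB : B.PosDef) :
    wharm 2⁻¹ A⁻¹ B⁻¹ = ((2⁻¹:ℝ) • (A + B))⁻¹ := by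
  unfold wharm
  rw [aux_inv_inv hA, aux_inv_inv hB, smul_add]
  norm_num

lemma aux_conv_of {f : ℝ → ℝ} (hf : ∀ x, 0 < x → 0 < f x)
    (H : ∀ (n : ℕ) (A B : Matrix (Fin n) (Fin n) ℂ), A.PosDef → B.PosDef →
        MLE (wgeom 2⁻¹ (cfc f A) (cfc f B)) (cfc f (wharm 2⁻¹ A B))) :
    AuxConv (fun x => (f x⁻¹)⁻¹) := by
  intro n A B hA hB
  have hM : ((2⁻¹:ℝ) • (A + B)).PosDef := aux_smul_posDef (hA.add hB) (by norm_num)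
  have h1 : wgeom 2⁻¹ (cfc f A⁻¹) (cfc f B⁻¹) ≤ cfc f (wharm 2⁻¹ A⁻¹ B⁻¹) :=
    H n _ _ hA.inv hB.inv
  have pA := aux_posDef_cfc hA.inv hf
  have pB := aux_posDef_cfc hB.inv hf
  have h2 := aux_inv_anti (aux_geom_posDef pA pB) h1
  rw [aux_cfc_h hf hA, aux_cfc_h hf hB, aux_cfc_h hf hM, ← aux_wharm hA hB]
  exact h2.trans (aux_geom_inv_le pA pB)

lemma aux_log_of {f : ℝ → ℝ} (hf : ∀ x, 0 < x → 0 < f x)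
    (H : ∀ (n : ℕ) (A B : Matrix (Fin n) (Fin n) ℂ), A.PosDef → B.PosDef →
        MLE (wgeom 2⁻¹ (cfc f A) (cfc f B)) (cfc f (wharm 2⁻¹ A B))) :
    ∀ x y, 0 < x → 0 < y →
      ((fun x => (f x⁻¹)⁻¹) ((x + y) / 2)) ^ 2 ≤ (fun x => (f x⁻¹)⁻¹) x * (fun x => (f x⁻¹)⁻¹) y := by
  intro x y hx hy
  have pd : ∀ x : ℝ, 0 < x → (algebraMap ℝ (Matrix (Fin 1) (Fin 1) ℂ) x).PosDef := fun x hx => by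
    rw [Algebra.algebraMap_eq_smul_one]; exact aux_smul_posDef Matrix.PosDef.one hx
  have hinv : ∀ x : ℝ, 0 < x → (algebraMap ℝ (Matrix (Fin 1) (Fin 1) ℂ) x)⁻¹ = algebraMap ℝ _ x⁻¹ :=
    fun x hx => by rw [aux_inv_eq (pd x hx), cfc_algebraMap]
  have h1 := H 1 _ _ (pd x hx).inv (pd y hy).inv
  rw [aux_wharm (pd x hx) (pd y hy), hinv x hx, hinv y hy, ← map_add, Algebra.smul_def, ← map_mul,
    hinv _ (by positivity), cfc_algebraMap, cfc_algebraMap, cfc_algebraMap] at h1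
  have hp := hf _ (inv_pos.2 hx)
  have hq := hf _ (inv_pos.2 hy)
  have e3 : 2⁻¹ * (x + y) = (x + y) / 2 := by ring
  rw [e3] at h1
  have hr := hf _ (inv_pos.2 (by positivity : 0 < (x + y) / 2))
  simp only
  generalize f x⁻¹ = p at *
  generalize f y⁻¹ = q at *
  generalize f ((x + y) / 2)⁻¹ = r at *
  unfold wgeom mpow MLE at h1
  simp only [cfc_algebraMap, ← map_mul, ← map_sub] at h1
  have h2 := h1.diag_nonneg (i := 0)
  rw [Matrix.algebraMap_matrix_apply] at h2
  simp only [if_true] at h2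
  have h3 : p ^ (1 / 2 : ℝ) * (p ^ (-(1 / 2) : ℝ) * q * p ^ (-(1 / 2) : ℝ)) ^ (2⁻¹ : ℝ) *
      p ^ (1 / 2 : ℝ) ≤ r := by
    rw [← sub_nonneg]
    rw [Complex.coe_algebraMap] at h2
    exact_mod_cast h2
  set c := p ^ (-(1 / 2) : ℝ) * q * p ^ (-(1 / 2) : ℝ) with hcdef
  have hc0 : 0 < c := by positivity
  have k1 : (c ^ (2⁻¹:ℝ)) ^ 2 = c := by
    rw [← one_div, ← Real.sqrt_eq_rpow, Real.sq_sqrt hc0.le]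
  have k2 : (p ^ (1/2:ℝ)) ^ 2 = p := by
    rw [← Real.sqrt_eq_rpow, Real.sq_sqrt hp.le]
  have k3 : p ^ (1/2:ℝ) * p ^ (-(1/2):ℝ) = 1 := by
    rw [← Real.rpow_add hp]; simp
  have k4 : p * q ≤ r ^ 2 := by
    have := pow_le_pow_left₀ (by positivity) h3 2
    calc p * q = p * (p ^ (1/2:ℝ) * p ^ (-(1/2):ℝ)) ^ 2 * q := by rw [k3]; ring
      _ = (p ^ (1/2:ℝ)) ^ 2 * c * p := by rw [hcdef]; ring
      _ = (p ^ (1/2:ℝ)) ^ 2 * (c ^ (2⁻¹:ℝ)) ^ 2 * (p ^ (1/2:ℝ)) ^ 2 := by rw [k1, k2]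
      _ = (p ^ (1/2:ℝ) * c ^ (2⁻¹:ℝ) * p ^ (1/2:ℝ)) ^ 2 := by ring
      _ ≤ r ^ 2 := this
  rw [← mul_inv, inv_pow]
  exact inv_anti₀ (by positivity) k4

end converse


section final
open scoped MatrixOrder Matrix.Norms.L2Operator

theorem aux_main (f : ℝ → ℝ) (hf : ContinuousOn f (Set.Ioi 0))
    (hf' : ∀ x ∈ Set.Ioi (0:ℝ), f x ∈ Set.Ioi (0:ℝ)) :
    OperatorAntitone f ↔
      ∀ (n : ℕ) (A B : Matrix (Fin n) (Fin n) ℂ), A.PosDef → B.PosDef →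
        MLE (wgeom 2⁻¹ (cfc f A) (cfc f B)) (cfc f (wharm 2⁻¹ A B)) := by
  have hpos : ∀ x, 0 < x → 0 < f x := fun x hx => hf' x hx
  constructor
  · intro hanti n A B hA hB
    have hgc : ContinuousOn (fun x => f x⁻¹) (Set.Ioi 0) := by
      refine hf.comp (continuousOn_inv₀.mono fun x hx => ne_of_gt hx) fun x hx => ?_
      exact Set.mem_Ioi.2 (inv_pos.2 (Set.mem_Ioi.1 hx))
    have hgm : OperatorMonotone (fun x => f x⁻¹) := by
      intro m X Y hX hY hXY
      rw [← aux_cfc_inv_arg hX, ← aux_cfc_inv_arg hY]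
      exact hanti m _ _ hY.inv hX.inv (aux_inv_anti hX hXY)
    have h1 := aux_concave hgc hgm hA.inv hB.inv
    have hM : ((2⁻¹:ℝ) • (A⁻¹ + B⁻¹)).PosDef :=
      aux_smul_posDef (hA.inv.add hB.inv) (by norm_num)
    rw [← aux_cfc_inv_arg hM, ← aux_cfc_inv_arg hA.inv, ← aux_cfc_inv_arg hB.inv,
      ← aux_wharm hA.inv hB.inv, aux_inv_inv hA, aux_inv_inv hB] at h1
    exact (aux_geom_le (aux_posDef_cfc hA hpos) (aux_posDef_cfc hB hpos)).trans h1
  · intro H n A B hA hB hAB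
    have hhp : ∀ x, 0 < x → 0 < (fun x => (f x⁻¹)⁻¹) x :=
      fun x hx => inv_pos.2 (hpos _ (inv_pos.2 hx))
    have hc := aux_conv_of hpos H
    have hs := aux_scalar_anti hhp (aux_log_of hpos H) (aux_growth hhp hc)
    have h1 := aux_conv_anti hc hs hB.inv (aux_inv_anti hA hAB)
    rw [aux_cfc_h hpos hA.inv, aux_cfc_h hpos hB.inv, aux_inv_inv hA, aux_inv_inv hB] at h1
    have pA := aux_posDef_cfc hA hpos
    have pB := aux_posDef_cfc hB hpos
    have h2 := aux_inv_anti pA.inv h1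
    rw [aux_inv_inv pA, aux_inv_inv pB] at h2
    exact h2

end final

theorem stmt_9 (f : ℝ → ℝ) (hf : ContinuousOn f (Set.Ioi 0))
    (hf' : ∀ x ∈ Set.Ioi (0:ℝ), f x ∈ Set.Ioi (0:ℝ)) :
    OperatorAntitone f ↔
      ∀ (n : ℕ) (A B : Matrix (Fin n) (Fin n) ℂ), A.PosDef → B.PosDef →
        MLE (wgeom 2⁻¹ (cfc f A) (cfc f B)) (cfc f (wharm 2⁻¹ A B)) :=
  aux_main f hf hf'
end

section
/- A continuous function f : (0,∞) → (0,∞) is operator monotone decreasing if and only if f(A !_t B) ≥ f(A) #_t f(B) for every n ∈ ℕ, all n×n positive definite complex matrices A, B, and every t ∈ [0,1]. -/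
open Matrix
open scoped ComplexOrder

namespace S10
set_option linter.unusedSectionVars false
open scoped MatrixOrder
variable {ι : Type} [Fintype ι] [DecidableEq ι]

lemma contS (f : ℝ → ℝ) (A : Matrix ι ι ℂ) : ContinuousOn f (spectrum ℝ A) := by
  have : (spectrum ℝ A).Finite := Matrix.finite_real_spectrum
  exact this.continuousOn f

lemma spec_pos {A : Matrix ι ι ℂ} (hA : A.PosDef) : ∀ x ∈ spectrum ℝ A, 0 < x := by
  intro x hx
  rw [hA.1.spectrum_real_eq_range_eigenvalues] at hx
  obtain ⟨i, rfl⟩ := hx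
  exact hA.eigenvalues_pos i

lemma cfc_posDef {A : Matrix ι ι ℂ} (hA : A.PosDef) {f : ℝ → ℝ} (hf : ∀ x, 0 < x → 0 < f x) :
    (cfc f A).PosDef := by
  rw [← Matrix.isStrictlyPositive_iff_posDef]
  refine (cfc_isStrictlyPositive_iff f A (contS _ _) hA.1.isSelfAdjoint).2 ?_
  exact fun x hx => hf x (spec_pos hA x hx)

lemma cfc_herm (A : Matrix ι ι ℂ) (f : ℝ → ℝ) : (cfc f A).IsHermitian := 
  cfc_predicate f A

lemma cfc_congr' {A : Matrix ι ι ℂ} (hA : A.PosDef) {f g : ℝ → ℝ} (h : ∀ x, 0 < x → f x = g x) :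
   cfc f A = cfc g A := cfc_congr fun x hx => h x (spec_pos hA x hx)

lemma cfc_mul' {A : Matrix ι ι ℂ} (hA : A.PosDef) {f g k : ℝ → ℝ} (h : ∀ x, 0 < x → f x * g x = k x) :
   cfc f A * cfc g A = cfc k A := by
  rw [← cfc_mul f g A (contS _ _) (contS _ _)]
  exact cfc_congr' hA h

lemma cfc_le' {A : Matrix ι ι ℂ} (hA : A.PosDef) {f g : ℝ → ℝ} (h : ∀ x, 0 < x → f x ≤ g x) :
   cfc f A ≤ cfc g A := by
  exact cfc_mono (fun x hx => h x (spec_pos hA x hx)) (contS _ _) (contS _ _)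

lemma inv_cfc {A : Matrix ι ι ℂ} (hA : A.PosDef) {f : ℝ → ℝ} (hf : ∀ x, 0 < x → 0 < f x) :
   (cfc f A)⁻¹ = cfc (fun x => (f x)⁻¹) A := by
  apply Matrix.inv_eq_right_inv
  rw [cfc_mul' hA (k := fun _ => 1)]
  · exact cfc_const_one ℝ A hA.1
  · intro x hx; have := hf x hx; field_simp

lemma inv_cfc_id {A : Matrix ι ι ℂ} (hA : A.PosDef) : A⁻¹ = cfc (fun x : ℝ => x⁻¹) A := by
  rw [← inv_cfc hA (f := fun x => x) (fun x hx => hx), cfc_id' ℝ A hA.1.isSelfAdjoint]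

lemma cfc_of_inv {A : Matrix ι ι ℂ} (hA : A.PosDef) (f : ℝ → ℝ) : cfc f A⁻¹ = cfc (fun x => f x⁻¹) A := by
  rw [inv_cfc_id hA, ← cfc_comp' f (fun x : ℝ => x⁻¹) A ?_ (contS _ _) hA.1.isSelfAdjoint]
  exact ((Matrix.finite_real_spectrum (A := A)).image _).continuousOn f

lemma le_inv {A B : Matrix ι ι ℂ} (hA : A.PosDef) (hB : B.PosDef) (h : A ≤ B) : B⁻¹ ≤ A⁻¹ := by
  rw [Matrix.le_iff] at *
  have := hB.isUnit.invertible
  have := hA.inv.isUnit.invertible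
  have h1 := Matrix.PosDef.fromBlocks₂₂ B (1 : Matrix ι ι ℂ) hA.inv
  have h2 := Matrix.PosDef.fromBlocks₁₁ (1 : Matrix ι ι ℂ) A⁻¹ hB
  have e : A⁻¹⁻¹ = A := Matrix.nonsing_inv_nonsing_inv _ ((Matrix.isUnit_iff_isUnit_det _).1 hA.isUnit)
  simp [e] at h1 h2
  rw [← h2, h1]
  exact h

lemma conj_le {A B : Matrix ι ι ℂ} (h : A ≤ B) {S : Matrix ι ι ℂ} (hS : S.IsHermitian) :
    S * A * S ≤ S * B * S := by
  rw [Matrix.le_iff] at *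
  have := h.conjTranspose_mul_mul_same S
  rw [hS.eq, mul_sub, sub_mul] at this
  exact this

lemma cfc_poly (f : ℝ → ℝ) {T : Set ℝ} (hT : T.Finite) : ∃ p : Polynomial ℝ, 
   (∀ x ∈ T, p.eval x = f x) := by
  refine ⟨Lagrange.interpolate hT.toFinset id f, fun x hx => ?_⟩
  exact Lagrange.eval_interpolate_at_node (v := id) f (by simp) (by simpa using hx)

lemma cfc_aeval {f : ℝ → ℝ} {A : Matrix ι ι ℂ} (hA : A.IsHermitian) {p : Polynomial ℝ} 
  (h : ∀ x ∈ spectrum ℝ A, p.eval x = f x) : cfc f A = Polynomial.aeval A p := by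
  rw [← cfc_polynomial p A hA]
  exact cfc_congr fun x hx => (h x hx).symm

lemma cfc_map {κ : Type} [Fintype κ] [DecidableEq κ] (φ : Matrix ι ι ℂ →ₐ[ℝ] Matrix κ κ ℂ) (f : ℝ → ℝ) 
   {A : Matrix ι ι ℂ} (hA : A.IsHermitian) (hφ : (φ A).IsHermitian) : cfc f (φ A) = φ (cfc f A) := by
  obtain ⟨p, hp⟩ := cfc_poly f (Matrix.finite_real_spectrum (A := A))
  rw [cfc_aeval hA hp, cfc_aeval hφ fun x hx => hp x (AlgHom.spectrum_apply_subset φ A hx), Polynomial.aeval_algHom_apply]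

lemma posDef_add {A B : Matrix ι ι ℂ} (hA : A.PosDef) (hB : B.PosDef) {t : ℝ} (h0 : 0 ≤ t) (h1 : t ≤ 1) :
  ((1 - t) • A + t • B).PosDef := by
  rcases h0.eq_or_lt with rfl | h0
  · simpa
  rcases h1.eq_or_lt with rfl | h1
  · simpa
  exact (hA.smul (sub_pos.2 h1)).add (hB.smul h0)

lemma wgeom_struct {n : ℕ} {X Y : Matrix (Fin n) (Fin n) ℂ} (hX : X.PosDef) (hY : Y.PosDef) :
    ∃ S R Z : Matrix (Fin n) (Fin n) ℂ, S.IsHermitian ∧ R.IsHermitian ∧ S * R = 1 ∧ R * S = 1 ∧ S * S = X ∧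
      R * R = X⁻¹ ∧ Z.PosDef ∧ S * Z * S = Y ∧ R * Z⁻¹ * R = Y⁻¹ ∧
      ∀ t, wgeom t X Y = S * cfc (fun x : ℝ => x ^ t) Z * S := by
  have one : cfc (fun _ : ℝ => (1:ℝ)) X = 1 := cfc_const_one ℝ X hX.1.isSelfAdjoint
  have hSR : mpow X (1/2) * mpow X (-(1/2)) = 1 := by
    unfold mpow
    rw [cfc_mul' hX (k := fun _ => 1), one]
    intro x hx
    rw [← Real.rpow_add hx]; norm_num
  have hRS : mpow X (-(1/2)) * mpow X (1/2) = 1 := by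
    unfold mpow
    rw [cfc_mul' hX (k := fun _ => 1), one]
    intro x hx
    rw [← Real.rpow_add hx]; norm_num
  have hSS : mpow X (1/2) * mpow X (1/2) = X := by
    unfold mpow
    rw [cfc_mul' hX (k := fun x => x), cfc_id' ℝ X hX.1.isSelfAdjoint]
    intro x hx
    rw [← Real.rpow_add hx]; norm_num
  have hS : (mpow X (1/2)).IsHermitian := cfc_herm _ _
  have hR : (mpow X (-(1/2))).IsHermitian := cfc_herm _ _
  have hRR : mpow X (-(1/2)) * mpow X (-(1/2)) = X⁻¹ := by
    symm
    apply Matrix.inv_eq_right_inv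
    nth_rw 1 [← hSS]
    rw [mul_assoc, ← mul_assoc _ _ (mpow X (-(1/2))), hSR, one_mul, hSR]
  have hRu : IsUnit (mpow X (-(1/2))) := ⟨⟨_, _, hRS, hSR⟩, rfl⟩
  have hZ : (mpow X (-(1/2)) * Y * mpow X (-(1/2))).PosDef := by
    have := hY.conjTranspose_mul_mul_same (Matrix.mulVec_injective_of_isUnit hRu)
    rwa [hR.eq] at this
  have hSZS : mpow X (1/2) * (mpow X (-(1/2)) * Y * mpow X (-(1/2))) * mpow X (1/2) = Y := by
    calc _ = (mpow X (1/2) * mpow X (-(1/2))) * Y * (mpow X (-(1/2)) * mpow X (1/2)) := by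
          simp only [mul_assoc]
      _ = Y := by rw [hSR, hRS]; simp
  refine ⟨mpow X (1/2), mpow X (-(1/2)), _, hS, hR, hSR, hRS, hSS, hRR, hZ, hSZS, ?_, fun t => rfl⟩
  rw [Matrix.mul_inv_rev, Matrix.mul_inv_rev, Matrix.inv_eq_right_inv hRS]
  calc _ = (mpow X (-(1/2)) * mpow X (1/2)) * Y⁻¹ * (mpow X (1/2) * mpow X (-(1/2))) := by
          simp only [mul_assoc]
      _ = _ := by rw [hSR, hRS]; simp

lemma wgeom_posDef {n : ℕ} {X Y : Matrix (Fin n) (Fin n) ℂ} (hX : X.PosDef) (hY : Y.PosDef) (t : ℝ) :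
    (wgeom t X Y).PosDef := by
  obtain ⟨S, R, Z, hS, hR, hSR, hRS, hSS, hRR, hZ, hSZ, hRZ, h⟩ := wgeom_struct hX hY
  rw [h]
  have hSu : IsUnit S := ⟨⟨_, _, hSR, hRS⟩, rfl⟩
  have := (cfc_posDef hZ (f := fun x : ℝ => x ^ t) (fun x hx => Real.rpow_pos_of_pos hx _)).conjTranspose_mul_mul_same (Matrix.mulVec_injective_of_isUnit hSu)
  rwa [hS.eq] at this

lemma cfc_aff {A : Matrix ι ι ℂ} (hA : A.PosDef) (a b : ℝ) (f : ℝ → ℝ) :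
    cfc (fun x => a + b * f x) A = a • 1 + b • cfc f A := by
  rw [cfc_add A (fun _ => a) (fun x => b * f x) (contS _ _) (contS _ _), cfc_const a A hA.1.isSelfAdjoint, 
    cfc_const_mul b f A (contS _ _), Algebra.algebraMap_eq_smul_one]

lemma wgeom_le {n : ℕ} {X Y : Matrix (Fin n) (Fin n) ℂ} (hX : X.PosDef) (hY : Y.PosDef) {t : ℝ}
    (h0 : 0 ≤ t) (h1 : t ≤ 1) : wgeom t X Y ≤ (1 - t) • X + t • Y := by
  obtain ⟨S, R, Z, hS, hR, hSR, hRS, hSS, hRR, hZ, hSZ, hRZ, h⟩ := wgeom_struct hX hY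
  rw [h]
  have : cfc (fun x : ℝ => x ^ t) Z ≤ (1 - t) • 1 + t • Z := by
    have e := cfc_aff hZ (1 - t) t (fun x => x)
    rw [cfc_id' ℝ Z hZ.1.isSelfAdjoint] at e
    rw [← e]
    refine cfc_le' hZ fun x hx => ?_
    have := Real.geom_mean_le_arith_mean2_weighted (sub_nonneg.2 h1) h0 zero_le_one hx.le (by ring)
    simpa using this
  have := conj_le this hS
  rw [mul_add, add_mul] at this
  simpa [hSS, hSZ] using this

lemma le_wgeom {n : ℕ} {X Y : Matrix (Fin n) (Fin n) ℂ} (hX : X.PosDef) (hY : Y.PosDef) {t : ℝ}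
    (h0 : 0 ≤ t) (h1 : t ≤ 1) : ((1 - t) • X⁻¹ + t • Y⁻¹)⁻¹ ≤ wgeom t X Y := by
  obtain ⟨S, R, Z, hS, hR, hSR, hRS, hSS, hRR, hZ, hSZ, hRZ, h⟩ := wgeom_struct hX hY
  rw [h]
  have hp : ∀ x : ℝ, 0 < x → 0 < (1 - t) + t * x⁻¹ := by
    intro x hx
    rcases h0.eq_or_lt with rfl | h0
    · simp
    · have := mul_pos h0 (inv_pos.2 hx); linarith
  have e1 : cfc (fun x : ℝ => (1 - t) + t * x⁻¹) Z = (1 - t) • 1 + t • Z⁻¹ := by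
    rw [cfc_aff hZ, inv_cfc_id hZ]
  have e : ((1 - t) • X⁻¹ + t • Y⁻¹)⁻¹ = S * cfc (fun x : ℝ => ((1 - t) + t * x⁻¹)⁻¹) Z * S := by
    have e2 : (1 - t) • X⁻¹ + t • Y⁻¹ = R * cfc (fun x : ℝ => (1 - t) + t * x⁻¹) Z * R := by
      rw [e1, ← hRR, ← hRZ, mul_add, add_mul]; simp
    rw [e2, ← inv_cfc hZ hp, Matrix.mul_inv_rev, Matrix.mul_inv_rev, Matrix.inv_eq_right_inv hRS, mul_assoc]
  rw [e]
  apply conj_le _ hS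
  refine cfc_le' hZ fun x hx => ?_
  have := Real.geom_mean_le_arith_mean2_weighted (sub_nonneg.2 h1) h0 zero_le_one (inv_pos.2 hx).le (by ring)
  simp only [Real.one_rpow, one_mul, mul_one, Real.inv_rpow hx.le] at this
  exact inv_le_of_inv_le₀ (Real.rpow_pos_of_pos hx _) this

/-- matrix convexity of g -/
def MConv (g : ℝ → ℝ) : Prop := ∀ (n : ℕ) (A B : Matrix (Fin n) (Fin n) ℂ), A.PosDef → B.PosDef →
        ∀ t ∈ Set.Icc (0:ℝ) 1, cfc g ((1 - t) • A + t • B) ≤ (1 - t) • cfc g A + t • cfc g B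

lemma inv_inv' {A : Matrix ι ι ℂ} (hA : A.PosDef) : A⁻¹⁻¹ = A := 
  Matrix.nonsing_inv_nonsing_inv _ ((Matrix.isUnit_iff_isUnit_det _).1 hA.isUnit)

lemma cfc_g {f : ℝ → ℝ} (hf' : ∀ x, 0 < x → 0 < f x) {A : Matrix ι ι ℂ} (hA : A.PosDef) : 
    cfc (fun x => (f x⁻¹)⁻¹) A = (cfc f A⁻¹)⁻¹ := by
  rw [cfc_of_inv hA, inv_cfc hA (fun x hx => hf' _ (inv_pos.2 hx))]

lemma mconv_of {f : ℝ → ℝ} (hf' : ∀ x, 0 < x → 0 < f x) 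
   (H : ∀ (n : ℕ) (A B : Matrix (Fin n) (Fin n) ℂ), A.PosDef → B.PosDef →
        ∀ t ∈ Set.Icc (0:ℝ) 1,
          MLE (wgeom t (cfc f A) (cfc f B)) (cfc f (wharm t A B))) : MConv (fun x => (f x⁻¹)⁻¹) := by
  intro n A B hA hB t ht
  have h := H n A⁻¹ B⁻¹ hA.inv hB.inv t ht
  unfold wharm at h
  rw [inv_inv' hA, inv_inv' hB] at h
  have hP := posDef_add hA hB ht.1 ht.2
  have hfA := cfc_posDef hA.inv hf'
  have hfB := cfc_posDef hB.inv hf'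
  have hfP := cfc_posDef hP.inv hf'
  have hQ := posDef_add hfA.inv hfB.inv ht.1 ht.2
  have h2 := le_inv hQ.inv hfP ((le_wgeom hfA hfB ht.1 ht.2).trans h)
  rw [inv_inv' hQ] at h2
  rw [cfc_g hf' hP, cfc_g hf' hA, cfc_g hf' hB]
  exact h2

lemma mpow_alg {n : ℕ} (a r : ℝ) : mpow (algebraMap ℝ (Matrix (Fin n) (Fin n) ℂ) a) r = algebraMap ℝ _ (a ^ r) := by
  unfold mpow; rw [cfc_algebraMap]

lemma alg_posDef {a : ℝ} (ha : 0 < a) : (algebraMap ℝ (Matrix ι ι ℂ) a).PosDef := by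
  rw [Algebra.algebraMap_eq_smul_one]
  exact Matrix.PosDef.one.smul ha

lemma alg_inv {a : ℝ} (ha : 0 < a) : (algebraMap ℝ (Matrix ι ι ℂ) a)⁻¹ = algebraMap ℝ (Matrix ι ι ℂ) a⁻¹ := by
  apply Matrix.inv_eq_right_inv
  rw [← map_mul, mul_inv_cancel₀ ha.ne', map_one]

lemma alg_smul (s a : ℝ) : s • (algebraMap ℝ (Matrix ι ι ℂ) a) = algebraMap ℝ (Matrix ι ι ℂ) (s * a) := by
  rw [Algebra.smul_def, map_mul]

lemma logconv_of {f : ℝ → ℝ} (hf' : ∀ x, 0 < x → 0 < f x) 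
   (H : ∀ (n : ℕ) (A B : Matrix (Fin n) (Fin n) ℂ), A.PosDef → B.PosDef →
        ∀ t ∈ Set.Icc (0:ℝ) 1,
          MLE (wgeom t (cfc f A) (cfc f B)) (cfc f (wharm t A B))) : 
   ConvexOn ℝ (Set.Ioi 0) (fun x => - Real.log (f x⁻¹)) := by
  refine ⟨convex_Ioi 0, ?_⟩
  intro a ha b hb s t hs ht hst
  obtain rfl : s = 1 - t := by linarith
  simp only [Set.mem_Ioi, smul_eq_mul] at *
  have hP : 0 < (1 - t) * a + t * b := by
    rcases ht.eq_or_lt with rfl | ht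
    · simpa
    · have := mul_pos ht hb; have := mul_nonneg hs ha.le; linarith
  have h := H 1 _ _ (alg_posDef (inv_pos.2 ha)) (alg_posDef (inv_pos.2 hb)) t ⟨ht, by linarith⟩
  unfold wharm wgeom at h
  have hfa := hf' _ (inv_pos.2 ha)
  have hfb := hf' _ (inv_pos.2 hb)
  rw [alg_inv (inv_pos.2 ha), alg_inv (inv_pos.2 hb), alg_smul, alg_smul, ← map_add, inv_inv, inv_inv, alg_inv hP,
    cfc_algebraMap, cfc_algebraMap, cfc_algebraMap, mpow_alg, mpow_alg, ← map_mul, ← map_mul, mpow_alg, ← map_mul, ← map_mul] at h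
  unfold MLE at h
  rw [← map_sub] at h
  have h3 := h.diag_nonneg (i := 0)
  rw [Matrix.algebraMap_matrix_apply] at h3
  simp only [if_true, Complex.coe_algebraMap] at h3
  rw [Complex.zero_le_real, sub_nonneg] at h3
  have h4 := Real.log_le_log (by positivity) h3
  rw [Real.log_mul (by positivity) (by positivity), Real.log_mul (by positivity) (by positivity), Real.log_rpow hfa, Real.log_rpow (by positivity), 
    Real.log_mul (by positivity) (by positivity), Real.log_mul (by positivity) (by positivity), Real.log_rpow hfa] at h4
  linarith

lemma nonneg_spec {D : Matrix ι ι ℂ} (hD : D.IsHermitian) : 0 ≤ D ↔ ∀ x ∈ spectrum ℝ D, 0 ≤ x := by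
  rw [Matrix.nonneg_iff_posSemidef, hD.posSemidef_iff_eigenvalues_nonneg, hD.spectrum_real_eq_range_eigenvalues]
  simp [Pi.le_def]

lemma le_eps {A B : Matrix ι ι ℂ} (h : ∀ ε : ℝ, 0 < ε → A ≤ B + algebraMap ℝ (Matrix ι ι ℂ) ε) : A ≤ B := by
  have key : ∀ ε : ℝ, 0 < ε → 0 ≤ algebraMap ℝ (Matrix ι ι ℂ) ε + (B - A) := by
    intro ε hε
    have h1 := sub_nonneg.2 (h ε hε)
    rwa [add_sub_right_comm, add_comm] at h1
  have key2 : ∀ ε : ℝ, 0 < ε → (algebraMap ℝ (Matrix ι ι ℂ) ε + (B - A)).IsHermitian := fun ε hε =>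
    (Matrix.nonneg_iff_posSemidef.1 (key ε hε)).1
  have hD : (B - A).IsHermitian := by
    have h1 := key2 1 one_pos
    have := h1.sub (alg_posDef (ι := ι) one_pos).1
    rwa [add_sub_cancel_left] at this
  apply sub_nonneg.1
  refine (nonneg_spec hD).2 ?_
  intro x hx
  refine le_of_forall_pos_le_add fun ε hε => ?_
  have h3 := (nonneg_spec (key2 ε hε)).1 (key ε hε) (ε + x)
  rw [add_comm]
  apply h3
  have := (spectrum.add_mem_add_iff (R := ℝ) (a := B - A) (r := x) (s := ε)).2 hx
  rwa [add_comm x ε] at this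



lemma alg_le {a b : ℝ} (h : a ≤ b) : algebraMap ℝ (Matrix ι ι ℂ) a ≤ algebraMap ℝ (Matrix ι ι ℂ) b := by
  rw [Matrix.le_iff, ← map_sub, Algebra.algebraMap_eq_smul_one]
  exact Matrix.PosSemidef.one.smul (sub_nonneg.2 h)

lemma alg_add_cfc {A : Matrix ι ι ℂ} (hA : A.PosDef) (f : ℝ → ℝ) (s : ℝ) :
    cfc f (A + algebraMap ℝ _ s) = cfc (fun x => f (x + s)) A := by
  have : A + algebraMap ℝ _ s = cfc (fun x => x + s) A := by
    rw [cfc_add_const s (fun x => x) A (contS _ _) hA.1.isSelfAdjoint, cfc_id' ℝ A hA.1.isSelfAdjoint]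
  rw [this, ← cfc_comp' f (fun x : ℝ => x + s) A ?_ (contS _ _) hA.1.isSelfAdjoint]
  exact ((Matrix.finite_real_spectrum (A := A)).image _).continuousOn f

open Filter Topology in
lemma cfc_shift {g : ℝ → ℝ} (hg : ContinuousOn g (Set.Ioi 0)) {A : Matrix ι ι ℂ} (hA : A.PosDef) {ε : ℝ} (hε : 0 < ε) :
    ∀ᶠ s in 𝓝[>] (0:ℝ), cfc g (A + algebraMap ℝ _ s) ≤ cfc g A + algebraMap ℝ _ ε ∧
      cfc g A ≤ cfc g (A + algebraMap ℝ _ s) + algebraMap ℝ _ ε := by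
  have h1 : ∀ᶠ s in 𝓝[>] (0:ℝ), ∀ x ∈ spectrum ℝ A, |g (x + s) - g x| < ε := by
    rw [(Matrix.finite_real_spectrum (A := A)).eventually_all]
    intro x hx
    have hx0 := spec_pos hA x hx
    have hc : ContinuousAt g x := hg.continuousAt (Ioi_mem_nhds hx0)
    have hc' : Tendsto (fun s => g (x + s)) (𝓝 0) (𝓝 (g x)) := by
      have : Tendsto (fun s => x + s) (𝓝 0) (𝓝 x) := by
        have : Continuous (fun s : ℝ => x + s) := by fun_prop
        simpa using this.tendsto 0
      exact hc.tendsto.comp this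
    have := (hc'.mono_left (nhdsWithin_le_nhds (s := Set.Ioi 0))).eventually (Metric.ball_mem_nhds _ hε)
    filter_upwards [this] with s hs
    simpa [Real.dist_eq] using hs
  filter_upwards [h1] with s hs
  rw [alg_add_cfc hA]
  rw [← cfc_add_const ε g A (contS _ _) hA.1.isSelfAdjoint, ← cfc_add_const ε _ A (contS _ _) hA.1.isSelfAdjoint]
  refine ⟨cfc_mono (fun x hx => ?_) (contS _ _) (contS _ _), cfc_mono (fun x hx => ?_) (contS _ _) (contS _ _)⟩
  · have := abs_lt.1 (hs x hx); linarith
  · have := abs_lt.1 (hs x hx); linarith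

lemma cfc_two [Nonempty ι] {M : Matrix ι ι ℂ} (hM : M.IsHermitian) {a b : ℝ} (hab : a ≠ b)
    (h : (M - algebraMap ℝ _ a) * (M - algebraMap ℝ _ b) = 0) (g : ℝ → ℝ) :
    cfc g M = algebraMap ℝ _ (g a) + ((g b - g a) / (b - a)) • (M - algebraMap ℝ _ a) := by
  have hb : b - a ≠ 0 := sub_ne_zero.2 hab.symm
  rw [cfc_aeval hM (p := Polynomial.C (g a) + Polynomial.C ((g b - g a) / (b - a)) * (Polynomial.X - Polynomial.C a))]
  · simp [Algebra.smul_def]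
  · intro x hx
    have := spectrum.subset_polynomial_aeval M ((Polynomial.X - Polynomial.C a) * (Polynomial.X - Polynomial.C b)) ⟨x, hx, rfl⟩
    simp [h, sub_eq_zero] at this
    rcases this with rfl | rfl
    · simp
    · simp; field_simp; ring

lemma growth {g : ℝ → ℝ} (hg : ContinuousOn g (Set.Ioi 0)) (hp : ∀ x, 0 < x → 0 < g x) (H : MConv g) :
    ∃ K : ℝ, 0 < K ∧ ∀ x : ℝ, 2 < x → g (2 + x + 1 / x) ≤ K * (x ^ 2 + 1) := by
  obtain ⟨C, hC⟩ := isCompact_Icc.bddAbove_image (hg.mono (fun x (hx : x ∈ Set.Icc (1:ℝ) 3) => lt_of_lt_of_le one_pos hx.1))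
  have hC' : ∀ x, 1 ≤ x → x ≤ 3 → g x ≤ C := fun x h1 h2 => hC ⟨x, ⟨h1, h2⟩, rfl⟩
  have hC0 : 0 < C := (hp 1 one_pos).trans_le (hC' 1 le_rfl (by norm_num))
  let B : Matrix (Fin 2) (Fin 2) ℂ := !![4, 2; 2, 3]
  have hB : B.PosDef := by
    have : B = Matrix.diagonal ![2, 1] + (2:ℝ) • Matrix.vecMulVec (fun _ => 1) (star fun _ => 1) := by
      ext i j; fin_cases i <;> fin_cases j <;> simp [B, Matrix.add_apply, Matrix.smul_apply, Matrix.vecMulVec_apply] <;> norm_num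
    rw [this]
    refine Matrix.PosDef.add_posSemidef (Matrix.PosDef.diagonal ?_) ((Matrix.posSemidef_vecMulVec_self_star _).smul (by norm_num))
    intro i; fin_cases i <;> simp
  set b : ℝ := (cfc g B 1 1).re with hb
  have hb0 : 0 ≤ b := by
    have := (cfc_posDef hB hp).posSemidef.diag_nonneg (i := 1)
    exact (Complex.nonneg_iff.1 this).1
  refine ⟨C + b, by linarith, fun x hx => ?_⟩
  have hx0 : 0 < x := by linarith
  let A : Matrix (Fin 2) (Fin 2) ℂ := Matrix.diagonal ![((2 * x : ℝ) : ℂ), ((1 + 2 / x : ℝ) : ℂ)]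
  have hA : A.PosDef := by
    refine Matrix.PosDef.diagonal ?_
    intro i; fin_cases i
    · simp [hx0]
    · have : 0 < 1 + 2 / x := by positivity
      simpa using (Complex.zero_lt_real.2 this)
  have h := H 2 A B hA hB (1/2) ⟨by norm_num, by norm_num⟩
  set M := (1 - (1/2:ℝ)) • A + (1/2:ℝ) • B with hM
  have hMh : M.IsHermitian := (posDef_add hA hB (by norm_num) (by norm_num)).1
  have hxc : (x : ℂ) ≠ 0 := by exact_mod_cast hx0.ne'
  have eM : M = !![((2 + x : ℝ) : ℂ), 1; 1, ((2 + 1 / x : ℝ) : ℂ)] := by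
    ext i j; fin_cases i <;> fin_cases j <;> simp [hM, A, B] <;> field_simp <;> ring
  have cM : cfc g M = _ := cfc_two hMh (a := 2) (b := 2 + x + 1 / x) (by have : 0 < 1 / x := by positivity
                                                                         linarith) (by
    rw [eM]
    ext i j; fin_cases i <;> fin_cases j <;> simp [Matrix.mul_apply, Fin.sum_univ_two, Matrix.algebraMap_matrix_apply] <;> field_simp <;> ring) g
  have h2x : 2 / x < 1 := by rw [div_lt_one hx0]; exact hx
  have h2x0 : 0 < 2 / x := by positivity
  have cA : (cfc g A 1 1) = ((g (1 + 2 / x) : ℝ) : ℂ) := by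
    rw [cfc_two hA.1 (a := 1 + 2 / x) (b := 2 * x) (by linarith) (by
      ext i j; fin_cases i <;> fin_cases j <;> simp [A, Matrix.mul_apply, Fin.sum_univ_two, Matrix.algebraMap_matrix_apply])]
    simp [A, Matrix.algebraMap_matrix_apply]
  set c : ℝ := (g (2 + x + 1 / x) - g 2) / (2 + x + 1 / x - 2) with hc
  have h1 := (Matrix.le_iff.1 h).diag_nonneg (i := 1)
  rw [cM, eM] at h1
  have h2 := (Complex.nonneg_iff.1 h1).1
  simp only [Matrix.sub_apply, Matrix.add_apply, Matrix.smul_apply, cA, Matrix.algebraMap_matrix_apply] at h2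
  simp [← hb] at h2
  have hc2 : c * x⁻¹ = (g (2 + x + 1 / x) - g 2) / (x ^ 2 + 1) := by
    rw [hc]
    have : 2 + x + 1 / x - 2 = (x ^ 2 + 1) / x := by field_simp; ring
    rw [this]
    field_simp
  rw [hc2] at h2
  have h3 : (g (2 + x + 1 / x) - g 2) / (x ^ 2 + 1) ≤ C / 2 + b / 2 - g 2 := by
    have := hC' (1 + 2 / x) (by linarith) (by linarith)
    linarith
  rw [div_le_iff₀ (by positivity)] at h3
  have := hp 2 (by norm_num)
  nlinarith [mul_nonneg this.le (sq_nonneg x), mul_nonneg hC0.le (sq_nonneg x), mul_nonneg hb0 (sq_nonneg x)]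

open Filter Topology in
lemma anti_scalar {g : ℝ → ℝ} (hp : ∀ x, 0 < x → 0 < g x) (hl : ConvexOn ℝ (Set.Ioi 0) (fun x => Real.log (g x)))
    {K : ℝ} (hK : 0 < K) (hgr : ∀ x : ℝ, 2 < x → g (2 + x + 1 / x) ≤ K * (x ^ 2 + 1)) {a b : ℝ} (ha : 0 < a) (hab : a ≤ b) :
    g b ≤ g a := by
  by_contra! hlt
  have hb : 0 < b := by linarith
  have hab' : a < b := lt_of_le_of_ne hab (by rintro rfl; exact lt_irrefl _ hlt)
  have hL : Real.log (g a) < Real.log (g b) := Real.log_lt_log (hp a ha) hlt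
  set δ := (Real.log (g b) - Real.log (g a)) / (b - a) with hδ
  have hδ0 : 0 < δ := div_pos (by linarith) (by linarith)
  have h1 : ∀ z, b < z → Real.log (g b) + δ * (z - b) ≤ Real.log (g z) := by
    intro z hz
    have := hl.slope_mono_adjacent (x := a) (y := b) (z := z) ha (hb.trans hz) hab' hz
    rw [← hδ, le_div_iff₀ (by linarith)] at this
    linarith
  have hlog := (Real.isLittleO_log_id_atTop.bound (show 0 < δ / 4 by linarith))
  have hlarge := eventually_gt_atTop (max (max 2 b) ((Real.log (2 * K) - Real.log (g b) + δ * b) * 2 / δ))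
  obtain ⟨x, hx1, hx2⟩ := (hlog.and hlarge).exists
  simp only [max_lt_iff] at hx2
  obtain ⟨⟨hx2, hxb⟩, hx3⟩ := hx2
  have hx0 : 0 < x := by linarith
  have hinv : 0 < 1 / x := by positivity
  have h2 := h1 (2 + x + 1 / x) (by linarith)
  have h3 := Real.log_le_log (hp _ (by linarith)) ((hgr x hx2).trans (show K * (x ^ 2 + 1) ≤ (2 * K) * x ^ 2 by
    have hx2' : 1 ≤ x ^ 2 := by nlinarith
    nlinarith [mul_le_mul_of_nonneg_left hx2' hK.le]))
  rw [Real.log_mul (by positivity) (by positivity), Real.log_pow] at h3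
  simp only [id, Real.norm_eq_abs, abs_of_pos hx0] at hx1
  have h4 := (le_abs_self _).trans hx1
  rw [div_lt_iff₀ hδ0] at hx3
  push_cast at h3
  nlinarith

open Filter Topology in
lemma mat_anti {g : ℝ → ℝ} (hg : ContinuousOn g (Set.Ioi 0)) (hp : ∀ x, 0 < x → 0 < g x) (H : MConv g)
    (hanti : ∀ a b, 0 < a → a ≤ b → g b ≤ g a) {n : ℕ} {A B : Matrix (Fin n) (Fin n) ℂ} (hA : A.PosDef) (hB : B.PosDef)
    (hAB : A ≤ B) : cfc g B ≤ cfc g A := by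
  apply le_eps
  intro ε hε
  have e1 := cfc_shift hg hB (half_pos hε)
  have e2 : ∀ᶠ s in 𝓝[>] (0:ℝ), s * g 1 < ε / 2 := by
    have : Tendsto (fun s : ℝ => s * g 1) (𝓝[>] 0) (𝓝 0) := by
      have : Continuous (fun s : ℝ => s * g 1) := by fun_prop
      simpa using (this.tendsto 0).mono_left nhdsWithin_le_nhds
    exact this.eventually (gt_mem_nhds (half_pos hε))
  have e3 : ∀ᶠ s in 𝓝[>] (0:ℝ), s < 1 := (gt_mem_nhds one_pos).filter_mono nhdsWithin_le_nhds
  have e4 : ∀ᶠ s in 𝓝[>] (0:ℝ), 0 < s := self_mem_nhdsWithin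
  obtain ⟨s, ⟨-, h1⟩, h2, h3, h4⟩ := (e1.and (e2.and (e3.and e4))).exists
  have hpsd : (s⁻¹ • (B - A) + A).PosDef := by
    refine Matrix.PosDef.posSemidef_add ?_ hA
    exact (Matrix.le_iff.1 hAB).smul (inv_nonneg.2 h4.le)
  set N := s⁻¹ • (B - A) + A with hN
  have hC : (N + algebraMap ℝ _ 1).PosDef := hpsd.add (alg_posDef one_pos)
  have h5 := H n A (N + algebraMap ℝ _ 1) hA hC s ⟨h4.le, h3.le⟩
  have e : (1 - s) • A + s • (N + algebraMap ℝ _ 1) = B + algebraMap ℝ _ s := by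
    rw [hN, smul_add, smul_add, smul_smul, mul_inv_cancel₀ h4.ne', one_smul, alg_smul, mul_one, sub_smul, one_smul]
    abel
  rw [e] at h5
  have h6 : cfc g (N + algebraMap ℝ _ 1) ≤ algebraMap ℝ _ (g 1) := by
    rw [alg_add_cfc hpsd, ← cfc_const (g 1) N hpsd.1.isSelfAdjoint]
    exact cfc_le' hpsd fun x hx => hanti _ _ one_pos (by linarith)
  have h7 : s • cfc g (N + algebraMap ℝ _ 1) ≤ algebraMap ℝ _ (s * g 1) := by
    rw [← alg_smul]
    rw [Matrix.le_iff, ← smul_sub]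
    exact (Matrix.le_iff.1 h6).smul h4.le
  have h8 : (1 - s) • cfc g A ≤ cfc g A := by
    rw [Matrix.le_iff, sub_smul, one_smul, sub_sub_cancel]
    exact (cfc_posDef hA hp).posSemidef.smul h4.le
  calc cfc g B ≤ _ := h1
    _ ≤ (cfc g A + algebraMap ℝ _ (s * g 1)) + algebraMap ℝ _ (ε / 2) := by
        gcongr
        exact h5.trans (add_le_add h8 h7)
    _ = cfc g A + algebraMap ℝ _ (s * g 1 + ε / 2) := by rw [map_add, add_assoc]
    _ ≤ _ := by
        exact add_le_add le_rfl (alg_le (ι := Fin n) (by linarith))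

lemma reverse {f : ℝ → ℝ} (hf : ContinuousOn f (Set.Ioi 0)) (hf' : ∀ x, 0 < x → 0 < f x) 
   (H : ∀ (n : ℕ) (A B : Matrix (Fin n) (Fin n) ℂ), A.PosDef → B.PosDef →
        ∀ t ∈ Set.Icc (0:ℝ) 1,
          MLE (wgeom t (cfc f A) (cfc f B)) (cfc f (wharm t A B))) : OperatorAntitone f := by
  have hc := mconv_of hf' H
  have hl := logconv_of hf' H
  have hp : ∀ x : ℝ, 0 < x → 0 < (f x⁻¹)⁻¹ := fun x hx => inv_pos.2 (hf' _ (inv_pos.2 hx))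
  have hg : ContinuousOn (fun x : ℝ => (f x⁻¹)⁻¹) (Set.Ioi 0) := by
    refine ContinuousOn.inv₀ (hf.comp (continuousOn_inv₀.mono fun x hx => ?_) ?_) ?_
    · exact (ne_of_gt hx)
    · intro x hx; exact inv_pos.2 (Set.mem_Ioi.1 hx)
    · intro x hx; exact (hf' _ (inv_pos.2 hx)).ne'
  obtain ⟨K, hK, hgr⟩ := growth hg hp hc
  have hanti : ∀ a b : ℝ, 0 < a → a ≤ b → (f b⁻¹)⁻¹ ≤ (f a⁻¹)⁻¹ := fun a b ha hab =>
    anti_scalar hp (by simpa [Real.log_inv] using hl) hK hgr ha hab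
  intro n A B hA hB hAB
  have h := mat_anti hg hp hc hanti hB.inv hA.inv (le_inv hA hB hAB)
  rw [cfc_g hf' hA.inv, cfc_g hf' hB.inv, inv_inv' hA, inv_inv' hB] at h
  have h2 := le_inv (cfc_posDef hA hf').inv (cfc_posDef hB hf').inv h
  rwa [inv_inv' (cfc_posDef hA hf'), inv_inv' (cfc_posDef hB hf')] at h2

lemma anti_gen {f : ℝ → ℝ} (H : OperatorAntitone f) {A B : Matrix ι ι ℂ} (hA : A.PosDef) (hB : B.PosDef) (h : A ≤ B) :
    cfc f B ≤ cfc f A := by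
  let e := Fintype.equivFin ι
  let φ := Matrix.reindexAlgEquiv ℝ ℂ e
  have pd : ∀ {C : Matrix ι ι ℂ}, C.PosDef → (φ C).PosDef := fun hC => hC.submatrix e.symm.injective
  have h1 := H _ (φ A) (φ B) (pd hA) (pd hB) (by
    unfold MLE
    rw [← map_sub]
    exact (Matrix.le_iff.1 h).submatrix e.symm)
  have eA : cfc f (φ A) = φ (cfc f A) := cfc_map φ.toAlgHom f hA.1 (pd hA).1
  have eB : cfc f (φ B) = φ (cfc f B) := cfc_map φ.toAlgHom f hB.1 (pd hB).1
  unfold MLE at h1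
  rw [eA, eB, ← map_sub] at h1
  have h2 := h1.submatrix e
  have h3 : (φ (cfc f A - cfc f B)).submatrix e e = cfc f A - cfc f B := by
    ext i j
    simp [φ]
  rw [h3] at h2
  exact h2

lemma fB_sub (a b c d a' b' c' d' : Matrix ι ι ℂ) : Matrix.fromBlocks a b c d - Matrix.fromBlocks a' b' c' d' =
    Matrix.fromBlocks (a - a') (b - b') (c - c') (d - d') := by
  ext i j
  rcases i with i | i <;> rcases j with j | j <;> rfl

lemma mono_gen {f : ℝ → ℝ} (H : OperatorAntitone f) {A B : Matrix ι ι ℂ} (hA : A.PosDef) (hB : B.PosDef) (h : A ≤ B) :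
    cfc (fun x => f x⁻¹) A ≤ cfc (fun x => f x⁻¹) B := by
  rw [← cfc_of_inv hA, ← cfc_of_inv hB]
  exact anti_gen H hB.inv hA.inv (le_inv hA hB h)

/-- block diagonal embedding -/
def blk : (Matrix ι ι ℂ × Matrix ι ι ℂ) →ₐ[ℝ] Matrix (ι ⊕ ι) (ι ⊕ ι) ℂ where
  toFun X := Matrix.fromBlocks X.1 0 0 X.2
  map_one' := by simp
  map_zero' := by simp
  map_mul' := by intro x y; simp [Matrix.fromBlocks_multiply]
  map_add' := by intro x y; simp [Matrix.fromBlocks_add]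
  commutes' := by 
    intro r
    simp only [Algebra.algebraMap_eq_smul_one, Prod.smul_fst, Prod.smul_snd, Prod.fst_one, Prod.snd_one]
    rw [← Matrix.fromBlocks_one, Matrix.fromBlocks_smul]
    simp

lemma cfc_blk (f : ℝ → ℝ) {A B : Matrix ι ι ℂ} (hA : A.IsHermitian) (hB : B.IsHermitian) :
    cfc f (Matrix.fromBlocks A 0 0 B) = Matrix.fromBlocks (cfc f A) 0 0 (cfc f B) := by
  obtain ⟨p, hp⟩ := cfc_poly f ((Matrix.finite_real_spectrum (A := A)).union (Matrix.finite_real_spectrum (A := B)))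
  have hh : (Matrix.fromBlocks A 0 0 B).IsHermitian := Matrix.IsHermitian.fromBlocks hA (by simp) hB
  rw [cfc_aeval hA fun x hx => hp x (Or.inl hx), cfc_aeval hB fun x hx => hp x (Or.inr hx)]
  have e : Matrix.fromBlocks A 0 0 B = blk (A, B) := rfl
  rw [cfc_aeval (p := p) hh, e, Polynomial.aeval_algHom_apply]
  · have h1 : (Polynomial.aeval (A, B) p).1 = Polynomial.aeval A p :=
      (Polynomial.aeval_algHom_apply (AlgHom.fst ℝ (Matrix ι ι ℂ) (Matrix ι ι ℂ)) (A, B) p).symm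
    have h2 : (Polynomial.aeval (A, B) p).2 = Polynomial.aeval B p :=
      (Polynomial.aeval_algHom_apply (AlgHom.snd ℝ (Matrix ι ι ℂ) (Matrix ι ι ℂ)) (A, B) p).symm
    rw [← h1, ← h2]; rfl
  · intro x hx
    rw [e] at hx
    have := AlgHom.spectrum_apply_subset blk (A, B) hx
    rw [Prod.spectrum_eq] at this
    exact hp x this

/-- conjugation by a unitary -/
def cj (U : Matrix ι ι ℂ) (h1 : Uᴴ * U = 1) (h2 : U * Uᴴ = 1) : Matrix ι ι ℂ →ₐ[ℝ] Matrix ι ι ℂ where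
  toFun X := Uᴴ * X * U
  map_one' := by simp [h1]
  map_zero' := by simp
  map_mul' := by
    intro x y
    calc _ = Uᴴ * x * 1 * y * U := by simp [mul_assoc]
      _ = _ := by rw [← h2]; simp [mul_assoc]
  map_add' := by intro x y; simp [mul_add, add_mul]
  commutes' := by
    intro r
    simp [Algebra.algebraMap_eq_smul_one, h1]

lemma exists_bound {N : Matrix ι ι ℂ} (hN : N.IsHermitian) : ∃ μ : ℝ, 0 < μ ∧ N ≤ algebraMap ℝ _ μ := by
  obtain ⟨C, hC⟩ := (Matrix.finite_real_spectrum (A := N)).bddAbove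
  refine ⟨max C 1, by positivity, ?_⟩
  have h : cfc (fun x : ℝ => x) N ≤ cfc (fun _ : ℝ => max C 1) N :=
    cfc_mono (fun x hx => (hC hx).trans (le_max_left _ _)) (contS _ _) (contS _ _)
  rwa [cfc_id' ℝ N hN.isSelfAdjoint, cfc_const _ N hN.isSelfAdjoint] at h

lemma concave_gen {f : ℝ → ℝ} (H : OperatorAntitone f) (hf : ContinuousOn f (Set.Ioi 0))
    {A B : Matrix ι ι ℂ} (hA : A.PosDef) (hB : B.PosDef) 
    {t : ℝ} (h0 : 0 ≤ t) (h1 : t ≤ 1) :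
    (1 - t) • cfc (fun x => f x⁻¹) A + t • cfc (fun x => f x⁻¹) B ≤ cfc (fun x => f x⁻¹) ((1 - t) • A + t • B) := by
  have mono := fun {A B : Matrix (ι ⊕ ι) (ι ⊕ ι) ℂ} => mono_gen (A := A) (B := B) H
  have hg : ContinuousOn (fun x : ℝ => f x⁻¹) (Set.Ioi 0) := by
    refine hf.comp (continuousOn_inv₀.mono fun x hx => ?_) ?_
    · exact (ne_of_gt hx)
    · intro x hx; exact inv_pos.2 (Set.mem_Ioi.1 hx)
  generalize (fun x : ℝ => f x⁻¹) = h at mono hg ⊢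
  have hP := posDef_add hA hB h0 h1
  have hR := posDef_add hB hA h0 h1
  set P := (1 - t) • A + t • B with hPdef
  set R := (1 - t) • B + t • A with hRdef
  obtain ⟨c, hc⟩ : ∃ c : ℝ, c * c = 1 - t := ⟨√(1 - t), Real.mul_self_sqrt (by linarith)⟩
  obtain ⟨s, hs⟩ : ∃ s : ℝ, s * s = t := ⟨√t, Real.mul_self_sqrt h0⟩
  let U : Matrix (ι ⊕ ι) (ι ⊕ ι) ℂ := Matrix.fromBlocks (c • 1) (-(s • 1)) (s • 1) (c • 1)
  have hUh : Uᴴ = Matrix.fromBlocks (c • 1) (s • 1) (-(s • 1)) (c • 1) := by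
    simp [U, Matrix.fromBlocks_conjTranspose]
  have hU1 : Uᴴ * U = 1 := by
    rw [hUh]; simp only [U, Matrix.fromBlocks_multiply]
    rw [← Matrix.fromBlocks_one]
    simp [smul_smul, hc, hs, mul_comm c s, ← add_smul]
  have hU2 : U * Uᴴ = 1 := by
    rw [hUh]; simp only [U, Matrix.fromBlocks_multiply]
    rw [← Matrix.fromBlocks_one]
    simp [smul_smul, hc, hs, mul_comm c s, ← add_smul]
  have key : ∀ X Y : Matrix ι ι ℂ, Uᴴ * Matrix.fromBlocks X 0 0 Y * U = 
      Matrix.fromBlocks ((1 - t) • X + t • Y) ((c * s) • (Y - X)) ((c * s) • (Y - X)) ((1 - t) • Y + t • X) := by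
    intro X Y
    rw [hUh]; simp only [U, Matrix.fromBlocks_multiply]
    congr 1 <;> simp [smul_smul, hc, hs, mul_comm c s, smul_sub, add_comm] <;> abel
  set Q := (c * s) • (B - A) with hQdef
  have hQ : Q.IsHermitian := (hB.1.sub hA.1).smul (by simp [IsSelfAdjoint])
  apply le_eps
  intro ε hε
  obtain ⟨δ, ⟨hδ1, -⟩, hδ0⟩ := ((cfc_shift hg hP hε).and self_mem_nhdsWithin).exists
  replace hδ0 : 0 < δ := hδ0
  refine le_trans ?_ hδ1
  have hN : (R + δ⁻¹ • (Q * Q)).IsHermitian := by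
    refine hR.1.add (Matrix.IsHermitian.smul ?_ (by simp [IsSelfAdjoint]))
    have := Matrix.isHermitian_mul_conjTranspose_self Q
    rwa [hQ.eq] at this
  obtain ⟨μ, hμ, hNμ⟩ := exists_bound hN
  have hPδ : (P + algebraMap ℝ _ δ).PosDef := hP.add (alg_posDef hδ0)
  have hμp : (algebraMap ℝ (Matrix ι ι ℂ) μ).PosDef := alg_posDef hμ
  let T : Matrix (ι ⊕ ι) (ι ⊕ ι) ℂ := Matrix.fromBlocks A 0 0 B
  have blkpd : ∀ {X Y : Matrix ι ι ℂ}, X.PosDef → Y.PosDef → (Matrix.fromBlocks X 0 0 Y).PosDef := by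
    intro X Y hX hY
    have := hX.isUnit.invertible
    have h1 := (Matrix.PosDef.fromBlocks₁₁ (0 : Matrix ι ι ℂ) Y hX).2 (by simpa using hY.posSemidef)
    rw [Matrix.conjTranspose_zero] at h1
    rw [h1.posDef_iff_isUnit, Matrix.isUnit_iff_isUnit_det, Matrix.det_fromBlocks_zero₂₁]
    exact ((Matrix.isUnit_iff_isUnit_det _).1 hX.isUnit).mul ((Matrix.isUnit_iff_isUnit_det _).1 hY.isUnit)
  have hT : T.PosDef := blkpd hA hB
  have hUu : IsUnit U := ⟨⟨_, _, hU2, hU1⟩, rfl⟩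
  have hUT : (Uᴴ * T * U).PosDef := hT.conjTranspose_mul_mul_same (Matrix.mulVec_injective_of_isUnit hUu)
  have hle : Uᴴ * T * U ≤ Matrix.fromBlocks (P + algebraMap ℝ _ δ) 0 0 (algebraMap ℝ _ μ) := by
    rw [key, Matrix.le_iff, fB_sub]
    have hi := (alg_posDef (ι := ι) hδ0).isUnit.invertible
    have h1 := (Matrix.PosDef.fromBlocks₁₁ (-Q) (algebraMap ℝ (Matrix ι ι ℂ) μ - R) (alg_posDef (ι := ι) hδ0)).2 (by
      rw [alg_inv hδ0, Matrix.conjTranspose_neg, hQ.eq, Algebra.algebraMap_eq_smul_one δ⁻¹]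
      rw [Matrix.le_iff] at hNμ
      have e3 : algebraMap ℝ (Matrix ι ι ℂ) μ - R - -Q * δ⁻¹ • (1 : Matrix ι ι ℂ) * -Q = algebraMap ℝ (Matrix ι ι ℂ) μ - (R + δ⁻¹ • (Q * Q)) := by
        simp [sub_sub]
      rw [e3]
      exact hNμ)
    rw [Matrix.conjTranspose_neg, hQ.eq] at h1
    rw [add_sub_cancel_left, zero_sub]
    exact h1
  have hmain := mono hUT (blkpd hPδ hμp) hle
  have e1 : cfc h (Uᴴ * T * U) = Uᴴ * cfc h T * U := cfc_map (cj U hU1 hU2) h hT.1 hUT.1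
  rw [e1, cfc_blk h hA.1 hB.1, cfc_blk h hPδ.1 hμp.1, key, Matrix.le_iff, fB_sub] at hmain
  exact hmain.submatrix Sum.inl

lemma forward {f : ℝ → ℝ} (hf : ContinuousOn f (Set.Ioi 0)) (hf' : ∀ x, 0 < x → 0 < f x) (H : OperatorAntitone f)
    (n : ℕ) (A B : Matrix (Fin n) (Fin n) ℂ) (hA : A.PosDef) (hB : B.PosDef) (t : ℝ) (ht : t ∈ Set.Icc (0:ℝ) 1) :
    MLE (wgeom t (cfc f A) (cfc f B)) (cfc f (wharm t A B)) := by
  have h := concave_gen H hf hA.inv hB.inv ht.1 ht.2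
  rw [← cfc_of_inv (posDef_add hA.inv hB.inv ht.1 ht.2), ← cfc_of_inv hA.inv, ← cfc_of_inv hB.inv, inv_inv' hA, inv_inv' hB] at h
  exact (wgeom_le (cfc_posDef hA hf') (cfc_posDef hB hf') ht.1 ht.2).trans h
end S10

theorem stmt_10 (f : ℝ → ℝ) (hf : ContinuousOn f (Set.Ioi 0))
    (hf' : ∀ x ∈ Set.Ioi (0:ℝ), f x ∈ Set.Ioi (0:ℝ)) :
    OperatorAntitone f ↔
      ∀ (n : ℕ) (A B : Matrix (Fin n) (Fin n) ℂ), A.PosDef → B.PosDef →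
        ∀ t ∈ Set.Icc (0:ℝ) 1,
          MLE (wgeom t (cfc f A) (cfc f B)) (cfc f (wharm t A B)) := by

  constructor
  · intro H n A B hA hB t ht
    exact S10.forward hf hf' H n A B hA hB t ht
  · intro H
    exact S10.reverse hf hf' H
end
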